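/- arXiv:1905.08470 — 4 statements merged into one kernel-verified Lean document; each statement's English description precedes it below -/
import Mathlib

section
/- In the Wilson–Xiang setting, assume |A| = (q+3)/2, |B| = (q−1)/2 and |A_e| + |B_o| = |A_o| + |B_e|. Then E_1 = D_1 ∪ D_2 ∪ D_3 is a set of type Q in F_{q²} × F_{q²}. -/
noncomputable section

def zetaP (p : ℕ) : ℂ := Complex.exp (2 * Real.pi * Complex.I / p)

/-- The canonical additive character `ψ(x) = ζ_p^{Tr_{L/F_p}(x)}`. -/
def psiL (p : ℕ) (L : Type) [Field L] [Fintype L] [CharP L p] (x : L) : ℂ :=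
  letI : Algebra (ZMod p) L := ZMod.algebra L p
  zetaP p ^ (Algebra.trace (ZMod p) L x).val

/-- `ψ_{a,b}(E) = Σ_{(x,y)∈E} ψ(ax+by)`. -/
def psiSum (p : ℕ) (L : Type) [Field L] [Fintype L] [CharP L p]
    (a b : L) (E : Set (L × L)) : ℂ :=
  ∑ᶠ z ∈ E, psiL p L (a * z.1 + b * z.2)

/-- a subset of `F_{q²} × F_{q²}` of type Q. -/
def IsTypeQ (p q : ℕ) (L : Type) [Field L] [Fintype L] [CharP L p]
    (E : Set (L × L)) : Prop :=
  E.ncard = (q ^ 4 - 1) / 4 ∧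
    ∀ a b : L, (a, b) ≠ ((0 : L), (0 : L)) →
      psiSum p L a b E = ((q : ℂ) ^ 2 - 1) / 4 ∨
      psiSum p L a b E = (-3 * (q : ℂ) ^ 2 - 1) / 4

/-- the cyclotomic class `C_i^{(N,q²)} = ω^i⟨ω^N⟩`. -/
def cyc (L : Type) [Field L] (ω : L) (N i : ℕ) : Set L :=
  {x | ∃ k : ℕ, x = ω ^ i * (ω ^ N) ^ k}

/-- ω is a primitive element (generator of the multiplicative group). -/
def IsPrim (L : Type) [Field L] (ω : L) : Prop :=
  ∀ x : L, x ≠ 0 → ∃ n : ℕ, x = ω ^ n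

/-- nonzero squares of `K` -/
def sqSet (K : Type) [Field K] : Set K := {y | ∃ z : K, z ≠ 0 ∧ y = z ^ 2}

namespace WX

set_option linter.unusedSectionVars false
set_option linter.unusedVariables false

/-- the quadratic character with complex values -/
def qc (F : Type) [Field F] [Fintype F] [DecidableEq F] : MulChar F ℂ :=
  (quadraticChar F).ringHomComp (Int.castRingHom ℂ)

section one
variable {F : Type} [Field F] [Fintype F] [DecidableEq F]

lemma qc_apply (x : F) : qc F x = ((quadraticChar F x : ℤ) : ℂ) := rfl

lemma qc_cases {x : F} (hx : x ≠ 0) : qc F x = 1 ∨ qc F x = -1 := by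
  rcases quadraticChar_dichotomy hx with h | h <;> simp [qc_apply, h]

lemma qc_one_iff (x : F) : qc F x = 1 ↔ x ∈ sqSet F := by
  rw [qc_apply]
  by_cases hx : x = 0
  · subst hx
    simp only [MulChar.map_zero, Int.cast_zero, zero_ne_one, false_iff, sqSet, Set.mem_ofPred_eq]
    rintro ⟨z, hz, h⟩
    exact hz (by simpa using h.symm)
  · rw [show ((1 : ℂ)) = ((1 : ℤ) : ℂ) by simp, Int.cast_inj, quadraticChar_one_iff_isSquare hx]
    constructor
    · rintro ⟨z, rfl⟩
      exact ⟨z, by rintro rfl; simp at hx, by ring⟩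
    · rintro ⟨z, hz, rfl⟩
      exact ⟨z, by ring⟩

lemma qc_zero : qc F 0 = 0 := MulChar.map_zero _

lemma qc_sq {x : F} (hx : x ≠ 0) : qc F x * qc F x = 1 := by
  rcases qc_cases hx with h | h <;> rw [h] <;> norm_num

lemma qc_sq_unit (x : Fˣ) : qc F x * qc F x = 1 := qc_sq x.ne_zero

lemma qc_eq_zero_iff (x : F) : qc F x = 0 ↔ x = 0 := by
  constructor
  · intro h
    by_contra hx
    have := qc_sq hx
    rw [h] at this; simp at this
  · rintro rfl; exact qc_zero

lemma qc_pow (hF : ringChar F ≠ 2) {x : F} (hx : x ≠ 0) :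
    qc F x = if x ^ (Fintype.card F / 2) = 1 then 1 else -1 := by
  rw [qc_apply, quadraticChar_eq_pow_of_char_ne_two hF hx]
  split_ifs <;> simp

lemma exists_ns (hF : ringChar F ≠ 2) : ∃ e : Fˣ, qc F e = -1 := by
  obtain ⟨a, ha⟩ := FiniteField.exists_nonsquare hF
  have h0 : a ≠ 0 := by rintro rfl; exact ha (IsSquare.zero)
  refine ⟨Units.mk0 a h0, ?_⟩
  rcases qc_cases h0 with h | h
  · exfalso
    obtain ⟨z, _, hz⟩ := (qc_one_iff a).1 h
    exact ha ⟨z, by rw [hz]; ring⟩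
  · exact h

lemma sum_qc (hF : ringChar F ≠ 2) : ∑ x : Fˣ, qc F x = 0 := by
  obtain ⟨e, he⟩ := exists_ns hF
  have h := Equiv.sum_comp (Equiv.mulLeft e) (fun x : Fˣ => qc F x)
  simp only [Equiv.coe_mulLeft, Units.val_mul, map_mul, he] at h
  rw [← Finset.mul_sum] at h
  linear_combination (-1/2 : ℂ) * h

/-- indicator of zero -/
def zi (x : F) : ℂ := if x = 0 then 1 else 0

lemma zi_eq (x : F) : zi x = 1 - qc F x * qc F x := by
  unfold zi
  split_ifs with h
  · subst h; simp [qc_zero]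
  · rw [qc_sq h]; simp

/-- number of nonzero solutions of `x² α + β = 0` -/
lemma count (hF : ringChar F ≠ 2) (α β : F) :
    ∑ x : Fˣ, zi ((x : F) * α + (x : F)⁻¹ * β)
      = 1 - zi α - zi β + (Fintype.card F : ℂ) * (zi α * zi β)
        + qc F (-1) * (qc F α * qc F β) := by
  have hcard : ((Fintype.card Fˣ : ℕ) : ℂ) = (Fintype.card F : ℂ) - 1 := by
    rw [Fintype.card_units, Nat.cast_sub Fintype.card_pos]; simp
  by_cases ha : α = 0
  · subst ha
    by_cases hb : β = 0
    · subst hb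
      simp [zi, qc_zero, hcard]; ring
    · simp [zi, qc_zero, hb]
  · by_cases hb : β = 0
    · subst hb
      simp [zi, qc_zero, ha]
    · have hz : ∀ x : Fˣ, ((x : F) * α + (x : F)⁻¹ * β = 0 ↔ (x : F) ^ 2 = -β / α) := by
        intro x
        have := x.ne_zero
        field_simp
        constructor
        · intro h; linear_combination h
        · intro h; linear_combination h
      have hne : -β / α ≠ 0 := by
        simp [ha, hb]
      have hr : qc F (-1) * (qc F α * qc F β) = qc F (-β / α) := by
        have h1 : qc F α * qc F (-β / α) = qc F (-1) * qc F β := by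
          rw [← map_mul, ← map_mul]; congr 1; field_simp
        have h2 := qc_sq ha
        linear_combination (- qc F α) * h1 + qc F (-β / α) * h2
      rw [hr]
      simp only [zi, hz, ha, hb]
      rcases qc_cases hne with h | h
      · rw [h]
        obtain ⟨y, hy, hyy⟩ := (qc_one_iff _).1 h
        rw [hyy]
        have hyn : Units.mk0 y hy ≠ -Units.mk0 y hy := by
          intro h
          have h3 : y = -y := congrArg Units.val h
          have : (2 : F) * y = 0 := by linear_combination h3
          rcases mul_eq_zero.1 this with h4 | h4
          · exact Ring.two_ne_zero hF h4
          · exact hy h4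
        have : ∀ x : Fˣ, (if (x : F) ^ 2 = y ^ 2 then (1 : ℂ) else 0)
            = (if x = Units.mk0 y hy then 1 else 0) + (if x = -Units.mk0 y hy then 1 else 0) := by
          intro x
          by_cases h1 : x = Units.mk0 y hy
          · subst h1; simp [hyn]
          · by_cases h2 : x = -Units.mk0 y hy
            · subst h2; simp [hyn.symm]
            · rw [if_neg, if_neg h1, if_neg h2]; · simp
              intro h
              rcases sq_eq_sq_iff_eq_or_eq_neg.1 h with h | h
              · exact h1 (Units.ext h)
              · exact h2 (Units.ext h)
        rw [Finset.sum_congr rfl (fun x _ => this x), Finset.sum_add_distrib]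
        norm_num
      · rw [h]
        have : ∀ x : Fˣ, (if (x : F) ^ 2 = -β / α then (1 : ℂ) else 0) = 0 := by
          intro x
          rw [if_neg]
          intro hx
          have : qc F (-β / α) = 1 := (qc_one_iff _).2 ⟨x, x.ne_zero, hx.symm⟩
          rw [h] at this
          norm_num at this
        rw [Finset.sum_congr rfl (fun x _ => this x)]
        simp
end one

/-- standing hypotheses -/
structure Hyp (K L : Type) [Field K] [Fintype K] [Field L] [Fintype L] (q : ℕ) : Prop where
  hK : Fintype.card K = q
  hL : Fintype.card L = q ^ 2
  odd : Odd q

section two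
variable {K L : Type} [Field K] [Fintype K] [DecidableEq K] [Field L] [Fintype L] [DecidableEq L]
  [Algebra K L] {q : ℕ}

lemma Hyp.charK (h : Hyp K L q) : ringChar K ≠ 2 := by
  intro h2
  have := FiniteField.even_card_iff_char_two.1 h2
  rw [h.hK] at this
  have := Nat.odd_iff.1 h.odd
  omega

lemma Hyp.charL (h : Hyp K L q) : ringChar L ≠ 2 := by
  intro h2
  have := FiniteField.even_card_iff_char_two.1 h2
  rw [h.hL] at this
  have := Nat.odd_iff.1 (h.odd.pow (n := 2))
  omega

lemma Hyp.one_lt (h : Hyp K L q) : 1 < q := by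
  rw [← h.hK]; exact Fintype.one_lt_card

lemma Hyp.finrank (h : Hyp K L q) : Module.finrank K L = 2 := by
  have := Module.card_eq_pow_finrank (K := K) (V := L)
  rw [h.hK, h.hL] at this
  exact (Nat.pow_right_injective h.one_lt this).symm

lemma Hyp.tr_pow (h : Hyp K L q) (z : L) :
    algebraMap K L (Algebra.trace K L z) = z + z ^ q := by
  rw [FiniteField.algebraMap_trace_eq_sum_pow, h.finrank, Nat.card_eq_fintype_card, h.hK]
  simp [Finset.sum_range_succ]

lemma Hyp.nm_pow (h : Hyp K L q) (z : L) :
    algebraMap K L (Algebra.norm K z) = z * z ^ q := by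
  rw [FiniteField.algebraMap_norm_eq_prod_pow, h.finrank, Nat.card_eq_fintype_card, h.hK]
  simp [Finset.prod_range_succ]

lemma Hyp.tr_alg (h : Hyp K L q) (x : K) (z : L) :
    Algebra.trace K L (algebraMap K L x * z) = x * Algebra.trace K L z := by
  rw [← Algebra.smul_def, map_smul, smul_eq_mul]

lemma Hyp.exists_alg (h : Hyp K L q) {z : L} (hz : z ^ q = z) : ∃ y : K, algebraMap K L y = z := by
  refine ⟨Algebra.trace K L z / 2, ?_⟩
  rw [map_div₀, h.tr_pow, hz, map_ofNat]
  have := Ring.two_ne_zero h.charL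
  field_simp; ring

lemma Hyp.alg_pow (h : Hyp K L q) (y : K) : (algebraMap K L y) ^ q = algebraMap K L y := by
  rw [← map_pow, ← h.hK, FiniteField.pow_card]

lemma Hyp.pow_of_tr (h : Hyp K L q) {z : L} (hz : Algebra.trace K L z = 0) : z ^ q = -z := by
  have := h.tr_pow z
  rw [hz, map_zero] at this
  linear_combination -this

lemma Hyp.exists_delta (h : Hyp K L q) : ∃ d : Lˣ, Algebra.trace K L (d : L) = 0 := by
  have : ¬ Function.Injective (Algebra.trace K L) := by
    intro hi
    have := Fintype.card_le_of_injective _ hi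
    rw [h.hK, h.hL] at this
    have := h.one_lt
    nlinarith
  rw [injective_iff_map_eq_zero] at this
  push Not at this
  obtain ⟨a, ha, ha0⟩ := this
  exact ⟨Units.mk0 a ha0, ha⟩

lemma Hyp.tr_zero (h : Hyp K L q) {d : Lˣ} (hd : Algebra.trace K L (d : L) = 0) {z : L}
    (hz : Algebra.trace K L z = 0) : ∃ y : K, z = algebraMap K L y * d := by
  have h1 := h.pow_of_tr hd
  have h2 := h.pow_of_tr hz
  have : (z / d) ^ q = z / d := by
    rw [div_pow, h1, h2, neg_div_neg_eq]
  obtain ⟨y, hy⟩ := h.exists_alg this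
  refine ⟨y, ?_⟩
  rw [hy]
  have := d.ne_zero
  field_simp

lemma Hyp.qc_norm (h : Hyp K L q) {z : L} (hz : z ≠ 0) : qc K (Algebra.norm K z) = qc L z := by
  have hn : Algebra.norm K z ≠ 0 := by rwa [Ne, Algebra.norm_eq_zero_iff]
  rw [qc_pow h.charK hn, qc_pow h.charL hz, h.hK, h.hL]
  have : (Algebra.norm K z ^ (q / 2) = 1) ↔ (z ^ (q ^ 2 / 2) = 1) := by
    rw [← (algebraMap K L).injective.eq_iff, map_pow, h.nm_pow, map_one, ← pow_succ', ← pow_mul]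
    obtain ⟨k, hk⟩ := h.odd
    have : (q + 1) * (q / 2) = q ^ 2 / 2 := by
      rw [show q / 2 = k by omega, hk]
      have : (2 * k + 1) ^ 2 = 2 * ((2 * k + 1 + 1) * k) + 1 := by ring
      omega
    rw [this]
  simp only [this]

lemma Hyp.qc_alg (h : Hyp K L q) {y : K} (hy : y ≠ 0) : qc L (algebraMap K L y) = 1 := by
  rw [← h.qc_norm (by simpa using hy), Algebra.norm_algebraMap, h.finrank, pow_two, map_mul, qc_sq hy]

lemma Hyp.qc_tr_inv (h : Hyp K L q) {z : L} (hz : z ≠ 0) :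
    qc K (Algebra.trace K L z⁻¹) = qc L z * qc K (Algebra.trace K L z) := by
  have : Algebra.trace K L z = Algebra.norm K z * Algebra.trace K L z⁻¹ := by
    apply (algebraMap K L).injective
    rw [map_mul, h.tr_pow, h.tr_pow, h.nm_pow, inv_pow]
    field_simp; ring
  rw [this, map_mul, h.qc_norm hz]
  linear_combination (- qc K (Algebra.trace K L z⁻¹)) * qc_sq hz

lemma Hyp.qc_delta (h : Hyp K L q) {d : Lˣ} (hd : Algebra.trace K L (d : L) = 0) :
    qc L d = - qc K (-1) := by
  have h1 := h.pow_of_tr hd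
  have hd2 : ((d : L) ^ 2) ^ q = (d : L) ^ 2 := by rw [← pow_mul, mul_comm, pow_mul, h1]; ring
  obtain ⟨y, hy⟩ := h.exists_alg hd2
  have hy0 : y ≠ 0 := by
    rintro rfl
    rw [map_zero] at hy
    exact pow_ne_zero 2 d.ne_zero hy.symm
  have hn : Algebra.norm K (d : L) = -1 * y := by
    apply (algebraMap K L).injective
    rw [h.nm_pow, h1, map_mul, hy, map_neg, map_one]; ring
  rw [← h.qc_norm d.ne_zero, hn, map_mul]
  rcases qc_cases hy0 with hc | hc
  · exfalso
    obtain ⟨w, hw0, hw⟩ := (qc_one_iff _).1 hc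
    rw [hw, map_pow] at hy
    have h3 : (d : L) ^ q = d := by
      rcases sq_eq_sq_iff_eq_or_eq_neg.1 hy.symm with h4 | h4
      · rw [h4, h.alg_pow]
      · rw [h4, ← map_neg, h.alg_pow]
    rw [h1] at h3
    have : (2 : L) * d = 0 := by linear_combination -h3
    rcases mul_eq_zero.1 this with h4 | h4
    · exact Ring.two_ne_zero h.charL h4
    · exact d.ne_zero h4
  · rw [hc]; ring

lemma Hyp.qc_of_tr (h : Hyp K L q) {t : L} (ht : t ≠ 0) (hd : Algebra.trace K L t = 0) :
    qc L t = - qc K (-1) := h.qc_delta (d := Units.mk0 t ht) hd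

lemma Hyp.cardK (h : Hyp K L q) : ((Fintype.card Kˣ : ℕ) : ℂ) = (q : ℂ) - 1 := by
  rw [Fintype.card_units, Nat.cast_sub Fintype.card_pos, h.hK]; simp

lemma Hyp.cardL (h : Hyp K L q) : ((Fintype.card Lˣ : ℕ) : ℂ) = (q : ℂ) ^ 2 - 1 := by
  rw [Fintype.card_units, Nat.cast_sub Fintype.card_pos, h.hL]; simp

variable (K L) in
/-- embedding of units -/
def emb : Kˣ →* Lˣ := Units.map (algebraMap K L).toMonoidHom

lemma emb_val (x : Kˣ) : ((emb K L x : Lˣ) : L) = algebraMap K L x := rfl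

lemma emb_inj : Function.Injective (emb K L) := by
  intro x y hxy
  have : algebraMap K L x = algebraMap K L y := congrArg Units.val hxy
  exact Units.ext ((algebraMap K L).injective this)

variable (K) in
/-- trace on units -/
def tr (t : Lˣ) : K := Algebra.trace K L (t : L)

lemma tr_emb (x : Kˣ) (t : Lˣ) : tr K (emb K L x * t) = x * tr K t := by
  unfold tr
  rw [Units.val_mul, emb_val, ← Algebra.smul_def, map_smul, smul_eq_mul]

lemma sum_scale (α : Lˣ) (F : Lˣ → ℂ) : ∑ t, F (α * t) = ∑ t, F t :=
  Equiv.sum_comp (Equiv.mulLeft α) F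

lemma Hyp.sum_tr_zero (h : Hyp K L q) {d : Lˣ} (hd : tr K d = 0) (F : Lˣ → ℂ) :
    ∑ t, zi (tr K t) * F t = ∑ x : Kˣ, F (emb K L x * d) := by
  symm
  apply Fintype.sum_of_injective (fun x : Kˣ => emb K L x * d)
  · intro x y hxy
    exact emb_inj (mul_right_cancel hxy)
  · intro t ht
    have : tr K t ≠ 0 := by
      intro h0
      obtain ⟨y, hy⟩ := h.tr_zero hd h0
      have hy0 : y ≠ 0 := by
        rintro rfl
        exact t.ne_zero (by simpa using hy)
      exact ht ⟨Units.mk0 y hy0, Units.ext (by simp [emb_val, hy])⟩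
    simp [zi, this]
  · intro x
    simp [tr_emb, hd, zi]

/-- indicator of the image of `Kˣ` -/
def ki (K : Type) {L : Type} [Field K] [Fintype K] [DecidableEq K] [Field L] [Fintype L]
    [DecidableEq L] [Algebra K L] (t : Lˣ) : ℂ := if ∃ x, emb K L x = t then 1 else 0

lemma sum_ki (F : Lˣ → ℂ) :
    ∑ t, ki K t * F t = ∑ x : Kˣ, F (emb K L x) := by
  symm
  apply Fintype.sum_of_injective (emb K L) emb_inj
  · intro t ht
    have : ¬ ∃ x, emb K L x = t := ht
    simp [ki, this]
  · intro x
    have : ∃ y, emb K L y = emb K L x := ⟨x, rfl⟩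
    simp [ki]

end two

section three
variable {K L : Type} [Field K] [Fintype K] [DecidableEq K] [Field L] [Fintype L] [DecidableEq L]
  [Algebra K L] {q : ℕ}

variable (K) in
/-- quadratic character of the trace -/
def ch (t : Lˣ) : ℂ := qc K (tr K t)

lemma ch_emb (x : Kˣ) (t : Lˣ) : ch K (emb K L x * t) = qc K x * ch K t := by
  unfold ch; rw [tr_emb, map_mul]

lemma zi_tr (t : Lˣ) : zi (tr K t) = 1 - ch K t * ch K t := zi_eq _

lemma zi_emb (x : Kˣ) (t : Lˣ) : zi (tr K (emb K L x * t)) = zi (tr K t) := by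
  rw [zi_tr, zi_tr, ch_emb]
  linear_combination (-(ch K t * ch K t)) * qc_sq_unit x

lemma Hyp.eta_emb (h : Hyp K L q) (x : Kˣ) (t : Lˣ) :
    qc L ((emb K L x * t : Lˣ) : L) = qc L (t : L) := by
  rw [Units.val_mul, map_mul, emb_val, h.qc_alg x.ne_zero, one_mul]

lemma Hyp.ch_inv (h : Hyp K L q) (t : Lˣ) : ch K t⁻¹ = qc L (t : L) * ch K t := by
  unfold ch tr
  rw [Units.val_inv_eq_inv_val, h.qc_tr_inv t.ne_zero]

lemma Hyp.odd_sum (h : Hyp K L q) (F : Lˣ → ℂ)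
    (hF : ∀ (e : Kˣ) t, qc K e = -1 → F (emb K L e * t) = - F t) : ∑ t, F t = 0 := by
  obtain ⟨e, he⟩ := exists_ns h.charK
  have h1 := sum_scale (emb K L e) F
  rw [Finset.sum_congr rfl (fun t _ => hF e t he), Finset.sum_neg_distrib] at h1
  linear_combination (-1/2 : ℂ) * h1

lemma Hyp.sum_ch (h : Hyp K L q) (α : Lˣ) : ∑ t, ch K (α * t) = 0 := by
  apply h.odd_sum
  intro e t he
  rw [mul_left_comm, ch_emb, he]; ring

lemma Hyp.sum_ch3 (h : Hyp K L q) (α β γ : Lˣ) :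
    ∑ t, ch K (α * t) * ch K (β * t) * ch K (γ * t) = 0 := by
  apply h.odd_sum
  intro e t he
  rw [mul_left_comm α, ch_emb, he, mul_left_comm β, ch_emb, he, mul_left_comm γ, ch_emb, he]; ring

lemma Hyp.sum_zi (h : Hyp K L q) : ∑ t : Lˣ, zi (tr K t) = (q : ℂ) - 1 := by
  obtain ⟨d, hd⟩ := h.exists_delta
  have := h.sum_tr_zero (d := d) hd (fun _ => 1)
  simp only [mul_one] at this
  rw [this, Finset.sum_const, Finset.card_univ, nsmul_eq_mul, h.cardK, mul_one]

lemma Hyp.sum_ch_sq (h : Hyp K L q) : ∑ t : Lˣ, ch K t * ch K t = (q : ℂ) ^ 2 - q := by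
  have h1 := h.sum_zi
  simp only [zi_tr, Finset.sum_sub_distrib, Finset.sum_const, Finset.card_univ, nsmul_eq_mul,
    h.cardL] at h1
  linear_combination -h1

variable (K) in
/-- quadratic character of K extended by zero to `Lˣ` -/
def kc (t : Lˣ) : ℂ := ∑ x : Kˣ, if emb K L x = t then qc K x else 0

lemma kc_emb (x : Kˣ) : kc K (emb K L x) = qc K x := by
  unfold kc
  simp [emb_inj.eq_iff]

lemma kc_not {t : Lˣ} (ht : ¬ ∃ x, emb K L x = t) : kc K t = 0 := by
  unfold kc
  apply Finset.sum_eq_zero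
  intro x _
  rw [if_neg]
  intro hx; exact ht ⟨x, hx⟩

lemma ki_emb (x : Kˣ) : ki K (emb K L x) = 1 := by
  unfold ki; rw [if_pos ⟨x, rfl⟩]

lemma ki_not {t : Lˣ} (ht : ¬ ∃ x, emb K L x = t) : ki K t = 0 := by
  unfold ki; rw [if_neg ht]

lemma kc_eq {t : Lˣ} : kc K t = ki K t * kc K t := by
  by_cases ht : ∃ x, emb K L x = t
  · obtain ⟨x, rfl⟩ := ht
    rw [ki_emb, one_mul]
  · rw [kc_not ht, mul_zero]

lemma sum_kc (F : Lˣ → ℂ) :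
    ∑ t, kc K t * F t = ∑ x : Kˣ, qc K x * F (emb K L x) := by
  rw [Finset.sum_congr rfl (fun t _ => by rw [kc_eq, mul_assoc])]
  rw [sum_ki]
  simp only [kc_emb]

lemma Hyp.eta_kc_inv (h : Hyp K L q) (t : Lˣ) : qc L (t : L) * kc K t⁻¹ = kc K t := by
  by_cases ht : ∃ x, emb K L x = t
  · obtain ⟨x, rfl⟩ := ht
    rw [← map_inv, kc_emb, kc_emb, emb_val, h.qc_alg x.ne_zero, one_mul]
    have h1 : qc K (x : K) * qc K ((x⁻¹ : Kˣ) : K) = 1 := by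
      rw [← map_mul]; simp
    linear_combination (qc K (x : K)) * h1 - qc K ((x⁻¹ : Kˣ) : K) * qc_sq_unit x
  · rw [kc_not ht, kc_not, mul_zero]
    rintro ⟨x, hx⟩
    exact ht ⟨x⁻¹, by rw [map_inv, hx, inv_inv]⟩

lemma Hyp.sum_P (h : Hyp K L q) (α : Lˣ) :
    ∑ t : Lˣ, ch K t * ch K (α * t) = ((q : ℂ) ^ 2 - q) * kc K α := by
  by_cases ht : ∃ x, emb K L x = α
  · obtain ⟨x, rfl⟩ := ht
    rw [kc_emb, ← h.sum_ch_sq, Finset.sum_mul]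
    apply Finset.sum_congr rfl
    intro t _
    rw [ch_emb]; ring
  · rw [kc_not ht, mul_zero]
    let φ : L →ₗ[K] K × K := (Algebra.trace K L).prod
      ((Algebra.trace K L).comp (LinearMap.mulLeft K (α : L)))
    have hφ : ∀ z, φ z = (Algebra.trace K L z, Algebra.trace K L (α * z)) := fun z => rfl
    have hinj : Function.Injective φ := by
      rw [injective_iff_map_eq_zero]
      intro z hz
      rw [hφ, Prod.mk_eq_zero] at hz
      by_contra hz0
      obtain ⟨y, hy⟩ := h.tr_zero (d := Units.mk0 z hz0) hz.1 hz.2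
      have hy' : (α : L) = algebraMap K L y := mul_right_cancel₀ hz0 hy
      have hy0 : y ≠ 0 := by
        rintro rfl
        exact α.ne_zero (by simpa using hy')
      exact ht ⟨Units.mk0 y hy0, Units.ext (by rw [hy', emb_val]; rfl)⟩
    have hbij : Function.Bijective φ := by
      rw [Fintype.bijective_iff_injective_and_card]
      refine ⟨hinj, ?_⟩
      rw [Fintype.card_prod, h.hK, h.hL, pow_two]
    have hs : ∑ z : L, qc K (Algebra.trace K L z) * qc K (Algebra.trace K L (α * z)) = 0 := by
      have := Equiv.sum_comp (Equiv.ofBijective φ hbij) (fun w : K × K => qc K w.1 * qc K w.2)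
      simp only [Equiv.ofBijective_apply, hφ] at this
      rw [this, Fintype.sum_prod_type]
      have h0 : ∑ y : K, qc K y = 0 := by
        have h3 : ∑ x : Kˣ, qc K (x : K) = ∑ y : K, qc K y := by
          apply Fintype.sum_of_injective (fun x : Kˣ => (x : K)) Units.val_injective
          · intro y hy
            have : y = 0 := by
              by_contra h0
              exact hy ⟨Units.mk0 y h0, rfl⟩
            rw [this, qc_zero]
          · intro x; rfl
        rw [← h3, sum_qc h.charK]
      simp only [← Finset.mul_sum, h0, mul_zero, Finset.sum_const_zero]
    rw [← hs]
    apply Fintype.sum_of_injective (fun x : Lˣ => (x : L)) Units.val_injective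
    · intro y hy
      have : y = 0 := by
        by_contra h0
        exact hy ⟨Units.mk0 y h0, rfl⟩
      rw [this, map_zero, qc_zero, zero_mul]
    · intro x; rfl

lemma sum_inv (s : Lˣ) (F : Lˣ → ℂ) : ∑ u, F (s * u⁻¹) = ∑ u, F u := by
  have := Equiv.sum_comp (Equiv.divLeft s) F
  simpa [div_eq_mul_inv] using this

lemma Hyp.tr_inv_zero (h : Hyp K L q) {d : Lˣ} (hd : tr K d = 0) : tr K d⁻¹ = 0 := by
  have h1 := h.ch_inv d
  have h2 : ch K d = 0 := by unfold ch; rw [hd, qc_zero]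
  rw [h2, mul_zero] at h1
  exact (qc_eq_zero_iff _).1 h1

lemma Hyp.zi_ki (h : Hyp K L q) {d : Lˣ} (hd : tr K d = 0) (s : Lˣ) :
    zi (tr K (s * d⁻¹)) = ki K s := by
  have hd' := h.tr_inv_zero hd
  by_cases hs : ∃ x, emb K L x = s
  · obtain ⟨x, rfl⟩ := hs
    rw [zi_emb, ki_emb, hd']; simp [zi]
  · rw [ki_not hs]
    have : tr K (s * d⁻¹) ≠ 0 := by
      intro h0
      obtain ⟨y, hy⟩ := h.tr_zero hd' h0
      rw [Units.val_mul] at hy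
      have hy' := mul_right_cancel₀ (d⁻¹).ne_zero hy
      have hy0 : y ≠ 0 := by
        rintro rfl
        exact s.ne_zero (by simpa using hy')
      exact hs ⟨Units.mk0 y hy0, Units.ext (by rw [hy', emb_val]; rfl)⟩
    simp [zi, this]

/-- second averaging -/
lemma Hyp.avg2 (h : Hyp K L q) (w : Lˣ → ℂ) (hw : ∀ x t, w (emb K L x * t) = w t) (s : Lˣ) :
    ((q : ℂ) - 1) * ∑ u : Lˣ, w u * zi (Algebra.trace K L ((u : L) + s * (u : L)⁻¹))
    = ∑ u : Lˣ, w u * (1 - zi (tr K u) - zi (tr K (s * u⁻¹))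
        + (q : ℂ) * (zi (tr K u) * zi (tr K (s * u⁻¹)))
        + qc K (-1) * (ch K u * ch K (s * u⁻¹))) := by
  have h1 : ∀ x : Kˣ, ∑ u : Lˣ, w u * zi (Algebra.trace K L ((u : L) + s * (u : L)⁻¹))
      = ∑ u : Lˣ, w u * zi ((x : K) * tr K u + (x : K)⁻¹ * tr K (s * u⁻¹)) := by
    intro x
    rw [← sum_scale (emb K L x)]
    apply Finset.sum_congr rfl
    intro u _
    rw [hw]
    congr 2
    rw [map_add]
    congr 1
    · exact tr_emb x u
    · have := tr_emb (L := L) x⁻¹ (s * u⁻¹)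
      rw [Units.val_inv_eq_inv_val] at this
      rw [← this]
      unfold tr
      congr 1
      rw [map_inv]
      push_cast
      rw [mul_inv]; ring
  rw [← h.cardK, ← nsmul_eq_mul, ← Finset.card_univ, ← Finset.sum_const,
    Finset.sum_congr rfl (fun x _ => h1 x), Finset.sum_comm]
  apply Finset.sum_congr rfl
  intro u _
  rw [← Finset.mul_sum, count h.charK, h.hK]; rfl

lemma Hyp.sum_zi_inv (h : Hyp K L q) (s : Lˣ) :
    ∑ u : Lˣ, zi (tr K (s * u⁻¹)) = (q : ℂ) - 1 := by
  rw [sum_inv s (fun u => zi (tr K u)), h.sum_zi]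

lemma Hyp.sum_zi_zi (h : Hyp K L q) (s : Lˣ) :
    ∑ u : Lˣ, (zi (tr K u) * zi (tr K (s * u⁻¹))) = ((q : ℂ) - 1) * ki K s := by
  rw [← h.cardK, ← nsmul_eq_mul, ← Finset.card_univ, ← Finset.sum_const]
  obtain ⟨d, hd⟩ := h.exists_delta
  rw [h.sum_tr_zero (d := d) hd]
  apply Finset.sum_congr rfl
  intro x _
  apply h.zi_ki
  rw [tr_emb]
  have : tr K d = 0 := hd
  rw [this, mul_zero]

/-- number of solutions -/
lemma Hyp.sum_N (h : Hyp K L q) (s : Lˣ) :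
    ((q : ℂ) - 1) * ∑ u : Lˣ, zi (Algebra.trace K L ((u : L) + s * (u : L)⁻¹))
    = ((q : ℂ) ^ 2 - 1) - 2 * ((q : ℂ) - 1) + q * (q - 1) * ki K s
      + qc K (-1) * ∑ u : Lˣ, ch K u * ch K (s * u⁻¹) := by
  have := h.avg2 (fun _ => 1) (fun _ _ => rfl) s
  simp only [one_mul, Finset.sum_add_distrib, Finset.sum_sub_distrib, Finset.sum_const,
    Finset.card_univ, nsmul_eq_mul, h.cardL, ← Finset.mul_sum, h.sum_zi, h.sum_zi_inv,
    h.sum_zi_zi] at this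
  rw [this]; ring

lemma Hyp.sum_eta (h : Hyp K L q) : ∑ u : Lˣ, qc L (u : L) = 0 := sum_qc h.charL

lemma Hyp.zi_eta (h : Hyp K L q) (u : Lˣ) :
    zi (tr K u) * qc L (u : L) = - qc K (-1) * zi (tr K u) := by
  by_cases hu : tr K u = 0
  · rw [h.qc_of_tr u.ne_zero hu]; ring
  · simp [zi, hu]

lemma Hyp.kappa_sq (h : Hyp K L q) : qc K (-1) * qc K (-1) = 1 := qc_sq (by simp)

lemma Hyp.sum_R (h : Hyp K L q) (s : Lˣ) :
    ∑ u : Lˣ, qc L (u : L) * zi (Algebra.trace K L ((u : L) + s * (u : L)⁻¹))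
    = qc K (-1) * (1 + qc L (s : L) - q * (ki K s - kc K s)) := by
  have h0 := h.avg2 (fun u => qc L (u : L)) (fun x t => h.eta_emb x t) s
  have e1 : ∑ u : Lˣ, zi (tr K u) * qc L (u : L) = - qc K (-1) * (q - 1) := by
    simp only [h.zi_eta, ← Finset.mul_sum, h.sum_zi]
  have e2 : ∑ u : Lˣ, zi (tr K (s * u⁻¹)) * qc L (u : L)
      = - qc K (-1) * qc L (s : L) * (q - 1) := by
    have e3 : ∀ u : Lˣ, zi (tr K (s * u⁻¹)) * qc L (u : L)
        = (- qc K (-1) * qc L (s : L)) * zi (tr K (s * u⁻¹)) := by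
      intro u
      have e4 := h.zi_eta (s * u⁻¹)
      have e5 : qc L ((s * u⁻¹ : Lˣ) : L) * qc L (u : L) = qc L (s : L) := by
        rw [← map_mul, ← Units.val_mul]; simp
      have e6 := qc_sq_unit s
      have e7 := qc_sq_unit u
      have e8 := qc_sq_unit (s * u⁻¹)
      have e9 : qc L (u : L) = qc L ((s * u⁻¹ : Lˣ) : L) * qc L (s : L) := by
        linear_combination (-qc L (u : L)) * e8 + qc L ((s * u⁻¹ : Lˣ) : L) * e5
      rw [e9]
      linear_combination qc L (s : L) * e4
    simp only [e3, ← Finset.mul_sum, h.sum_zi_inv]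
  have e3 : ∑ u : Lˣ, (zi (tr K u) * zi (tr K (s * u⁻¹))) * qc L (u : L)
      = - qc K (-1) * ((q - 1) * ki K s) := by
    rw [← h.sum_zi_zi, Finset.mul_sum]
    apply Finset.sum_congr rfl
    intro u _
    linear_combination zi (tr K (s * u⁻¹)) * h.zi_eta u
  have e4 : ∑ u : Lˣ, ch K u * ch K (s * u⁻¹) * qc L (u : L) = (q ^ 2 - q) * kc K s := by
    rw [← h.eta_kc_inv, mul_left_comm, ← h.sum_P, Finset.mul_sum]
    apply Finset.sum_congr rfl
    intro u _
    have f1 := h.ch_inv (s⁻¹ * u)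
    rw [mul_inv_rev, inv_inv, mul_comm, Units.val_mul, map_mul] at f1
    have f2 : qc L ((s⁻¹ : Lˣ) : L) = qc L (s : L) := by
      have : qc L (s : L) * qc L ((s⁻¹ : Lˣ) : L) = 1 := by rw [← map_mul]; simp
      linear_combination (qc L (s : L)) * this - qc L ((s⁻¹ : Lˣ) : L) * qc_sq_unit s
    rw [f1, f2]
    linear_combination (qc L (s : L) * ch K u * ch K (s⁻¹ * u)) * qc_sq_unit u
  have h1 : (q : ℂ) - 1 ≠ 0 := by
    have := h.one_lt
    rw [sub_ne_zero]
    exact_mod_cast this.ne'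
  apply mul_left_cancel₀ h1
  rw [h0]
  have : ∀ u : Lˣ, qc L (u : L) * (1 - zi (tr K u) - zi (tr K (s * u⁻¹))
        + (q : ℂ) * (zi (tr K u) * zi (tr K (s * u⁻¹)))
        + qc K (-1) * (ch K u * ch K (s * u⁻¹)))
      = qc L (u : L) - zi (tr K u) * qc L (u : L) - zi (tr K (s * u⁻¹)) * qc L (u : L)
        + q * ((zi (tr K u) * zi (tr K (s * u⁻¹))) * qc L (u : L))
        + qc K (-1) * (ch K u * ch K (s * u⁻¹) * qc L (u : L)) := by
    intro u; ring
  simp only [this, Finset.sum_add_distrib, Finset.sum_sub_distrib, ← Finset.mul_sum, e1, e2, e3, e4,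
    h.sum_eta]
  ring

end three

section four
variable {K L : Type} [Field K] [Fintype K] [DecidableEq K] [Field L] [Fintype L] [DecidableEq L]
  [Algebra K L] {q : ℕ}

variable (K) in
/-- sum of the indicators of the two classes -/
def ff (γ t : Lˣ) : ℂ := (1 + ch K t) * (1 + ch K (γ * t)) / 2

variable (K) in
/-- difference of the indicators of the two classes -/
def gg (γ t : Lˣ) : ℂ :=
  (zi (tr K t) * (1 + ch K (γ * t)) + zi (tr K (γ * t)) * (1 + ch K t)) / 2

lemma ff_emb (γ t : Lˣ) (x : Kˣ) : ff K γ (emb K L x * t)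
    = (1 + qc K x * ch K t) * (1 + qc K x * ch K (γ * t)) / 2 := by
  unfold ff; rw [mul_left_comm γ, ch_emb, ch_emb]

lemma gg_emb (γ t : Lˣ) (x : Kˣ) : gg K γ (emb K L x * t)
    = (zi (tr K t) * (1 + qc K x * ch K (γ * t))
      + zi (tr K (γ * t)) * (1 + qc K x * ch K t)) / 2 := by
  unfold gg; rw [mul_left_comm γ, ch_emb, ch_emb, zi_emb, zi_emb]

lemma ff_sq (γ : Lˣ) (x : Kˣ) (t : Lˣ) : ff K γ (emb K L (x * x) * t) = ff K γ t := by
  rw [ff_emb, Units.val_mul, map_mul, qc_sq_unit, one_mul, one_mul]; rfl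

lemma gg_sq (γ : Lˣ) (x : Kˣ) (t : Lˣ) : gg K γ (emb K L (x * x) * t) = gg K γ t := by
  rw [gg_emb, Units.val_mul, map_mul, qc_sq_unit, one_mul, one_mul]; rfl

lemma Hyp.q_ne (h : Hyp K L q) : (q : ℂ) - 1 ≠ 0 := by
  have := h.one_lt
  rw [sub_ne_zero]
  exact_mod_cast this.ne'

lemma Hyp.kc_gamma (h : Hyp K L q) {γ : Lˣ} (hγ : qc L (γ : L) = -1) : kc K γ = 0 := by
  apply kc_not
  rintro ⟨x, rfl⟩
  rw [emb_val, h.qc_alg x.ne_zero] at hγ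
  norm_num at hγ

lemma Hyp.sum_ff (h : Hyp K L q) {γ : Lˣ} (hγ : qc L (γ : L) = -1) :
    ∑ t, ff K γ t = ((q : ℂ) ^ 2 - 1) / 2 := by
  have : ∀ t, ff K γ t = (1 + ch K (1 * t) + ch K (γ * t) + ch K t * ch K (γ * t)) * (1 / 2) := by
    intro t; rw [one_mul]; unfold ff; ring
  simp only [this, ← Finset.sum_mul, Finset.sum_add_distrib, h.sum_ch, h.sum_P, h.kc_gamma hγ,
    Finset.sum_const, Finset.card_univ, nsmul_eq_mul, h.cardL]
  ring

lemma Hyp.sum_ff_ch (h : Hyp K L q) (γ β : Lˣ) :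
    ∑ t, ff K γ t * ch K (β * t) = ((q : ℂ) ^ 2 - q) / 2 * (kc K β + kc K (β * γ⁻¹)) := by
  have h1 : ∑ t, ch K (γ * t) * ch K (β * t) = ((q : ℂ) ^ 2 - q) * kc K (β * γ⁻¹) := by
    rw [← h.sum_P, ← sum_scale γ (fun t => ch K t * ch K (β * γ⁻¹ * t))]
    apply Finset.sum_congr rfl
    intro t _
    rw [show β * γ⁻¹ * (γ * t) = β * t by group]
  have : ∀ t, ff K γ t * ch K (β * t) = (ch K (β * t) + ch K t * ch K (β * t)
      + ch K (γ * t) * ch K (β * t) + ch K (1 * t) * ch K (γ * t) * ch K (β * t)) * (1 / 2) := by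
    intro t; rw [one_mul]; unfold ff; ring
  simp only [this, ← Finset.sum_mul, Finset.sum_add_distrib, h.sum_ch, h.sum_P, h.sum_ch3, h1]
  ring

lemma Hyp.sum_ch_kc (h : Hyp K L q) (m : Lˣ) :
    ∑ u : Lˣ, ch K u * kc K (m * u⁻¹) = ((q : ℂ) - 1) * ch K m := by
  rw [← sum_inv m]
  have : ∀ u : Lˣ, ch K (m * u⁻¹) * kc K (m * (m * u⁻¹)⁻¹) = kc K u * ch K (m * u⁻¹) := by
    intro u
    rw [mul_comm]; congr 2; rw [mul_inv_rev, inv_inv, mul_comm u, mul_inv_cancel_left]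
  rw [Finset.sum_congr rfl (fun u _ => this u), sum_kc, ← h.cardK, ← nsmul_eq_mul,
    ← Finset.card_univ, ← Finset.sum_const]
  apply Finset.sum_congr rfl
  intro x _
  rw [mul_comm m, ← map_inv, ch_emb, ← mul_assoc, ← map_mul]
  simp

lemma Hyp.sum_x1 (h : Hyp K L q) (a b : ℂ) :
    ∑ x : Kˣ, (1 + qc K x * a) * (1 + qc K x * b) = ((q : ℂ) - 1) * (1 + a * b) := by
  have : ∀ x : Kˣ, (1 + qc K x * a) * (1 + qc K x * b) = 1 + a * b + qc K x * (a + b) := by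
    intro x
    linear_combination (a * b) * qc_sq_unit x
  simp only [this, Finset.sum_add_distrib, ← Finset.sum_mul, sum_qc h.charK, Finset.sum_const,
    Finset.card_univ, nsmul_eq_mul, h.cardK]
  ring

lemma Hyp.sum_ff_ki (h : Hyp K L q) (γ m : Lˣ) :
    ∑ t, ff K γ t * ki K (m * t) = ((q : ℂ) - 1) / 2 * (1 + ch K m⁻¹ * ch K (γ * m⁻¹)) := by
  rw [← sum_scale m⁻¹]
  have : ∀ t, ff K γ (m⁻¹ * t) * ki K (m * (m⁻¹ * t)) = ki K t * ff K γ (t * m⁻¹) := by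
    intro t
    rw [mul_inv_cancel_left, mul_comm, mul_comm t]
  rw [Finset.sum_congr rfl (fun u _ => this u), sum_ki]
  simp only [ff_emb, ← Finset.sum_div, h.sum_x1]
  ring

/-- first averaging -/
lemma Hyp.avg1 (h : Hyp K L q) (ψ : L → ℂ)
    (hψ : ∀ z : L, ∑ x : Kˣ, ψ (algebraMap K L x * z) = q * zi (Algebra.trace K L z) - 1)
    (f w : Lˣ → ℂ) (hf : ∀ x t, f (emb K L (x * x) * t) = f t)
    (hw : ∀ x t, w (emb K L x * t) = w t) (m : Lˣ) :
    ((q : ℂ) - 1) * ∑ t : Lˣ, ∑ u : Lˣ, f t * (w u * ψ ((u : L) + m * t * (u : L)⁻¹))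
    = ∑ t : Lˣ, f t * (q * ∑ u : Lˣ, w u * zi (Algebra.trace K L
        ((u : L) + ((m * t : Lˣ) : L) * (u : L)⁻¹)) - ∑ u, w u) := by
  have h1 : ∀ x : Kˣ, ∑ t : Lˣ, ∑ u : Lˣ, f t * (w u * ψ ((u : L) + m * t * (u : L)⁻¹))
      = ∑ t : Lˣ, ∑ u : Lˣ, f t * (w u * ψ (algebraMap K L x *
        ((u : L) + ((m * t : Lˣ) : L) * (u : L)⁻¹))) := by
    intro x
    rw [← sum_scale (emb K L (x * x))]
    apply Finset.sum_congr rfl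
    intro t _
    rw [← sum_scale (emb K L x)]
    apply Finset.sum_congr rfl
    intro u _
    rw [hf, hw]
    congr 3
    have : algebraMap K L (x : K) ≠ 0 := by simp
    have := u.ne_zero
    push_cast
    rw [emb_val, emb_val]
    push_cast
    field_simp
  rw [← h.cardK, ← nsmul_eq_mul, ← Finset.card_univ, ← Finset.sum_const,
    Finset.sum_congr rfl (fun x _ => h1 x), Finset.sum_comm]
  apply Finset.sum_congr rfl
  intro t _
  rw [Finset.sum_comm, Finset.mul_sum, ← Finset.sum_sub_distrib, Finset.mul_sum]
  apply Finset.sum_congr rfl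
  intro u _
  rw [← Finset.mul_sum, ← Finset.mul_sum, hψ]
  ring

lemma Hyp.val_U (h : Hyp K L q) (ψ : L → ℂ)
    (hψ : ∀ z : L, ∑ x : Kˣ, ψ (algebraMap K L x * z) = q * zi (Algebra.trace K L z) - 1)
    {γ : Lˣ} (hγ : qc L (γ : L) = -1) (m : Lˣ) :
    ∑ t : Lˣ, ∑ u : Lˣ, ff K γ t * ψ ((u : L) + m * t * (u : L)⁻¹)
    = (q ^ 2 * (1 + ch K m⁻¹ * ch K (γ * m⁻¹)) + qc K (-1) * q ^ 2 * (ch K m + ch K (m * γ⁻¹))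
      - (q ^ 2 - 1)) / 2 := by
  have h1 := h.avg1 ψ hψ (ff K γ) (fun _ => 1) (ff_sq γ) (fun _ _ => rfl) m
  simp only [one_mul, Finset.sum_const, Finset.card_univ, nsmul_eq_mul, h.cardL, mul_one] at h1
  apply mul_left_cancel₀ h.q_ne
  apply mul_left_cancel₀ h.q_ne
  rw [h1, Finset.mul_sum]
  have h2 : ∀ t : Lˣ, ((q : ℂ) - 1) * (ff K γ t * (q * ∑ u : Lˣ, zi (Algebra.trace K L
        ((u : L) + ((m * t : Lˣ) : L) * (u : L)⁻¹)) - (q ^ 2 - 1)))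
      = ff K γ t * (q * ((q ^ 2 - 1) - 2 * (q - 1)) - (q - 1) * (q ^ 2 - 1))
        + (q ^ 2 * (q - 1)) * (ff K γ t * ki K (m * t))
        + (q * qc K (-1)) * ∑ u : Lˣ, ch K u * (ff K γ t * ch K (m * u⁻¹ * t)) := by
    intro t
    have e1 := h.sum_N (m * t)
    have e2 : ∑ u : Lˣ, ch K u * (ff K γ t * ch K (m * u⁻¹ * t))
        = ff K γ t * ∑ u : Lˣ, ch K u * ch K (m * t * u⁻¹) := by
      rw [Finset.mul_sum]
      apply Finset.sum_congr rfl
      intro u _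
      rw [mul_right_comm m]; ring
    rw [e2]
    linear_combination (ff K γ t * q) * e1
  simp only [h2, Finset.sum_add_distrib, ← Finset.sum_mul, ← Finset.mul_sum, h.sum_ff hγ,
    h.sum_ff_ki]
  rw [Finset.sum_comm]
  have h3 : ∀ u : Lˣ, ∑ t, ch K u * (ff K γ t * ch K (m * u⁻¹ * t))
      = ((q : ℂ) ^ 2 - q) / 2 * (ch K u * kc K (m * u⁻¹) + ch K u * kc K (m * γ⁻¹ * u⁻¹)) := by
    intro u
    rw [← Finset.mul_sum, h.sum_ff_ch, mul_right_comm m γ⁻¹]; ring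
  simp only [h3, ← Finset.mul_sum, Finset.sum_add_distrib, h.sum_ch_kc]
  ring

lemma sum_zi_gamma (γ : Lˣ) (F : Lˣ → ℂ) :
    ∑ t, zi (tr K (γ * t)) * F t = ∑ t, zi (tr K t) * F (γ⁻¹ * t) := by
  rw [← sum_scale γ (fun t => zi (tr K t) * F (γ⁻¹ * t))]
  apply Finset.sum_congr rfl
  intro t _
  rw [inv_mul_cancel_left]

lemma Hyp.sum_zi_ch (h : Hyp K L q) (α : Lˣ) : ∑ t, zi (tr K t) * ch K (α * t) = 0 := by
  apply h.odd_sum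
  intro e t he
  rw [mul_left_comm α, ch_emb, he, zi_emb]; ring

lemma Hyp.sum_gg (h : Hyp K L q) (γ : Lˣ) : ∑ t, gg K γ t = (q : ℂ) - 1 := by
  have h1 : ∑ t, zi (tr K (γ * t)) * (1 + ch K t) = ∑ t, zi (tr K t) * (1 + ch K (γ⁻¹ * t)) :=
    sum_zi_gamma γ (fun t => 1 + ch K t)
  unfold gg
  rw [← Finset.sum_div, Finset.sum_add_distrib, h1]
  simp only [mul_add, mul_one, Finset.sum_add_distrib, h.sum_zi, h.sum_zi_ch]
  ring

lemma Hyp.sum_gg_eta (h : Hyp K L q) {γ : Lˣ} (hγ : qc L (γ : L) = -1) :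
    ∑ t, gg K γ t * qc L (t : L) = 0 := by
  have h1 : ∀ t, gg K γ t * qc L (t : L) = (- qc K (-1) / 2) * (zi (tr K t) * (1 + ch K (γ * t)))
      + (qc K (-1) / 2) * (zi (tr K (γ * t)) * (1 + ch K t)) := by
    intro t
    have e1 := h.zi_eta t
    have e2 := h.zi_eta (γ * t)
    rw [Units.val_mul, map_mul, hγ] at e2
    unfold gg
    linear_combination ((1 + ch K (γ * t)) / 2) * e1 - ((1 + ch K t) / 2) * e2
  have h2 : ∑ t, zi (tr K (γ * t)) * (1 + ch K t) = ∑ t, zi (tr K t) * (1 + ch K (γ⁻¹ * t)) :=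
    sum_zi_gamma γ (fun t => 1 + ch K t)
  simp only [h1, Finset.sum_add_distrib, ← Finset.mul_sum, h2]
  simp only [mul_add, mul_one, Finset.sum_add_distrib, h.sum_zi, h.sum_zi_ch]
  ring

lemma Hyp.sum_gg_ki (h : Hyp K L q) (γ m : Lˣ) :
    ∑ t, gg K γ t * (ki K (m * t) - kc K (m * t)) = ((q : ℂ) - 1) / 2 *
      (zi (tr K m⁻¹) * (1 - ch K (γ * m⁻¹)) + zi (tr K (γ * m⁻¹)) * (1 - ch K m⁻¹)) := by
  rw [← sum_scale m⁻¹]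
  have : ∀ t, gg K γ (m⁻¹ * t) * (ki K (m * (m⁻¹ * t)) - kc K (m * (m⁻¹ * t)))
      = ki K t * gg K γ (t * m⁻¹) - kc K t * gg K γ (t * m⁻¹) := by
    intro t
    rw [mul_inv_cancel_left, mul_comm t]; ring
  rw [Finset.sum_congr rfl (fun u _ => this u), Finset.sum_sub_distrib, sum_ki, sum_kc,
    ← Finset.sum_sub_distrib]
  have h2 : ∀ x : Kˣ, gg K γ (emb K L x * m⁻¹) - qc K x * gg K γ (emb K L x * m⁻¹)
      = zi (tr K m⁻¹) / 2 * ((1 + qc K x * (-1)) * (1 + qc K x * ch K (γ * m⁻¹)))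
       + zi (tr K (γ * m⁻¹)) / 2 * ((1 + qc K x * (-1)) * (1 + qc K x * ch K m⁻¹)) := by
    intro x
    rw [gg_emb]; ring
  simp only [h2, Finset.sum_add_distrib, ← Finset.mul_sum, h.sum_x1]
  ring

lemma Hyp.val_V (h : Hyp K L q) (ψ : L → ℂ)
    (hψ : ∀ z : L, ∑ x : Kˣ, ψ (algebraMap K L x * z) = q * zi (Algebra.trace K L z) - 1)
    {γ : Lˣ} (hγ : qc L (γ : L) = -1) (m : Lˣ) :
    ∑ t : Lˣ, ∑ u : Lˣ, gg K γ t * (qc L (u : L) * ψ ((u : L) + m * t * (u : L)⁻¹))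
    = qc K (-1) * q - qc K (-1) * q ^ 2 / 2 *
     (zi (tr K m⁻¹) * (1 - ch K (γ * m⁻¹)) + zi (tr K (γ * m⁻¹)) * (1 - ch K m⁻¹)) := by
  have h1 := h.avg1 ψ hψ (gg K γ) (fun u => qc L (u : L)) (gg_sq γ) (fun x t => h.eta_emb x t) m
  apply mul_left_cancel₀ h.q_ne
  rw [h1]
  have h2 : ∀ t : Lˣ, gg K γ t * (q * ∑ u : Lˣ, qc L (u : L) * zi (Algebra.trace K L
        ((u : L) + ((m * t : Lˣ) : L) * (u : L)⁻¹)) - ∑ u : Lˣ, qc L (u : L))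
      = (q * qc K (-1)) * gg K γ t + (q * qc K (-1) * qc L (m : L)) * (gg K γ t * qc L (t : L))
        - (q ^ 2 * qc K (-1)) * (gg K γ t * (ki K (m * t) - kc K (m * t))) := by
    intro t
    rw [h.sum_R, h.sum_eta, Units.val_mul, map_mul]; ring
  simp only [h2, Finset.sum_sub_distrib, Finset.sum_add_distrib, ← Finset.mul_sum, h.sum_gg,
    h.sum_gg_eta hγ, h.sum_gg_ki]
  ring

lemma Hyp.sum_psi (h : Hyp K L q) (ψ : L → ℂ)
    (hψ : ∀ z : L, ∑ x : Kˣ, ψ (algebraMap K L x * z) = q * zi (Algebra.trace K L z) - 1) 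
    (w : Lˣ → ℂ) (hw : ∀ x t, w (emb K L x * t) = w t) :
    ((q : ℂ) - 1) * ∑ u : Lˣ, w u * ψ u = q * (∑ u : Lˣ, w u * zi (tr K u)) - ∑ u : Lˣ, w u := by
  have h1 : ∀ x : Kˣ, ∑ u : Lˣ, w u * ψ u = ∑ u : Lˣ, w u * ψ (algebraMap K L x * u) := by
    intro x
    rw [← sum_scale (emb K L x)]
    apply Finset.sum_congr rfl
    intro u _
    rw [hw, Units.val_mul, emb_val]
  rw [← h.cardK, ← nsmul_eq_mul, ← Finset.card_univ, ← Finset.sum_const,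
    Finset.sum_congr rfl (fun x _ => h1 x), Finset.sum_comm, Finset.mul_sum,
    ← Finset.sum_sub_distrib]
  apply Finset.sum_congr rfl
  intro u _
  rw [← Finset.mul_sum, hψ]
  unfold tr; ring

lemma Hyp.sum_psi_one (h : Hyp K L q) (ψ : L → ℂ)
    (hψ : ∀ z : L, ∑ x : Kˣ, ψ (algebraMap K L x * z) = q * zi (Algebra.trace K L z) - 1) :
    ∑ u : Lˣ, ψ u = -1 := by
  have := h.sum_psi ψ hψ (fun _ => 1) (fun _ _ => rfl)
  simp only [one_mul, h.sum_zi, Finset.sum_const, Finset.card_univ, nsmul_eq_mul, h.cardL] at this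
  apply mul_left_cancel₀ h.q_ne
  rw [this]; ring

lemma Hyp.sum_psi_eta (h : Hyp K L q) (ψ : L → ℂ)
    (hψ : ∀ z : L, ∑ x : Kˣ, ψ (algebraMap K L x * z) = q * zi (Algebra.trace K L z) - 1) :
    ∑ u : Lˣ, qc L (u : L) * ψ u = - qc K (-1) * q := by
  have := h.sum_psi ψ hψ (fun u => qc L (u : L)) (fun x t => h.eta_emb x t)
  have e : ∀ u : Lˣ, qc L (u : L) * zi (tr K u) = - qc K (-1) * zi (tr K u) := by
    intro u; rw [mul_comm, h.zi_eta]
  simp only [e, ← Finset.mul_sum, h.sum_zi, h.sum_eta] at this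
  apply mul_left_cancel₀ h.q_ne
  rw [this]; ring

lemma Hyp.sum_psi_a (h : Hyp K L q) (ψ : L → ℂ)
    (hψ : ∀ z : L, ∑ x : Kˣ, ψ (algebraMap K L x * z) = q * zi (Algebra.trace K L z) - 1)
    (a : Lˣ) : ∑ u : Lˣ, ψ (a * u) = -1 := by
  rw [← h.sum_psi_one ψ hψ]
  exact sum_scale a (fun u => ψ u)

lemma Hyp.sum_psi_eta_a (h : Hyp K L q) (ψ : L → ℂ)
    (hψ : ∀ z : L, ∑ x : Kˣ, ψ (algebraMap K L x * z) = q * zi (Algebra.trace K L z) - 1)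
    (a : Lˣ) : ∑ u : Lˣ, qc L (u : L) * ψ (a * u) = - qc L (a : L) * qc K (-1) * q := by
  have := h.sum_psi_eta ψ hψ
  rw [← sum_scale a] at this
  have e : ∀ u : Lˣ, qc L ((a * u : Lˣ) : L) * ψ ((a * u : Lˣ) : L)
    = qc L (a : L) * (qc L (u : L) * ψ (a * u)) := by
    intro u; rw [Units.val_mul, map_mul]; ring
  rw [Finset.sum_congr rfl (fun u _ => e u), ← Finset.mul_sum] at this
  linear_combination (qc L (a : L)) * this - (∑ u : Lˣ, qc L (u : L) * ψ (a * u)) * qc_sq_unit a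

variable (K) in
/-- the weighted sum -/
def SS (γ : Lˣ) (G : L → L → ℂ) : ℂ :=
  (∑ u : Lˣ, (1 + qc L (u : L)) / 2 * G u 0)
  + ∑ u : Lˣ, ∑ t : Lˣ, (ff K γ t + qc L (u : L) * gg K γ t) / 2 * G u (t * (u : L)⁻¹)

lemma Hyp.SS_one (h : Hyp K L q) {γ : Lˣ} (hγ : qc L (γ : L) = -1) :
    SS K γ (fun _ _ => 1) = ((q : ℂ) ^ 4 - 1) / 4 := by
  unfold SS
  simp only [mul_one, ← Finset.sum_div, Finset.sum_add_distrib, ← Finset.mul_sum, h.sum_ff hγ,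
    h.sum_gg, ← Finset.sum_mul, h.sum_eta, Finset.sum_const, Finset.card_univ, nsmul_eq_mul,
    h.cardL]
  ring

lemma Hyp.SS_b0 (h : Hyp K L q) (ψ : L → ℂ)
    (hψ : ∀ z : L, ∑ x : Kˣ, ψ (algebraMap K L x * z) = q * zi (Algebra.trace K L z) - 1)
    {γ : Lˣ} (hγ : qc L (γ : L) = -1) (a : Lˣ) :
    SS K γ (fun x y => ψ (a * x + 0 * y)) = (-2 * qc L (a : L) * qc K (-1) * q ^ 2 - q ^ 2 - 1) / 4 := by
  unfold SS
  have e1 : ∀ u : Lˣ, (1 + qc L (u : L)) / 2 * ψ (a * u)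
      = (1 / 2) * ψ (a * u) + (1 / 2) * (qc L (u : L) * ψ (a * u)) := by intro u; ring
  have e2 : ∀ u : Lˣ, ∑ t, (ff K γ t + qc L (u : L) * gg K γ t) / 2 * ψ (a * u)
      = ((q ^ 2 - 1) / 4) * ψ (a * u) + ((q - 1) / 2) * (qc L (u : L) * ψ (a * u)) := by
    intro u
    rw [← Finset.sum_mul, ← Finset.sum_div, Finset.sum_add_distrib, ← Finset.mul_sum, h.sum_ff hγ,
      h.sum_gg]
    ring
  simp only [zero_mul, add_zero, e1, e2, Finset.sum_add_distrib, ← Finset.mul_sum,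
    h.sum_psi_a ψ hψ, h.sum_psi_eta_a ψ hψ]
  ring

lemma Hyp.SS_a0 (h : Hyp K L q) (ψ : L → ℂ) (h0 : ψ 0 = 1)
    (hψ : ∀ z : L, ∑ x : Kˣ, ψ (algebraMap K L x * z) = q * zi (Algebra.trace K L z) - 1)
    {γ : Lˣ} (hγ : qc L (γ : L) = -1) (b : Lˣ) :
    SS K γ (fun x y => ψ (0 * x + b * y)) = (q ^ 2 - 1) / 4 := by
  unfold SS
  simp only [zero_mul, mul_zero, zero_add, h0, mul_one]
  rw [Finset.sum_comm]
  have e1 : ∀ t : Lˣ, ∑ u : Lˣ, (ff K γ t + qc L (u : L) * gg K γ t) / 2 * ψ (b * (t * (u : L)⁻¹))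
      = ff K γ t * (-1 / 2) + (gg K γ t * qc L (t : L)) * (- qc L (b : L) * qc K (-1) * q / 2) := by
    intro t
    rw [← sum_inv t]
    have e2 : ∀ u : Lˣ, (ff K γ t + qc L ((t * u⁻¹ : Lˣ) : L) * gg K γ t) / 2
          * ψ (b * (t * ((t * u⁻¹ : Lˣ) : L)⁻¹))
        = (ff K γ t / 2) * ψ (b * u) + (gg K γ t * qc L (t : L) / 2) * (qc L (u : L) * ψ (b * u)) := by
      intro u
      have e3 : (t : L) * ((t * u⁻¹ : Lˣ) : L)⁻¹ = u := by
        rw [← Units.val_inv_eq_inv_val, ← Units.val_mul]; congr 1; rw [mul_inv_rev, inv_inv, mul_comm u, mul_inv_cancel_left]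
      have e4 : qc L ((t * u⁻¹ : Lˣ) : L) = qc L (t : L) * qc L (u : L) := by
        have e5 : qc L ((t * u⁻¹ : Lˣ) : L) * qc L (u : L) = qc L (t : L) := by
          rw [← map_mul, ← Units.val_mul]; simp
        linear_combination (qc L (u : L)) * e5 - qc L ((t * u⁻¹ : Lˣ) : L) * qc_sq_unit u
      rw [e3, e4]; ring
    rw [Finset.sum_congr rfl (fun u _ => e2 u), Finset.sum_add_distrib, ← Finset.mul_sum,
      ← Finset.mul_sum, h.sum_psi_a ψ hψ, h.sum_psi_eta_a ψ hψ]
    ring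
  rw [Finset.sum_congr rfl (fun u _ => e1 u), Finset.sum_add_distrib, ← Finset.sum_mul,
    ← Finset.sum_mul, h.sum_ff hγ, h.sum_gg_eta hγ, ← Finset.sum_div, Finset.sum_add_distrib,
    h.sum_eta, Finset.sum_const, Finset.card_univ, nsmul_eq_mul, h.cardL]
  ring

lemma ch_cases (t : Lˣ) : ch K t = 0 ∨ ch K t = 1 ∨ ch K t = -1 := by
  by_cases h : tr K t = 0
  · left; unfold ch; rw [h, qc_zero]
  · right; exact qc_cases h

lemma Hyp.SS_ab (h : Hyp K L q) (ψ : L → ℂ)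
    (hψ : ∀ z : L, ∑ x : Kˣ, ψ (algebraMap K L x * z) = q * zi (Algebra.trace K L z) - 1)
    {γ : Lˣ} (hγ : qc L (γ : L) = -1) (a b : Lˣ) :
    SS K γ (fun x y => ψ (a * x + b * y)) = (q ^ 2 - 1) / 4 ∨
    SS K γ (fun x y => ψ (a * x + b * y)) = (-3 * q ^ 2 - 1) / 4 := by
  have hU := h.val_U ψ hψ hγ (a * b)
  have hV := h.val_V ψ hψ hγ (a * b)
  have key : SS K γ (fun x y => ψ (a * x + b * y))
      = (- qc L (a : L) * qc K (-1) * q - 1) / 2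
        + (1 / 2) * (∑ t : Lˣ, ∑ u : Lˣ, ff K γ t * ψ ((u : L) + (a * b : Lˣ) * t * (u : L)⁻¹))
        + (qc L (a : L) / 2) * ∑ t : Lˣ, ∑ u : Lˣ, gg K γ t * (qc L (u : L)
            * ψ ((u : L) + (a * b : Lˣ) * t * (u : L)⁻¹)) := by
    unfold SS
    have e1 : ∀ u : Lˣ, (1 + qc L (u : L)) / 2 * ψ (a * u)
      = (1 / 2) * ψ (a * u) + (1 / 2) * (qc L (u : L) * ψ (a * u)) := by intro u; ring
    have e2 : ∑ u : Lˣ, (1 + qc L (u : L)) / 2 * ψ (a * u + b * 0)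
        = (- qc L (a : L) * qc K (-1) * q - 1) / 2 := by
      simp only [mul_zero, add_zero, e1, Finset.sum_add_distrib, ← Finset.mul_sum,
        h.sum_psi_a ψ hψ, h.sum_psi_eta_a ψ hψ]
      ring
    rw [e2, add_assoc]
    congr 1
    rw [Finset.sum_comm, Finset.mul_sum, Finset.mul_sum, ← Finset.sum_add_distrib]
    apply Finset.sum_congr rfl
    intro t _
    rw [← sum_scale a⁻¹, Finset.mul_sum, Finset.mul_sum, ← Finset.sum_add_distrib]
    apply Finset.sum_congr rfl
    intro u _
    beta_reduce
    have e3 : (a : L) * ((a⁻¹ * u : Lˣ) : L) + b * (t * ((a⁻¹ * u : Lˣ) : L)⁻¹)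
        = (u : L) + (a * b : Lˣ) * t * (u : L)⁻¹ := by
      have := a.ne_zero
      have := u.ne_zero
      push_cast
      field_simp
    have e4 : qc L ((a⁻¹ * u : Lˣ) : L) = qc L (a : L) * qc L (u : L) := by
      have e5 : qc L (a : L) * qc L ((a⁻¹ * u : Lˣ) : L) = qc L (u : L) := by
        rw [← map_mul, ← Units.val_mul]; simp
      linear_combination (qc L (a : L)) * e5 - qc L ((a⁻¹ * u : Lˣ) : L) * qc_sq_unit a
    rw [e3, e4]; ring
  rw [hU, hV] at key
  have hm1 := h.ch_inv (a * b)
  have hm2 : ch K (γ * (a * b)⁻¹) = - qc L ((a * b : Lˣ) : L) * ch K (a * b * γ⁻¹) := by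
    have := h.ch_inv (a * b * γ⁻¹)
    rw [mul_inv_rev, inv_inv] at this
    rw [this]
    congr 1
    have e5 : qc L ((a * b * γ⁻¹ : Lˣ) : L) * qc L (γ : L) = qc L ((a * b : Lˣ) : L) := by
      rw [← map_mul, ← Units.val_mul]; simp
    rw [hγ] at e5
    linear_combination -e5
  have hz1 : ch K (a * b) = 0 → qc L ((a * b : Lˣ) : L) = - qc K (-1) := by
    intro h0
    exact h.qc_of_tr (Units.ne_zero _) ((qc_eq_zero_iff _).1 h0)
  have hz2 : ch K (a * b * γ⁻¹) = 0 → qc L ((a * b : Lˣ) : L) = qc K (-1) := by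
    intro h0
    have h1 := h.qc_of_tr (Units.ne_zero _) ((qc_eq_zero_iff _).1 h0)
    have e5 : qc L ((a * b * γ⁻¹ : Lˣ) : L) * qc L (γ : L) = qc L ((a * b : Lˣ) : L) := by
      rw [← map_mul, ← Units.val_mul]; simp
    rw [← e5, h1, hγ]; ring
  rw [zi_tr, zi_tr, hm2, hm1] at key
  generalize SS K γ (fun x y => ψ (a * x + b * y)) = S at *
  have ha := qc_cases (F := L) a.ne_zero
  have hk : qc K (-1) = 1 ∨ qc K (-1) = -1 := qc_cases (by simp)
  have hm := qc_cases (F := L) (a * b).ne_zero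
  have c1 := ch_cases (K := K) (a * b)
  have c2 := ch_cases (K := K) (a * b * γ⁻¹)
  generalize ch K (a * b) = μ at *
  generalize ch K (a * b * γ⁻¹) = ν at *
  generalize qc L ((a * b : Lˣ) : L) = ε at *
  generalize qc K (-1) = κ at *
  generalize qc L (a : L) = η at *
  clear hU hV hm1 hm2 hγ hψ
  rcases c1 with rfl | rfl | rfl <;> rcases c2 with rfl | rfl | rfl <;>
    rcases hk with rfl | rfl <;> rcases ha with rfl | rfl <;>
    rcases hm with rfl | rfl <;>
    first
      | (left; linear_combination key)
      | (right; linear_combination key)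
      | (exfalso; have h5 := hz1 rfl; norm_num at h5; done)
      | (exfalso; have h5 := hz2 rfl; norm_num at h5; done)

end four

section five
variable {K L : Type} [Field K] [Fintype K] [DecidableEq K] [Field L] [Fintype L] [DecidableEq L]
  [Algebra K L] {q : ℕ}

lemma sum_field {F : Type} [Field F] [Fintype F] [DecidableEq F] (f : F → ℂ) :
    ∑ v : F, f v = f 0 + ∑ v : Fˣ, f v := by
  rw [← Finset.add_sum_erase _ _ (Finset.mem_univ (0 : F))]
  congr 1
  symm
  apply Finset.sum_bij (fun (v : Fˣ) _ => (v : F))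
  · intro v _; simp
  · intro a _ b _ hab; exact Units.ext hab
  · intro b hb
    have hb0 : b ≠ 0 := (Finset.mem_erase.1 hb).1
    exact ⟨Units.mk0 b hb0, Finset.mem_univ _, rfl⟩
  · intro v _; rfl

lemma psiL_eq (p : ℕ) [Fact p.Prime] [CharP L p] (x : L) :
    psiL p L x = ZMod.stdAddChar (letI : Algebra (ZMod p) L := ZMod.algebra L p
      Algebra.trace (ZMod p) L x) := by
  unfold psiL zetaP
  rw [ZMod.stdAddChar_apply, ZMod.toCircle_apply, ← Complex.exp_nat_mul]
  congr 1
  ring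

lemma psiL_zero (p : ℕ) [Fact p.Prime] [CharP L p] : psiL p L 0 = 1 := by
  rw [psiL_eq]; simp

lemma Hyp.psi_hyp (h : Hyp K L q) (p : ℕ) [Fact p.Prime] [CharP L p] (z : L) :
    ∑ x : Kˣ, psiL p L (algebraMap K L x * z) = q * zi (Algebra.trace K L z) - 1 := by
  haveI : CharP K p := ((algebraMap K L).charP_iff (algebraMap K L).injective p).2 inferInstance
  letI : Algebra (ZMod p) L := ZMod.algebra L p
  letI : Algebra (ZMod p) K := ZMod.algebra K p
  haveI : IsScalarTower (ZMod p) K L := IsScalarTower.of_algebraMap_eq' (Subsingleton.elim _ _)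
  let Ψ : AddChar K ℂ := (ZMod.stdAddChar (N := p)).compAddMonoidHom
    (Algebra.trace (ZMod p) K).toAddMonoidHom
  have hΨ : ∀ x, Ψ x = ZMod.stdAddChar (Algebra.trace (ZMod p) K x) := fun x => rfl
  have hne : Ψ ≠ 1 := by
    intro h1
    obtain ⟨y, hy⟩ := Algebra.trace_surjective (ZMod p) K 1
    have h2 : Ψ y = 1 := by rw [h1]; rfl
    rw [hΨ, hy] at h2
    have h3 : ZMod.stdAddChar (1 : ZMod p) = ZMod.stdAddChar (0 : ZMod p) := by
      rw [h2, AddChar.map_zero_eq_one]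
    exact one_ne_zero (ZMod.injective_stdAddChar h3)
  have hprim : Ψ.IsPrimitive := AddChar.IsPrimitive.of_ne_one hne
  have hs := AddChar.sum_mulShift (Algebra.trace K L z) hprim
  have e : ∀ x : K, psiL p L (algebraMap K L x * z) = Ψ (x * Algebra.trace K L z) := by
    intro x
    rw [psiL_eq, hΨ, ← h.tr_alg, Algebra.trace_trace]
  simp only [e]
  rw [sum_field, zero_mul, AddChar.map_zero_eq_one, h.hK] at hs
  unfold zi
  rw [← eq_sub_iff_add_eq'] at hs
  rw [hs]
  split_ifs <;> simp

lemma Hyp.not_both (h : Hyp K L q) {γ : Lˣ} (hγ : qc L (γ : L) = -1) (t : Lˣ)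
    (h1 : ch K t = 0) : ch K (γ * t) ≠ 0 := by
  intro h2
  have e1 := h.qc_of_tr t.ne_zero ((qc_eq_zero_iff _).1 h1)
  have e2 := h.qc_of_tr (γ * t).ne_zero ((qc_eq_zero_iff _).1 h2)
  rw [Units.val_mul, map_mul, hγ, e1] at e2
  have e3 := h.kappa_sq
  have : qc K (-1) = 0 := by linear_combination e2 / 2
  rw [this] at e3
  norm_num at e3

lemma Hyp.bridge (h : Hyp K L q) {γ : Lˣ} (hγ : qc L (γ : L) = -1) (E : Set (L × L))
    (h0 : ∀ v, ((0 : L), v) ∉ E) (h1 : ∀ u : Lˣ, ((u : L), (0 : L)) ∈ E ↔ qc L (u : L) = 1)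
    (h2 : ∀ u t : Lˣ, ((u : L), (t : L) * (u : L)⁻¹) ∈ E ↔
      ((qc L (u : L) = 1 ∧ ((ch K t = 1 ∧ ch K (γ * t) = 1) ∨
        ((ch K t = 0 ∧ ch K (γ * t) = 1) ∨ (ch K t = 1 ∧ ch K (γ * t) = 0)))) ∨
       (qc L (u : L) = -1 ∧ (ch K t = 1 ∧ ch K (γ * t) = 1)))) (G : L → L → ℂ) :
    ∑ᶠ z ∈ E, G z.1 z.2 = SS K γ G := by
  classical
  rw [finsum_eq_sum_of_fintype]
  have e : ∀ z : L × L, ∑ᶠ (_ : z ∈ E), G z.1 z.2 = if z ∈ E then G z.1 z.2 else 0 := by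
    intro z; exact finsum_eq_if
  simp only [e]
  rw [Fintype.sum_prod_type, sum_field]
  simp only [h0, if_false, Finset.sum_const_zero, zero_add]
  unfold SS
  rw [← Finset.sum_add_distrib]
  apply Finset.sum_congr rfl
  intro u _
  rw [sum_field]
  congr 1
  · simp only [h1]
    rcases qc_cases u.ne_zero with hu | hu <;> rw [hu] <;> norm_num
  · rw [← sum_scale u⁻¹]
    apply Finset.sum_congr rfl
    intro t _
    have e3 : ((u⁻¹ * t : Lˣ) : L) = t * (u : L)⁻¹ := by
      push_cast; ring
    rw [e3]
    simp only [h2]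
    unfold ff gg
    rw [zi_tr, zi_tr]
    have hnb := h.not_both hγ t
    rcases qc_cases u.ne_zero with hu | hu <;> rcases ch_cases (K := K) t with c1 | c1 | c1 <;>
      rcases ch_cases (K := K) (γ * t) with c2 | c2 | c2 <;>
      first
        | exact absurd c2 (hnb c1)
        | (rw [hu, c1, c2]; norm_num)

lemma set_lemma (A B X1 X3 : Set ℕ) (hA : A.Finite) (hB : B.Finite) (h3 : A ∩ B = X3)
    (h1 : (A \ B) ∪ (B \ A) = X1) (hc : A.ncard = B.ncard + 2) (hX : X1.ncard ≤ 2) :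
    A = X3 ∪ X1 ∧ B = X3 := by
  have e1 := Set.ncard_inter_add_ncard_diff_eq_ncard A B hA
  have e2 := Set.ncard_inter_add_ncard_diff_eq_ncard B A hB
  rw [Set.inter_comm] at e2
  have e3 : ((A \ B) ∪ (B \ A)).ncard = (A \ B).ncard + (B \ A).ncard :=
    Set.ncard_union_eq disjoint_sdiff_sdiff hA.diff hB.diff
  rw [h1] at e3
  have e4 : (B \ A).ncard = 0 := by omega
  rw [Set.ncard_eq_zero hB.diff] at e4
  subst h3
  rw [← h1, e4, Set.union_empty, Set.inter_union_diff]
  refine ⟨rfl, ?_⟩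
  symm
  rw [Set.inter_eq_right]
  exact Set.diff_eq_empty.1 e4

lemma Hyp.order (h : Hyp K L q) (W : Lˣ) (hW : ∀ x : Lˣ, ∃ n : ℕ, x = W ^ n) :
    orderOf W = q ^ 2 - 1 := by
  rw [orderOf_eq_card_of_forall_mem_zpowers, Nat.card_eq_fintype_card, Fintype.card_units, h.hL]
  intro x
  obtain ⟨n, hn⟩ := hW x
  exact ⟨n, by simp [hn]⟩

lemma Hyp.eta_W (h : Hyp K L q) (W : Lˣ) (hW : ∀ x : Lˣ, ∃ n : ℕ, x = W ^ n) :
    qc L (W : L) = -1 := by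
  rcases qc_cases W.ne_zero with h1 | h1
  · obtain ⟨e, he⟩ := exists_ns h.charL
    obtain ⟨n, rfl⟩ := hW e
    rw [Units.val_pow_eq_pow_val, map_pow, h1, one_pow] at he
    norm_num at he
  · exact h1

lemma Hyp.rep (h : Hyp K L q) (W : Lˣ) (hW : ∀ x : Lˣ, ∃ n : ℕ, x = W ^ n) (t : Lˣ) :
    ∃ i < 2 * q + 2, ∃ x : Kˣ, t = emb K L (x * x) * W ^ i := by
  obtain ⟨n, rfl⟩ := hW t
  have hn : Algebra.norm K (W : L) ≠ 0 := by
    rw [Ne, Algebra.norm_eq_zero_iff]; exact W.ne_zero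
  have hy : emb K L (Units.mk0 _ hn) = W ^ (q + 1) := by
    apply Units.ext
    rw [emb_val, Units.val_mk0, h.nm_pow]; push_cast; ring
  refine ⟨n % (2 * q + 2), Nat.mod_lt _ (by omega), (Units.mk0 _ hn) ^ (n / (2 * q + 2)), ?_⟩
  rw [map_mul, map_pow, hy, ← pow_mul, ← pow_add, ← pow_add]
  congr 1
  have := Nat.div_add_mod n (2 * q + 2)
  generalize n / (2 * q + 2) = a at *
  generalize n % (2 * q + 2) = b at *
  rw [← this]; ring

lemma Hyp.idx_inj (h : Hyp K L q) (W : Lˣ) (hW : ∀ x : Lˣ, ∃ n : ℕ, x = W ^ n) {i j : ℕ}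
    (hi : i < 2 * q + 2) (hj : j < 2 * q + 2) (x : Kˣ) (hx : qc K (x : K) = 1)
    (hij : W ^ i = emb K L x * W ^ j) : i = j := by
  obtain ⟨z, hz0, hz⟩ := (qc_one_iff _).1 hx
  have hxz : x = (Units.mk0 z hz0) ^ 2 := Units.ext (by simpa using hz)
  obtain ⟨k, hk⟩ := h.odd
  have hk0 : 0 < k := by have := h.one_lt; omega
  have h1 : x ^ k = 1 := by
    rw [hxz, ← pow_mul]
    have : 2 * k = Fintype.card Kˣ := by rw [Fintype.card_units, h.hK]; omega
    rw [this, pow_card_eq_one]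
  have h2 : W ^ (i * k) = W ^ (j * k) := by
    rw [pow_mul, pow_mul, hij, mul_pow, ← map_pow, h1, map_one, one_mul]
  have ho := h.order W hW
  have hlt : ∀ i, i < 2 * q + 2 → i * k < q ^ 2 - 1 := by
    intro i hi
    have : q ^ 2 - 1 = (2 * q + 2) * k := by
      rw [hk]
      have : (2 * k + 1) ^ 2 = (2 * (2 * k + 1) + 2) * k + 1 := by ring
      omega
    rw [this]
    exact Nat.mul_lt_mul_of_pos_right hi hk0
  have h3 := pow_injOn_Iio_orderOf (x := W) (by rw [ho]; exact hlt i hi) (by rw [ho]; exact hlt j hj) h2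
  exact Nat.eq_of_mul_eq_mul_right hk0 h3

lemma Hyp.sub_one (h : Hyp K L q) (W : Lˣ) (hW : ∀ x : Lˣ, ∃ n : ℕ, x = W ^ n) (α β : Lˣ)
    (S : Set ℕ) (hS : ∀ i ∈ S, i < 2 * q + 2 ∧ ch K (α * W ^ i) = 0 ∧ ch K (β * W ^ i) = 1) :
    S.ncard ≤ 1 := by
  have hf : S.Finite := (Set.finite_lt_nat (2 * q + 2)).subset (fun i hi => (hS i hi).1)
  rw [Set.ncard_le_one hf]
  intro i hi j hj
  obtain ⟨hi1, hi2, hi3⟩ := hS i hi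
  obtain ⟨hj1, hj2, hj3⟩ := hS j hj
  obtain ⟨y, hy⟩ := h.tr_zero ((qc_eq_zero_iff _).1 hj2) ((qc_eq_zero_iff _).1 hi2)
  have hy0 : y ≠ 0 := by
    rintro rfl
    rw [map_zero, zero_mul] at hy
    exact (α * W ^ i).ne_zero hy
  have h1 : W ^ i = emb K L (Units.mk0 y hy0) * W ^ j := by
    have : α * W ^ i = emb K L (Units.mk0 y hy0) * (α * W ^ j) := Units.ext hy
    rw [mul_left_comm] at this
    exact mul_left_cancel this
  refine h.idx_inj W hW hi1 hj1 _ ?_ h1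
  rw [h1, mul_left_comm, ch_emb, hj3, mul_one] at hi3
  exact hi3

end five

end WX

namespace WX

section six
variable {K L : Type} [Field K] [Fintype K] [DecidableEq K] [Field L] [Fintype L] [DecidableEq L]
  [Algebra K L] {q : ℕ}

lemma Hyp.cyc_iff (h : Hyp K L q) (W : Lˣ) (hW : ∀ x : Lˣ, ∃ n : ℕ, x = W ^ n) (u : Lˣ) :
    ((u : L) ∈ cyc L (W : L) 2 0 ↔ qc L (u : L) = 1) ∧
    ((u : L) ∈ cyc L (W : L) 2 1 ↔ qc L (u : L) = -1) := by
  have hη := h.eta_W W hW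
  have e0 : (u : L) ∈ cyc L (W : L) 2 0 → qc L (u : L) = 1 := by
    rintro ⟨k, hk⟩
    rw [hk, map_mul, map_pow, map_pow, map_pow, hη]; norm_num
  have e1 : (u : L) ∈ cyc L (W : L) 2 1 → qc L (u : L) = -1 := by
    rintro ⟨k, hk⟩
    rw [hk, map_mul, map_pow, map_pow, map_pow, hη]; norm_num
  have e2 : (u : L) ∈ cyc L (W : L) 2 0 ∨ (u : L) ∈ cyc L (W : L) 2 1 := by
    obtain ⟨n, rfl⟩ := hW u
    rcases Nat.even_or_odd' n with ⟨k, rfl | rfl⟩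
    · left; exact ⟨k, by push_cast; rw [pow_mul]; ring⟩
    · right; exact ⟨k, by push_cast; rw [pow_add, pow_mul]; ring⟩
  refine ⟨⟨e0, fun hu => ?_⟩, ⟨e1, fun hu => ?_⟩⟩
  · rcases e2 with e | e
    · exact e
    · have := e1 e
      rw [hu] at this; norm_num at this
  · rcases e2 with e | e
    · have := e0 e
      rw [hu] at this; norm_num at this
    · exact e

lemma Hyp.D_iff (h : Hyp K L q) (W : Lˣ) (hW : ∀ x : Lˣ, ∃ n : ℕ, x = W ^ n) (e : ℂ) (C : Set L)
    (hC : ∀ u : Lˣ, (u : L) ∈ C ↔ qc L (u : L) = e) (S : Set ℕ) (P : Lˣ → Prop)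
    (hP : ∀ (x : Kˣ) t, P (emb K L (x * x) * t) ↔ P t)
    (hS : ∀ i, i ∈ S ↔ i < 2 * q + 2 ∧ P (W ^ i)) (u t : Lˣ) :
    (∃ x : K, x ≠ 0 ∧ ∃ y ∈ C, ∃ i ∈ S,
      ((u : L), (t : L) * (u : L)⁻¹) = (algebraMap K L x * y, algebraMap K L x * y⁻¹ * (W : L) ^ i)) ↔
    qc L (u : L) = e ∧ P t := by
  constructor
  · rintro ⟨x, hx, y, hy, i, hi, hw⟩
    obtain ⟨h1, h2⟩ := Prod.ext_iff.1 hw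
    simp only at h1 h2
    have hx' : algebraMap K L x ≠ 0 := by simpa using hx
    have hy0 : y ≠ 0 := by
      rintro rfl
      rw [mul_zero] at h1
      exact u.ne_zero h1
    have hy' := (hC (Units.mk0 y hy0)).1 hy
    refine ⟨?_, ?_⟩
    · rw [h1, map_mul, h.qc_alg hx, one_mul]; exact hy'
    · have : t = emb K L (Units.mk0 x hx * Units.mk0 x hx) * W ^ i := by
        apply Units.ext
        have : (t : L) = (t : L) * (u : L)⁻¹ * u := by simp
        rw [this, h2, h1, Units.val_mul, emb_val, Units.val_mul, map_mul,
          Units.val_pow_eq_pow_val, Units.val_mk0]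
        field_simp
      rw [this, hP]
      exact ((hS i).1 hi).2
  · rintro ⟨hu, ht⟩
    obtain ⟨i, hi, x, rfl⟩ := h.rep W hW t
    rw [hP] at ht
    have hx' : algebraMap K L (x : K) ≠ 0 := by simp
    refine ⟨x, x.ne_zero, ((emb K L x⁻¹ * u : Lˣ) : L), (hC _).2 ?_, i, (hS i).2 ⟨hi, ht⟩, ?_⟩
    · rw [h.eta_emb]; exact hu
    · have e1 : ((emb K L x⁻¹ * u : Lˣ) : L) = (algebraMap K L (x : K))⁻¹ * u := by
        rw [Units.val_mul, emb_val]; simp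
      rw [e1]
      ext
      · simp only; field_simp
      · simp only
        rw [Units.val_mul, emb_val, Units.val_mul, map_mul, Units.val_pow_eq_pow_val]
        field_simp

end six

end WX

/-- Theorem 4.1(2): `E₁ = D₁ ∪ D₂ ∪ D₃` is of type Q. -/
theorem wilson_xiang_E1_typeQ
    (p s q : ℕ) (hp : p.Prime) (hpodd : p ≠ 2) (hs : 0 < s) (hq : q = p ^ s)
    (K L : Type) [Field K] [Fintype K] [Field L] [Fintype L] [Algebra K L] [CharP L p]
    (hK : Fintype.card K = q) (hL : Fintype.card L = q ^ 2)
    (ω : L) (hω : IsPrim L ω)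
    (c : ℕ) (hc : c < 2 * q + 2) (hcodd : Odd c)
    (I₁ I₂ J₁ J₂ : Set ℕ)
    (hI₁ : I₁ = {i | i < 2 * q + 2 ∧ Algebra.trace K L (ω ^ i) = 0})
    (hI₂ : I₂ = {i | i < 2 * q + 2 ∧ Algebra.trace K L (ω ^ i) ∈ sqSet K})
    (hJ₁ : J₁ = {i | i < 2 * q + 2 ∧ Algebra.trace K L (ω ^ (i + c)) = 0})
    (hJ₂ : J₂ = {i | i < 2 * q + 2 ∧ Algebra.trace K L (ω ^ (i + c)) ∈ sqSet K})
    (X₁c X₃c : Set ℕ)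
    (hX₁c : X₁c = (I₁ ∩ J₂) ∪ (I₂ ∩ J₁)) (hX₃c : X₃c = I₂ ∩ J₂)
    (τ : ℕ) (hτ : τ = if q % 4 = 3 then 0 else 1)
    (A B : Set ℕ) (hA : ∀ i ∈ A, i < 2 * q + 2) (hB : ∀ i ∈ B, i < 2 * q + 2)
    (hAB : A ∩ B = X₃c) (hABsym : (A \ B) ∪ (B \ A) = X₁c)
    (D₀ D₁ D₂ D₃ : Set (L × L))
    (hD₀ : D₀ = {w | ∃ y ∈ cyc L ω 2 τ, w = ((0 : L), y)})
    (hD₁ : D₁ = {w | ∃ y ∈ cyc L ω 2 0, w = (y, (0 : L))})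
    (hD₂ : D₂ = {w | ∃ x : K, x ≠ 0 ∧ ∃ y ∈ cyc L ω 2 0, ∃ i ∈ A,
      w = (algebraMap K L x * y, algebraMap K L x * y⁻¹ * ω ^ i)})
    (hD₃ : D₃ = {w | ∃ x : K, x ≠ 0 ∧ ∃ y ∈ cyc L ω 2 1, ∃ i ∈ B,
      w = (algebraMap K L x * y, algebraMap K L x * y⁻¹ * ω ^ i)})
    (hcardA : A.ncard = (q + 3) / 2) (hcardB : B.ncard = (q - 1) / 2)
    (hpar : (A ∩ {i | Even i}).ncard + (B ∩ {i | Odd i}).ncard =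
      (A ∩ {i | Odd i}).ncard + (B ∩ {i | Even i}).ncard)
    : IsTypeQ p q L (D₁ ∪ D₂ ∪ D₃) := by
  classical
  haveI : Fact p.Prime := ⟨hp⟩
  have hodd : Odd q := by rw [hq]; exact (hp.odd_of_ne_two hpodd).pow
  have h : WX.Hyp K L q := ⟨hK, hL, hodd⟩
  have hq1 : 1 < q := h.one_lt
  have hω0 : ω ≠ 0 := by
    rintro rfl
    obtain ⟨e, he⟩ := WX.exists_ns h.charL
    obtain ⟨n, hn⟩ := hω e e.ne_zero
    rcases Nat.eq_zero_or_pos n with rfl | hn0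
    · rw [hn, pow_zero, map_one] at he
      norm_num at he
    · rw [zero_pow hn0.ne'] at hn
      exact e.ne_zero hn
  obtain ⟨W, rfl⟩ : ∃ W : Lˣ, (W : L) = ω := ⟨Units.mk0 ω hω0, rfl⟩
  have hW : ∀ x : Lˣ, ∃ n : ℕ, x = W ^ n := by
    intro x
    obtain ⟨n, hn⟩ := hω x x.ne_zero
    exact ⟨n, Units.ext (by rw [hn]; simp)⟩
  obtain ⟨γ, hγd⟩ : ∃ γ : Lˣ, γ = W ^ c := ⟨_, rfl⟩
  have hγ : WX.qc L (γ : L) = -1 := by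
    rw [hγd, Units.val_pow_eq_pow_val, map_pow, h.eta_W W hW, hcodd.neg_one_pow]
  have ch1 : ∀ i : ℕ, WX.ch K (W ^ i) = WX.qc K (Algebra.trace K L ((W : L) ^ i)) := by
    intro i; unfold WX.ch WX.tr; rw [Units.val_pow_eq_pow_val]
  have ch2 : ∀ i : ℕ, WX.ch K (γ * W ^ i) = WX.qc K (Algebra.trace K L ((W : L) ^ (i + c))) := by
    intro i; rw [hγd, ← pow_add, add_comm c i, ch1]
  have mI1 : ∀ i, i ∈ I₁ ↔ i < 2 * q + 2 ∧ WX.ch K (W ^ i) = 0 := by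
    intro i; rw [hI₁, ch1, WX.qc_eq_zero_iff]; rfl
  have mI2 : ∀ i, i ∈ I₂ ↔ i < 2 * q + 2 ∧ WX.ch K (W ^ i) = 1 := by
    intro i; rw [hI₂, ch1, WX.qc_one_iff]; rfl
  have mJ1 : ∀ i, i ∈ J₁ ↔ i < 2 * q + 2 ∧ WX.ch K (γ * W ^ i) = 0 := by
    intro i; rw [hJ₁, ch2, WX.qc_eq_zero_iff]; rfl
  have mJ2 : ∀ i, i ∈ J₂ ↔ i < 2 * q + 2 ∧ WX.ch K (γ * W ^ i) = 1 := by
    intro i; rw [hJ₂, ch2, WX.qc_one_iff]; rfl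
  have hX : X₁c.ncard ≤ 2 := by
    rw [hX₁c]
    refine (Set.ncard_union_le _ _).trans ?_
    have s1 : (I₁ ∩ J₂).ncard ≤ 1 := by
      apply h.sub_one W hW 1 γ
      rintro i ⟨a, b⟩
      rw [one_mul]
      exact ⟨((mI1 i).1 a).1, ((mI1 i).1 a).2, ((mJ2 i).1 b).2⟩
    have s2 : (I₂ ∩ J₁).ncard ≤ 1 := by
      apply h.sub_one W hW γ 1
      rintro i ⟨a, b⟩
      rw [one_mul]
      exact ⟨((mI2 i).1 a).1, ((mJ1 i).1 b).2, ((mI2 i).1 a).2⟩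
    omega
  have hAB' : A.ncard = B.ncard + 2 := by
    rw [hcardA, hcardB]
    omega
  obtain ⟨eA, eB⟩ := WX.set_lemma A B X₁c X₃c
    ((Set.finite_lt_nat (2 * q + 2)).subset hA) ((Set.finite_lt_nat (2 * q + 2)).subset hB)
    hAB hABsym hAB' hX
  have mB : ∀ i, i ∈ B ↔ i < 2 * q + 2 ∧ (WX.ch K (W ^ i) = 1 ∧ WX.ch K (γ * W ^ i) = 1) := by
    intro i
    rw [eB, hX₃c, Set.mem_inter_iff, mI2, mJ2]; tauto
  have mA : ∀ i, i ∈ A ↔ i < 2 * q + 2 ∧ ((WX.ch K (W ^ i) = 1 ∧ WX.ch K (γ * W ^ i) = 1) ∨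
      ((WX.ch K (W ^ i) = 0 ∧ WX.ch K (γ * W ^ i) = 1) ∨
        (WX.ch K (W ^ i) = 1 ∧ WX.ch K (γ * W ^ i) = 0))) := by
    intro i
    rw [eA, hX₃c, hX₁c, Set.mem_union, Set.mem_union, Set.mem_inter_iff, Set.mem_inter_iff,
      Set.mem_inter_iff, mI2, mJ2, mI1, mJ1]; tauto
  have inv1 : ∀ (x : Kˣ) (t : Lˣ), WX.ch K (WX.emb K L (x * x) * t) = WX.ch K t := by
    intro x t
    rw [WX.ch_emb, Units.val_mul, map_mul, WX.qc_sq_unit, one_mul]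
  have inv2 : ∀ (x : Kˣ) (t : Lˣ), WX.ch K (γ * (WX.emb K L (x * x) * t)) = WX.ch K (γ * t) := by
    intro x t
    rw [mul_left_comm, inv1]
  have hd2 := h.D_iff W hW 1 _ (fun u => (h.cyc_iff W hW u).1) A
    (fun t => (WX.ch K t = 1 ∧ WX.ch K (γ * t) = 1) ∨
      ((WX.ch K t = 0 ∧ WX.ch K (γ * t) = 1) ∨ (WX.ch K t = 1 ∧ WX.ch K (γ * t) = 0)))
    (by intro x t; simp only [inv1, inv2]) mA
  have hd3 := h.D_iff W hW (-1) _ (fun u => (h.cyc_iff W hW u).2) B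
    (fun t => (WX.ch K t = 1 ∧ WX.ch K (γ * t) = 1))
    (by intro x t; simp only [inv1, inv2]) mB
  have cyc0 : ∀ i, (0 : L) ∉ cyc L (W : L) 2 i := by
    rintro i ⟨k, hk⟩
    exact (mul_ne_zero (pow_ne_zero _ W.ne_zero) (pow_ne_zero _ (pow_ne_zero _ W.ne_zero))) hk.symm
  have n2 : ∀ (x : K) (_ : x ≠ 0) (j : ℕ) (y : L) (_ : y ∈ cyc L (W : L) 2 j) (i : ℕ),
      algebraMap K L x * y ≠ 0 ∧ algebraMap K L x * y⁻¹ * (W : L) ^ i ≠ 0 := by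
    intro x hx j y hy i
    have hx' : algebraMap K L x ≠ 0 := by simpa using hx
    have hy0 : y ≠ 0 := by rintro rfl; exact cyc0 j hy
    exact ⟨mul_ne_zero hx' hy0, mul_ne_zero (mul_ne_zero hx' (inv_ne_zero hy0))
      (pow_ne_zero _ W.ne_zero)⟩
  have h0 : ∀ v, ((0 : L), v) ∉ D₁ ∪ D₂ ∪ D₃ := by
    intro v hv
    rw [hD₁, hD₂, hD₃] at hv
    rcases hv with (⟨y, hy, hw⟩ | ⟨x, hx, y, hy, i, hi, hw⟩) | ⟨x, hx, y, hy, i, hi, hw⟩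
    · have := (Prod.ext_iff.1 hw).1
      simp only at this
      exact cyc0 0 (this ▸ hy)
    · exact (n2 x hx _ y hy i).1 (Prod.ext_iff.1 hw).1.symm
    · exact (n2 x hx _ y hy i).1 (Prod.ext_iff.1 hw).1.symm
  have h1 : ∀ u : Lˣ, ((u : L), (0 : L)) ∈ D₁ ∪ D₂ ∪ D₃ ↔ WX.qc L (u : L) = 1 := by
    intro u
    rw [← (h.cyc_iff W hW u).1, hD₁, hD₂, hD₃]
    constructor
    · rintro ((⟨y, hy, hw⟩ | ⟨x, hx, y, hy, i, hi, hw⟩) | ⟨x, hx, y, hy, i, hi, hw⟩)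
      · have := (Prod.ext_iff.1 hw).1
        simp only at this
        exact this ▸ hy
      · exact absurd (Prod.ext_iff.1 hw).2.symm (n2 x hx _ y hy i).2
      · exact absurd (Prod.ext_iff.1 hw).2.symm (n2 x hx _ y hy i).2
    · intro hu
      exact Or.inl (Or.inl ⟨u, hu, rfl⟩)
  have h2 : ∀ u t : Lˣ, ((u : L), (t : L) * (u : L)⁻¹) ∈ D₁ ∪ D₂ ∪ D₃ ↔
      ((WX.qc L (u : L) = 1 ∧ ((WX.ch K t = 1 ∧ WX.ch K (γ * t) = 1) ∨
        ((WX.ch K t = 0 ∧ WX.ch K (γ * t) = 1) ∨ (WX.ch K t = 1 ∧ WX.ch K (γ * t) = 0)))) ∨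
       (WX.qc L (u : L) = -1 ∧ (WX.ch K t = 1 ∧ WX.ch K (γ * t) = 1))) := by
    intro u t
    rw [← hd2 u t, ← hd3 u t, hD₁, hD₂, hD₃]
    constructor
    · rintro ((⟨y, hy, hw⟩ | hw) | hw)
      · exact absurd (Prod.ext_iff.1 hw).2 (mul_ne_zero t.ne_zero (inv_ne_zero u.ne_zero))
      · exact Or.inl hw
      · exact Or.inr hw
    · rintro (hw | hw)
      · exact Or.inl (Or.inr hw)
      · exact Or.inr hw
  have hbr := h.bridge hγ (D₁ ∪ D₂ ∪ D₃) h0 h1 h2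
  generalize D₁ ∪ D₂ ∪ D₃ = E at hbr
  refine ⟨?_, ?_⟩
  · have e1 := hbr (fun _ _ => 1)
    rw [h.SS_one hγ, finsum_mem_eq_finite_toFinset_sum _ E.toFinite, Finset.sum_const,
      ← Set.ncard_eq_toFinset_card] at e1
    have e2 : ((4 * E.ncard + 1 : ℕ) : ℂ) = ((q ^ 4 : ℕ) : ℂ) := by
      push_cast
      rw [nsmul_eq_mul, mul_one] at e1
      rw [e1]; ring
    have e3 : 4 * E.ncard + 1 = q ^ 4 := by exact_mod_cast e2
    omega
  · intro a b hab
    have e1 := hbr (fun x y => psiL p L (a * x + b * y))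
    unfold psiSum
    rw [e1]
    by_cases ha : a = 0
    · subst ha
      have hb : b ≠ 0 := by rintro rfl; exact hab rfl
      left
      exact h.SS_a0 (psiL p L) (WX.psiL_zero p) (h.psi_hyp p) hγ (Units.mk0 b hb)
    · by_cases hb : b = 0
      · subst hb
        have e2 := h.SS_b0 (psiL p L) (h.psi_hyp p) hγ (Units.mk0 a ha)
        rw [Units.val_mk0] at e2
        rw [e2]
        rcases WX.qc_cases ha with c1 | c1 <;>
          rcases WX.qc_cases (neg_ne_zero.2 (one_ne_zero (α := K))) with c2 | c2 <;>
          rw [c1, c2]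
        · right; ring
        · left; ring
        · left; ring
        · right; ring
      · exact h.SS_ab (psiL p L) (h.psi_hyp p) hγ (Units.mk0 a ha) (Units.mk0 b hb)

end
end

section
/- In the Wilson–Xiang setting, assume |A| = |B| = (q+1)/2 and |A_e| + |B_o| = |A_o| + |B_e| − 2(−1)^{(q−1)/2}, and set E_0 = D_0 ∪ D_2 ∪ D_3. If (a,b) ∈ F_{q²} × F_{q²} and exactly one of a, b is zero, then ψ_{a,b}(E_0) = (−3q²−1)/4 if a = 0 and b ∈ C_1^{(2,q²)}, and ψ_{a,b}(E_0) = (q²−1)/4 otherwise. -/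
noncomputable section

open Classical in
theorem psiL_eq_addChar (p : ℕ) (hp : p.Prime) (L : Type) [Field L] [Fintype L] [CharP L p]
    (K : Type) [Field K] [Fintype K] [Algebra K L] :
    ∃ ψ : AddChar L ℂ, (∀ x, psiL p L x = ψ x) ∧ ψ.IsPrimitive ∧
      ∀ y : L, ∑ x : K, ψ (algebraMap K L x * y) =
        if Algebra.trace K L y = 0 then (Fintype.card K : ℂ) else 0 := by
  haveI : Fact p.Prime := ⟨hp⟩
  haveI : CharP K p := (algebraMap K L).charP (algebraMap K L).injective p
  letI : Algebra (ZMod p) L := ZMod.algebra L p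
  letI : Algebra (ZMod p) K := ZMod.algebra K p
  haveI : IsScalarTower (ZMod p) K L := IsScalarTower.of_algebraMap_eq' (RingHom.ext_zmod _ _)
  have hz : IsPrimitiveRoot (zetaP p) p := Complex.isPrimitiveRoot_exp p hp.ne_zero
  set φ := AddChar.zmodChar p hz.pow_eq_one with hφ
  have hφp : φ.IsPrimitive := AddChar.zmodChar_primitive_of_primitive_root p hz
  have hφ1 : ∃ a, φ a ≠ 1 := by
    have := hφp (one_ne_zero)
    rw [AddChar.ne_one_iff] at this
    simpa using this
  obtain ⟨a, ha⟩ := hφ1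
  have prim : ∀ (F : Type) [Field F] [Fintype F] [Algebra (ZMod p) F],
      (φ.compAddMonoidHom (Algebra.trace (ZMod p) F).toAddMonoidHom).IsPrimitive := by
    intro F _ _ _
    apply AddChar.IsPrimitive.of_ne_one
    rw [AddChar.ne_one_iff]
    obtain ⟨x, hx⟩ := Algebra.trace_surjective (ZMod p) F a
    exact ⟨x, by simpa [hx] using ha⟩
  refine ⟨φ.compAddMonoidHom (Algebra.trace (ZMod p) L).toAddMonoidHom, ?_, prim L, ?_⟩
  · intro x
    simp [hφ, AddChar.zmodChar_apply, psiL]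
  · intro y
    have h := AddChar.sum_mulShift (Algebra.trace K L y) (prim K)
    rw [Nat.cast_ite, Nat.cast_zero] at h
    rw [← h]
    refine Finset.sum_congr rfl fun x _ => ?_
    simp only [AddChar.compAddMonoidHom_apply, LinearMap.toAddMonoidHom_coe]
    rw [← Algebra.trace_trace (S := K), ← Algebra.smul_def, map_smul, smul_eq_mul]

open Classical in
theorem gauss_value (q : ℕ) (hqo : Odd q)
    (K L : Type) [Field K] [Fintype K] [Field L] [Fintype L] [Algebra K L]
    (hK : Fintype.card K = q) (hL : Fintype.card L = q ^ 2) (hchar : ringChar L ≠ 2)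
    (hKχ : ∀ x : K, x ≠ 0 → quadraticChar L (algebraMap K L x) = 1)
    (ψ : AddChar L ℂ) (hprim : ψ.IsPrimitive)
    (hsum : ∀ y : L, ∑ x : K, ψ (algebraMap K L x * y) =
        if Algebra.trace K L y = 0 then (Fintype.card K : ℂ) else 0) :
    ∑ y : L, (quadraticChar L y : ℂ) * ψ y = -(-1 : ℂ) ^ ((q - 1) / 2) * q := by
  have hq1 : 1 < q := hK ▸ Fintype.one_lt_card
  have hfin : Module.finrank K L = 2 := by
    have := Module.card_eq_pow_finrank (K := K) (V := L)
    rw [hK, hL] at this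
    exact (Nat.pow_right_injective hq1 this).symm
  -- the number of trace zero elements
  have hcard : ((Finset.univ.filter fun y : L => Algebra.trace K L y = 0).card : ℂ) = q := by
    have h1 : ∑ y : L, ∑ x : K, ψ (algebraMap K L x * y) = (q : ℂ) ^ 2 := by
      rw [Finset.sum_comm]
      have : ∀ x : K, ∑ y : L, ψ (algebraMap K L x * y) = if x = 0 then (q : ℂ) ^ 2 else 0 := by
        intro x
        have := AddChar.sum_mulShift (algebraMap K L x) hprim
        simp only [mul_comm] at this ⊢
        rw [this, hL]
        by_cases hx : x = 0 <;> simp [hx]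
      simp [this]
    simp only [hsum, hK] at h1
    rw [Finset.sum_ite, Finset.sum_const_zero, add_zero, Finset.sum_const, nsmul_eq_mul] at h1
    have hq0 : (q : ℂ) ≠ 0 := by exact_mod_cast (by omega : q ≠ 0)
    apply mul_right_cancel₀ hq0
    rw [h1]; ring
  have hval : ∀ y : L, y ≠ 0 → Algebra.trace K L y = 0 →
      quadraticChar L y = -(-1) ^ ((q - 1) / 2) := by
    intro y hy ht
    have h := FiniteField.algebraMap_trace_eq_sum_pow K L y
    rw [ht, hfin, Nat.card_eq_fintype_card, hK] at h
    simp [Finset.sum_range_succ] at h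
    obtain ⟨m, hm⟩ := hqo
    have h2 : y ^ (q - 1) = -1 := by
      apply mul_left_cancel₀ hy
      rw [← pow_succ', Nat.sub_add_cancel hq1.le]
      linear_combination -h
    have h3 : q ^ 2 / 2 = (q - 1) * (m + 1) := by
      rw [hm, Nat.div_eq_iff (by norm_num)]
      simp only [Nat.add_sub_cancel]
      ring_nf
      omega
    have h4 := quadraticChar_eq_pow_of_char_ne_two' hchar y
    rw [hL, h3, pow_mul, h2] at h4
    have h5 : (q - 1) / 2 = m := by omega
    rw [h5]
    have h6 : (quadraticChar L y : ℤ) = 1 ∨ quadraticChar L y = -1 := quadraticChar_dichotomy hy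
    have h7 : (-1 : L) ≠ 1 := Ring.neg_one_ne_one_of_char_ne_two hchar
    rcases Nat.even_or_odd m with hme | hmo
    · rw [hme.neg_one_pow]
      rw [hme.add_one.neg_one_pow] at h4
      rcases h6 with h6 | h6
      · rw [h6] at h4; simp at h4; exact absurd h4.symm h7
      · exact h6
    · rw [hmo.neg_one_pow]
      rw [hmo.add_one.neg_one_pow] at h4
      rcases h6 with h6 | h6
      · rw [h6]; norm_num
      · rw [h6] at h4; simp at h4; exact absurd h4 h7
  -- average over K^*
  set G := ∑ y : L, (quadraticChar L y : ℂ) * ψ y with hG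
  have hx : ∀ x : K, x ≠ 0 →
      ∑ y : L, (quadraticChar L y : ℂ) * ψ (algebraMap K L x * y) = G := by
    intro x hx
    have hx' : algebraMap K L x ≠ 0 := by simpa using hx
    rw [hG, ← Equiv.sum_comp (Equiv.mulLeft₀ _ hx') (fun y => (quadraticChar L y : ℂ) * ψ y)]
    refine Finset.sum_congr rfl fun y _ => ?_
    simp [hKχ x hx, -quadraticChar_apply]
  have h0 : ∑ y : L, (quadraticChar L y : ℂ) = 0 := by
    exact_mod_cast congrArg (Int.cast : ℤ → ℂ) (quadraticChar_sum_zero (F := L) hchar)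
  have e1 : ∑ x : K, ∑ y : L, (quadraticChar L y : ℂ) * ψ (algebraMap K L x * y)
      = ((q : ℂ) - 1) * G := by
    rw [← Finset.add_sum_erase _ _ (Finset.mem_univ (0 : K))]
    rw [Finset.sum_congr rfl (fun x hxm => hx x (Finset.ne_of_mem_erase hxm))]
    simp [h0, -quadraticChar_apply, Finset.card_erase_of_mem, Finset.card_univ, hK, Nat.cast_sub hq1.le]
  have e2 : ∑ x : K, ∑ y : L, (quadraticChar L y : ℂ) * ψ (algebraMap K L x * y)
      = ((q : ℂ) - 1) * (-(-1 : ℂ) ^ ((q - 1) / 2) * q) := by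
    rw [Finset.sum_comm]
    simp only [← Finset.mul_sum, hsum, hK, mul_ite, mul_zero]
    rw [← Finset.sum_filter]
    rw [← Finset.add_sum_erase _ _ (a := (0 : L)) (by simp)]
    rw [Finset.sum_congr rfl (g := fun _ => (-(-1 : ℂ) ^ ((q - 1) / 2) * q))]
    · rw [Finset.sum_const, nsmul_eq_mul, Finset.card_erase_of_mem (by simp), Nat.cast_sub, hcard]
      · simp
      · exact Finset.card_pos.mpr ⟨0, by simp⟩
    · intro y hy
      rw [Finset.mem_erase, Finset.mem_filter] at hy
      rw [hval y hy.1 hy.2.2]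
      push_cast; ring
  have hne : ((q : ℂ) - 1) ≠ 0 := by
    rw [sub_ne_zero]; exact_mod_cast hq1.ne'
  exact mul_left_cancel₀ hne (e1.symm.trans e2)

open Classical in
/-- Sums over the two classes. -/
theorem eta_value (L : Type) [Field L] [Fintype L] 
    (ψ : AddChar L ℂ) (hprim : ψ.IsPrimitive) (e : ℤ) (he : e = 1 ∨ e = -1) (b : L) (hb : b ≠ 0) :
    ∑ y ∈ Finset.univ.filter (fun y : L => quadraticChar L y = e), ψ (b * y) =
      (-1 + e * quadraticChar L b * ∑ y : L, (quadraticChar L y : ℂ) * ψ y) / 2 := by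
  have h1 : ∑ y : L, ψ (b * y) = 0 := by
    have := AddChar.sum_mulShift b hprim
    simp only [mul_comm] at this ⊢
    rw [this]; simp [hb]
  have h2 : (quadraticChar L b : ℂ) * ∑ y : L, (quadraticChar L y : ℂ) * ψ y =
      ∑ y : L, (quadraticChar L y : ℂ) * ψ (b * y) := by
    rw [← Equiv.sum_comp (Equiv.mulLeft₀ _ hb) (fun y => (quadraticChar L y : ℂ) * ψ y), Finset.mul_sum]
    refine Finset.sum_congr rfl fun y _ => ?_
    have : (quadraticChar L b : ℂ) * quadraticChar L b = 1 := by
      rcases quadraticChar_dichotomy hb with h | h <;> simp [h]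
    simp only [Equiv.mulLeft₀_apply, map_mul, Int.cast_mul]
    linear_combination (quadraticChar L y : ℂ) * ψ (b * y) * this
  rw [mul_assoc, h2, Finset.sum_filter]
  have h3 : ∀ y : L, (if quadraticChar L y = e then ψ (b * y) else 0) =
      (ψ (b * y) + e * ((quadraticChar L y : ℂ) * ψ (b * y)) - if y = 0 then 1 else 0) / 2 := by
    intro y
    by_cases hy : y = 0
    · subst hy
      rcases he with rfl | rfl <;> simp
    · rcases quadraticChar_dichotomy hy with h | h <;> rcases he with rfl | rfl <;>
        simp [h, hy]
  simp only [h3]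
  rw [← Finset.sum_div, Finset.sum_sub_distrib, Finset.sum_add_distrib, h1, ← Finset.mul_sum]
  simp
  ring

open Classical in
/-- The parametrization of `D₂`, `D₃` is two-to-one. -/
theorem double_cover (q : ℕ) (hqo : Odd q)
    (K L : Type) [Field K] [Fintype K] [Field L] [Fintype L] [Algebra K L]
    (hK : Fintype.card K = q) (hL : Fintype.card L = q ^ 2) (hchar : ringChar L ≠ 2)
    (ω : L) (hω0 : ω ≠ 0) (hord : orderOf ω = q ^ 2 - 1) (e : ℤ) 
    (S : Finset ℕ) (hS : ∀ i ∈ S, i < 2 * q + 2) (g : L × L → ℂ) (D : Set (L × L))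
    (hD : D = {w | ∃ x : K, x ≠ 0 ∧ ∃ y : L, (y ≠ 0 ∧ quadraticChar L y = e) ∧ ∃ i ∈ S,
      w = (algebraMap K L x * y, algebraMap K L x * y⁻¹ * ω ^ i)})
    (hneg : quadraticChar L (-1) = 1) (he : e ≠ 0) :
    ∑ᶠ z ∈ D, g z = (∑ x ∈ Finset.univ.filter (fun x : K => x ≠ 0), ∑ i ∈ S,
      ∑ y ∈ Finset.univ.filter (fun y : L => quadraticChar L y = e),
        g (algebraMap K L x * y, algebraMap K L x * y⁻¹ * ω ^ i)) / 2 := by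
  have hq1 : 1 < q := hK ▸ Fintype.one_lt_card
  set f : K × ℕ × L → L × L := fun t =>
    (algebraMap K L t.1 * t.2.2, algebraMap K L t.1 * t.2.2⁻¹ * ω ^ t.2.1) with hf
  set T : Finset (K × ℕ × L) := (Finset.univ.filter (fun x : K => x ≠ 0)) ×ˢ S ×ˢ
    (Finset.univ.filter (fun y : L => quadraticChar L y = e)) with hT
  have hy0 : ∀ y : L, quadraticChar L y = e → y ≠ 0 := by
    rintro y hy rfl
    simp at hy; exact he hy.symm
  have hDT : D = ((T.image f : Finset (L × L)) : Set (L × L)) := by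
    ext w
    rw [hD]
    simp only [Set.mem_ofPred_eq, Finset.coe_image, Set.mem_image, Finset.mem_coe, hT,
      Finset.mem_product, Finset.mem_filter, Finset.mem_univ, true_and, hf]
    constructor
    · rintro ⟨x, hx, y, hy, i, hi, rfl⟩
      exact ⟨(x, i, y), ⟨hx, hi, hy.2⟩, rfl⟩
    · rintro ⟨⟨x, i, y⟩, ⟨hx, hi, hy⟩, rfl⟩
      exact ⟨x, hx, y, ⟨hy0 y hy, hy⟩, i, hi, rfl⟩
  have hsum : ∑ t ∈ T, g (f t) = (∑ x ∈ Finset.univ.filter (fun x : K => x ≠ 0), ∑ i ∈ S,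
      ∑ y ∈ Finset.univ.filter (fun y : L => quadraticChar L y = e),
        g (algebraMap K L x * y, algebraMap K L x * y⁻¹ * ω ^ i)) := by
    rw [hT, Finset.sum_product]
    refine Finset.sum_congr rfl fun x _ => ?_
    rw [Finset.sum_product]
  rw [← hsum, hDT, finsum_mem_coe_finset, Finset.sum_comp g f]
  have hfib : ∀ b ∈ T.image f, (T.filter (fun t => f t = b)).card = 2 := by
    intro b hb
    obtain ⟨⟨x, i, y⟩, ht, rfl⟩ := Finset.mem_image.1 hb
    simp only [hT, Finset.mem_product, Finset.mem_filter, Finset.mem_univ, true_and] at ht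
    obtain ⟨hx, hi, hy⟩ := ht
    have hyn := hy0 y hy
    have hx' : algebraMap K L x ≠ 0 := by simpa using hx
    have hcK : (2 : K) ≠ 0 := by
      intro h
      have h2 : (2 : L) = 0 := by
        have := congrArg (algebraMap K L) h
        rwa [map_ofNat, map_zero] at this
      exact Ring.two_ne_zero hchar h2
    rw [Finset.card_eq_two]
    refine ⟨(x, i, y), (-x, i, -y), ?_, ?_⟩
    · intro h
      have h1 : x = -x := congrArg Prod.fst h
      have : 2 * x = 0 := by linear_combination h1
      rcases mul_eq_zero.1 this with h | h
      · exact hcK h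
      · exact hx h
    · ext ⟨x', i', y'⟩
      simp only [hT, hf, Finset.mem_product, Finset.mem_filter, Finset.mem_univ, true_and,
        Prod.mk.injEq, Finset.mem_insert, Finset.mem_singleton]
      constructor
      · rintro ⟨⟨hx1, hi1, hy1⟩, h1, h2⟩
        have hyn' := hy0 y' hy1
        have hx1' : algebraMap K L x' ≠ 0 := by simpa using hx1
        have h3 : (algebraMap K L x') ^ 2 * ω ^ i' = (algebraMap K L x) ^ 2 * ω ^ i := by
          have := congrArg₂ (· * ·) h1 h2
          field_simp at this
          linear_combination this
        obtain ⟨m, hm⟩ := hqo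
        have hpow : ∀ z : K, z ≠ 0 → ((algebraMap K L z) ^ 2) ^ m = 1 := by
          intro z hz
          rw [← pow_mul, ← map_pow]
          have := FiniteField.pow_card_sub_one_eq_one z hz
          rw [hK, hm, Nat.add_sub_cancel] at this
          rw [this, map_one]
        have h4 : ω ^ (i' * m) = ω ^ (i * m) := by
          have := congrArg (· ^ m) h3
          simp only [mul_pow, hpow x hx, hpow x' hx1, one_mul] at this
          rw [pow_mul, pow_mul, this]
        have hm0 : 0 < m := by omega
        have hlt : ∀ j, j ∈ S → j * m < orderOf ω := by
          intro j hj
          have := hS j hj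
          have h5 : j * m ≤ (2 * q + 1) * m := Nat.mul_le_mul_right m (by omega)
          rw [hord]
          refine lt_of_le_of_lt h5 ?_
          rw [hm]
          have : (2 * m + 1) ^ 2 - 1 = 4 * m * m + 4 * m := by
            rw [Nat.sub_eq_iff_eq_add (Nat.one_le_pow _ _ (by omega))]; ring
          rw [this]; nlinarith
        have h6 : i' * m = i * m := pow_injOn_Iio_orderOf (hlt i' hi1) (hlt i hi) h4
        have h7 : i' = i := Nat.eq_of_mul_eq_mul_right hm0 h6
        subst h7
        have h8 : (algebraMap K L x') ^ 2 = (algebraMap K L x) ^ 2 :=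
          mul_right_cancel₀ (pow_ne_zero _ hω0) h3
        rcases sq_eq_sq_iff_eq_or_eq_neg.1 h8 with h9 | h9
        · left
          refine ⟨(algebraMap K L).injective h9, rfl, ?_⟩
          rw [h9] at h1
          exact mul_left_cancel₀ hx' h1
        · right
          refine ⟨(algebraMap K L).injective (by rw [h9, map_neg]), rfl, ?_⟩
          rw [h9] at h1
          apply mul_left_cancel₀ hx'
          linear_combination -h1
      · rintro (⟨rfl, rfl, rfl⟩ | ⟨rfl, rfl, rfl⟩)
        · exact ⟨⟨hx, hi, hy⟩, rfl, rfl⟩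
        · refine ⟨⟨neg_ne_zero.2 hx, hi, ?_⟩, ?_, ?_⟩
          · rw [neg_eq_neg_one_mul, map_mul, hneg, one_mul, hy]
          · simp
          · simp [inv_neg]
  have hfin : ∑ b ∈ T.image f, (T.filter (fun t => f t = b)).card • g b =
      2 * ∑ b ∈ T.image f, g b := by
    rw [Finset.mul_sum]
    refine Finset.sum_congr rfl fun b hb => ?_
    rw [hfib b hb, nsmul_eq_mul]
    norm_num
  rw [hfin]
  ring

open Classical in
theorem card_parity (A : Finset ℕ) :
    (∑ i ∈ A, (-1 : ℂ) ^ i) = (((A : Set ℕ) ∩ {i | Even i}).ncard : ℂ) -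
      (((A : Set ℕ) ∩ {i | Odd i}).ncard : ℂ) := by
  have h1 : ((A : Set ℕ) ∩ {i | Even i}) = ((A.filter Even : Finset ℕ) : Set ℕ) := by
    ext; simp
  have h2 : ((A : Set ℕ) ∩ {i | Odd i}) = ((A.filter (fun i => ¬ Even i) : Finset ℕ) : Set ℕ) := by
    ext; simp
  rw [h1, h2, Set.ncard_coe_finset, Set.ncard_coe_finset,
    ← Finset.sum_filter_add_sum_filter_not A Even]
  rw [Finset.sum_congr rfl (g := fun _ => (1 : ℂ)) (fun i hi => (Finset.mem_filter.1 hi).2.neg_one_pow),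
    Finset.sum_congr rfl (g := fun _ => (-1 : ℂ)) (fun i hi =>
      (Nat.not_even_iff_odd.1 (Finset.mem_filter.1 hi).2).neg_one_pow)]
  simp [sub_eq_add_neg]


open Classical in
theorem class_card (L : Type) [Field L] [Fintype L] (hchar : ringChar L ≠ 2)
    (e : ℤ) (he : e = 1 ∨ e = -1) :
    ((Finset.univ.filter (fun y : L => quadraticChar L y = e)).card : ℂ) =
      (Fintype.card L - 1) / 2 := by
  have h0 : ∑ y : L, (quadraticChar L y : ℂ) = 0 := by
    exact_mod_cast congrArg (Int.cast : ℤ → ℂ) (quadraticChar_sum_zero (F := L) hchar)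
  rw [Finset.card_filter]
  push_cast
  have h3 : ∀ y : L, (if quadraticChar L y = e then (1 : ℂ) else 0) =
      (1 + e * (quadraticChar L y : ℂ) - if y = 0 then 1 else 0) / 2 := by
    intro y
    by_cases hy : y = 0
    · subst hy
      rcases he with rfl | rfl <;> simp
    · rcases quadraticChar_dichotomy hy with h | h <;> rcases he with rfl | rfl <;>
        simp [h, hy, -quadraticChar_apply]
  simp only [h3]
  rw [← Finset.sum_div, Finset.sum_sub_distrib, Finset.sum_add_distrib, ← Finset.mul_sum, h0]
  simp

theorem prim_facts (L : Type) [Field L] [Fintype L] (hchar : ringChar L ≠ 2)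
    (ω : L) (hω : IsPrim L ω) : ω ≠ 0 ∧ ¬ IsSquare ω ∧ orderOf ω = Fintype.card L - 1 := by
  obtain ⟨a, ha⟩ := FiniteField.exists_nonsquare hchar
  have hns : ¬ IsSquare ω := by
    intro h
    have ha0 : a ≠ 0 := by rintro rfl; exact ha (IsSquare.zero)
    obtain ⟨n, rfl⟩ := hω a ha0
    exact ha (h.pow n)
  have h0 : ω ≠ 0 := by rintro rfl; exact hns (IsSquare.zero)
  refine ⟨h0, hns, ?_⟩
  have h1 : orderOf (Units.mk0 ω h0) = Nat.card Lˣ := by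
    apply orderOf_eq_card_of_forall_mem_powers
    intro x
    obtain ⟨n, hn⟩ := hω x x.ne_zero
    exact ⟨n, Units.ext (by simp [hn])⟩
  rw [← orderOf_units, Nat.card_units, Nat.card_eq_fintype_card] at h1
  simpa using h1

open Classical in
theorem cyc_iff (L : Type) [Field L] [Fintype L] 
    (ω : L) (hω : IsPrim L ω) (h0 : ω ≠ 0) (hns : ¬ IsSquare ω) (i : ℕ) (hi : i = 0 ∨ i = 1)
    (y : L) : y ∈ cyc L ω 2 i ↔ (y ≠ 0 ∧ quadraticChar L y = (-1) ^ i) := by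
  have hχ : quadraticChar L ω = -1 := quadraticChar_neg_one_iff_not_isSquare.2 hns
  constructor
  · rintro ⟨k, rfl⟩
    refine ⟨by positivity, ?_⟩
    simp [map_mul, map_pow, hχ, -quadraticChar_apply]
  · rintro ⟨hy, hy2⟩
    obtain ⟨n, rfl⟩ := hω y hy
    rw [map_pow, hχ] at hy2
    rcases hi with rfl | rfl
    · rw [pow_zero, neg_one_pow_eq_one_iff_even (by norm_num)] at hy2
      obtain ⟨k, rfl⟩ := hy2
      exact ⟨k, by rw [← pow_mul, ← pow_add]; congr 1; omega⟩
    · rw [pow_one, neg_one_pow_eq_neg_one_iff_odd (by norm_num)] at hy2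
      obtain ⟨k, rfl⟩ := hy2
      exact ⟨k, by rw [← pow_mul, ← pow_add]; congr 1; omega⟩

open Classical in
theorem base_char_one (q : ℕ) (hqo : Odd q)
    (K L : Type) [Field K] [Fintype K] [Field L] [Fintype L] [Algebra K L]
    (hK : Fintype.card K = q) (hL : Fintype.card L = q ^ 2) (hchar : ringChar L ≠ 2)
    (x : K) (hx : x ≠ 0) : quadraticChar L (algebraMap K L x) = 1 := by
  have hx' : algebraMap K L x ≠ 0 := by simpa using hx
  rw [quadraticChar_eq_pow_of_char_ne_two hchar hx']
  obtain ⟨m, hm⟩ := hqo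
  have h3 : q ^ 2 / 2 = (q - 1) * (m + 1) := by
    rw [hm, Nat.div_eq_iff (by norm_num)]
    simp only [Nat.add_sub_cancel]
    ring_nf
    omega
  have := FiniteField.pow_card_sub_one_eq_one x hx
  rw [hK] at this
  rw [hL, h3, pow_mul, ← map_pow, this]
  simp

/-- Lemma 4.2: character values of `E₀ = D₀ ∪ D₂ ∪ D₃` when exactly one of
`a, b` is zero. -/
theorem wilson_xiang_E0_char_one_zero
    (p s q : ℕ) (hp : p.Prime) (hpodd : p ≠ 2) (hs : 0 < s) (hq : q = p ^ s)
    (K L : Type) [Field K] [Fintype K] [Field L] [Fintype L] [Algebra K L] [CharP L p]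
    (hK : Fintype.card K = q) (hL : Fintype.card L = q ^ 2)
    (ω : L) (hω : IsPrim L ω)
    (c : ℕ) (hc : c < 2 * q + 2) (hcodd : Odd c)
    (I₁ I₂ J₁ J₂ : Set ℕ)
    (hI₁ : I₁ = {i | i < 2 * q + 2 ∧ Algebra.trace K L (ω ^ i) = 0})
    (hI₂ : I₂ = {i | i < 2 * q + 2 ∧ Algebra.trace K L (ω ^ i) ∈ sqSet K})
    (hJ₁ : J₁ = {i | i < 2 * q + 2 ∧ Algebra.trace K L (ω ^ (i + c)) = 0})
    (hJ₂ : J₂ = {i | i < 2 * q + 2 ∧ Algebra.trace K L (ω ^ (i + c)) ∈ sqSet K})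
    (X₁c X₃c : Set ℕ)
    (hX₁c : X₁c = (I₁ ∩ J₂) ∪ (I₂ ∩ J₁)) (hX₃c : X₃c = I₂ ∩ J₂)
    (τ : ℕ) (hτ : τ = if q % 4 = 3 then 0 else 1)
    (A B : Set ℕ) (hA : ∀ i ∈ A, i < 2 * q + 2) (hB : ∀ i ∈ B, i < 2 * q + 2)
    (hAB : A ∩ B = X₃c) (hABsym : (A \ B) ∪ (B \ A) = X₁c)
    (D₀ D₁ D₂ D₃ : Set (L × L))
    (hD₀ : D₀ = {w | ∃ y ∈ cyc L ω 2 τ, w = ((0 : L), y)})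
    (hD₁ : D₁ = {w | ∃ y ∈ cyc L ω 2 0, w = (y, (0 : L))})
    (hD₂ : D₂ = {w | ∃ x : K, x ≠ 0 ∧ ∃ y ∈ cyc L ω 2 0, ∃ i ∈ A,
      w = (algebraMap K L x * y, algebraMap K L x * y⁻¹ * ω ^ i)})
    (hD₃ : D₃ = {w | ∃ x : K, x ≠ 0 ∧ ∃ y ∈ cyc L ω 2 1, ∃ i ∈ B,
      w = (algebraMap K L x * y, algebraMap K L x * y⁻¹ * ω ^ i)})
    (hcardA : A.ncard = (q + 1) / 2) (hcardB : B.ncard = (q + 1) / 2)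
    (hpar : ((A ∩ {i | Even i}).ncard : ℤ) + (B ∩ {i | Odd i}).ncard =
      ((A ∩ {i | Odd i}).ncard : ℤ) + (B ∩ {i | Even i}).ncard
        - 2 * (-1) ^ ((q - 1) / 2))
    : ∀ a b : L, ((a = 0 ∧ b ≠ 0) ∨ (a ≠ 0 ∧ b = 0)) →
      ((a = 0 ∧ b ∈ cyc L ω 2 1) →
        psiSum p L a b (D₀ ∪ D₂ ∪ D₃) = (-3 * (q : ℂ) ^ 2 - 1) / 4) ∧
      (¬(a = 0 ∧ b ∈ cyc L ω 2 1) →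
        psiSum p L a b (D₀ ∪ D₂ ∪ D₃) = ((q : ℂ) ^ 2 - 1) / 4) := by
  classical
  intro a b hab
  have hqo : Odd q := by rw [hq]; exact (hp.odd_of_ne_two hpodd).pow
  have hchar : ringChar L ≠ 2 := by rw [ringChar.eq L p]; exact hpodd
  have hq1 : 1 < q := hK ▸ Fintype.one_lt_card
  obtain ⟨hω0, hns, hord⟩ := prim_facts L hchar ω hω
  rw [hL] at hord
  have hKχ := base_char_one q hqo K L hK hL hchar
  have hneg : quadraticChar L (-1) = 1 := by
    have := hKχ (-1) (neg_ne_zero.2 one_ne_zero)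
    rwa [map_neg, map_one] at this
  have hχω : quadraticChar L ω = -1 := quadraticChar_neg_one_iff_not_isSquare.2 hns
  obtain ⟨ψ, hψ, hprim, hsum⟩ := psiL_eq_addChar p hp L K
  have hGv := gauss_value q hqo K L hK hL hchar hKχ ψ hprim hsum
  have heta := eta_value L ψ hprim
  set G := ∑ y : L, (quadraticChar L y : ℂ) * ψ y with hG
  have hcyc := cyc_iff L ω hω hω0 hns
  have hτ01 : τ = 0 ∨ τ = 1 := by rw [hτ]; split_ifs <;> simp
  have hcyc0 : ∀ y, y ∈ cyc L ω 2 0 ↔ (y ≠ 0 ∧ quadraticChar L y = 1) := fun y => by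
    simpa only [pow_zero] using hcyc 0 (Or.inl rfl) y
  have hcyc1 : ∀ y, y ∈ cyc L ω 2 1 ↔ (y ≠ 0 ∧ quadraticChar L y = -1) := fun y => by
    simpa only [pow_one] using hcyc 1 (Or.inr rfl) y
  have hAf : A.Finite := (Set.finite_Iio (2 * q + 2)).subset hA
  have hBf : B.Finite := (Set.finite_Iio (2 * q + 2)).subset hB
  lift A to Finset ℕ using hAf
  lift B to Finset ℕ using hBf
  simp only [Finset.mem_coe] at hA hB hD₂ hD₃
  simp only [hcyc0] at hD₂
  simp only [hcyc1] at hD₃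
  simp only [hcyc τ hτ01] at hD₀
  rw [Set.ncard_coe_finset] at hcardA hcardB
  -- splitting the sum
  have hdisj1 : Disjoint (D₀ ∪ D₂) D₃ := by
    rw [Set.disjoint_left, hD₀, hD₂, hD₃]
    rintro w (⟨y, hy, rfl⟩ | ⟨x, hx, y, hy, i, hi, rfl⟩) ⟨x', hx', y', hy', i', hi', h⟩
    · have h1 := congrArg Prod.fst h
      simp [hx', hy'.1] at h1
    · have h1 := congrArg (fun z : L × L => quadraticChar L z.1) h
      simp only [map_mul, hKχ x hx, hKχ x' hx', hy.2, hy'.2] at h1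
      norm_num at h1
  have hdisj2 : Disjoint D₀ D₂ := by
    rw [Set.disjoint_left, hD₀, hD₂]
    rintro w ⟨y, hy, rfl⟩ ⟨x', hx', y', hy', i', hi', h⟩
    have h1 := congrArg Prod.fst h
    simp [hx', hy'.1] at h1
  have hsplit : psiSum p L a b (D₀ ∪ D₂ ∪ D₃) =
      ∑ᶠ z ∈ D₀, ψ (a * z.1 + b * z.2) + ∑ᶠ z ∈ D₂, ψ (a * z.1 + b * z.2) +
        ∑ᶠ z ∈ D₃, ψ (a * z.1 + b * z.2) := by
    unfold psiSum
    simp only [hψ]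
    rw [finsum_mem_union hdisj1 (Set.toFinite _) (Set.toFinite _),
      finsum_mem_union hdisj2 (Set.toFinite _) (Set.toFinite _)]
  have hsum0 : ∑ᶠ z ∈ D₀, ψ (a * z.1 + b * z.2) =
      ∑ y ∈ Finset.univ.filter (fun y : L => quadraticChar L y = (-1) ^ τ), ψ (b * y) := by
    have hD0' : D₀ = ((((Finset.univ.filter
        (fun y : L => quadraticChar L y = (-1) ^ τ)).image (fun y => ((0 : L), y)) :
          Finset (L × L))) : Set (L × L)) := by
      ext w
      rw [hD₀]
      simp only [Set.mem_ofPred_eq, Finset.coe_image, Set.mem_image, Finset.mem_coe,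
        Finset.mem_filter, Finset.mem_univ, true_and]
      constructor
      · rintro ⟨y, hy, rfl⟩; exact ⟨y, hy.2, rfl⟩
      · rintro ⟨y, hy, rfl⟩
        refine ⟨y, ⟨?_, hy⟩, rfl⟩
        rintro rfl
        rw [MulChar.map_zero] at hy
        exact pow_ne_zero τ (by norm_num : (-1 : ℤ) ≠ 0) hy.symm
    rw [hD0', finsum_mem_coe_finset, Finset.sum_image]
    · simp
    · intro y _ y' _ h
      exact congrArg Prod.snd h
  have hsum2 := double_cover q hqo K L hK hL hchar ω hω0 hord 1 A hA
    (fun z => ψ (a * z.1 + b * z.2)) D₂ hD₂ hneg (by norm_num)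
  have hsum3 := double_cover q hqo K L hK hL hchar ω hω0 hord (-1) B hB
    (fun z => ψ (a * z.1 + b * z.2)) D₃ hD₃ hneg (by norm_num)
  simp only at hsum2 hsum3
  have hcardK : ((Finset.univ.filter (fun x : K => x ≠ 0)).card : ℂ) = q - 1 := by
    rw [Finset.filter_ne' , Finset.card_erase_of_mem (Finset.mem_univ _), Finset.card_univ, hK,
      Nat.cast_sub hq1.le, Nat.cast_one]
  have hAC : (A.card : ℂ) = (q + 1) / 2 := by
    obtain ⟨m, hm⟩ := hqo
    rw [hcardA, hm, show (2 * m + 1 + 1) / 2 = m + 1 by omega]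
    push_cast; ring
  have hBC : (B.card : ℂ) = (q + 1) / 2 := by
    obtain ⟨m, hm⟩ := hqo
    rw [hcardB, hm, show (2 * m + 1 + 1) / 2 = m + 1 by omega]
    push_cast; ring
  have he1 : ∀ e : ℤ, (e = 1 ∨ e = -1) → e ≠ 0 := by rintro e (rfl | rfl) <;> norm_num
  rcases hab with ⟨ha, hb⟩ | ⟨ha, hb⟩
  · subst ha
    -- inner sums
    have hinner : ∀ e : ℤ, (e = 1 ∨ e = -1) → ∀ S : Finset ℕ,
        (∑ x ∈ Finset.univ.filter (fun x : K => x ≠ 0), ∑ i ∈ S,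
          ∑ y ∈ Finset.univ.filter (fun y : L => quadraticChar L y = e),
            ψ (0 * (algebraMap K L x * y) + b * (algebraMap K L x * y⁻¹ * ω ^ i))) =
        (q - 1) * ((-(S.card : ℂ) + e * quadraticChar L b * G * ∑ i ∈ S, (-1 : ℂ) ^ i) / 2) := by
      intro e he S
      rw [← hcardK, ← nsmul_eq_mul, ← Finset.sum_const]
      refine Finset.sum_congr rfl fun x hx => ?_
      have hx0 : x ≠ 0 := (Finset.mem_filter.1 hx).2
      have hx' : algebraMap K L x ≠ 0 := by simpa using hx0
      have h1 : ∀ i ∈ S, ∑ y ∈ Finset.univ.filter (fun y : L => quadraticChar L y = e),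
            ψ (0 * (algebraMap K L x * y) + b * (algebraMap K L x * y⁻¹ * ω ^ i)) =
            (-1 + e * quadraticChar L b * G * (-1 : ℂ) ^ i) / 2 := by
        intro i _
        have h2 := heta e he (b * algebraMap K L x * ω ^ i)
          (mul_ne_zero (mul_ne_zero hb hx') (pow_ne_zero _ hω0))
        rw [map_mul, map_mul, map_pow, hKχ x hx0, hχω] at h2
        push_cast at h2
        rw [Finset.sum_equiv (Equiv.inv L) (t := Finset.univ.filter
          (fun y : L => quadraticChar L y = e))
          (g := fun y => ψ (b * algebraMap K L x * ω ^ i * y)), h2]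
        · ring
        · intro y
          have : quadraticChar L y⁻¹ = quadraticChar L y := by
            by_cases hy : y = 0
            · simp [hy]
            · have h3 : quadraticChar L y⁻¹ * quadraticChar L y = 1 := by
                rw [← map_mul, inv_mul_cancel₀ hy, map_one]
              rcases quadraticChar_dichotomy hy with h | h <;> rw [h] at h3 ⊢ <;> linarith
          simp [this, -quadraticChar_apply]
        · intro y _
          congr 1
          simp only [Equiv.inv_apply]
          ring
      rw [Finset.sum_congr rfl h1, ← Finset.sum_div, Finset.sum_add_distrib, ← Finset.mul_sum]
      simp
    rw [hinner 1 (Or.inl rfl)] at hsum2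
    rw [hinner (-1) (Or.inr rfl)] at hsum3
    have hτe : ((-1 : ℤ) ^ τ) = 1 ∨ ((-1 : ℤ) ^ τ) = -1 := neg_one_pow_eq_or ℤ τ
    rw [heta _ hτe b hb] at hsum0
    rw [hsplit, hsum0, hsum2, hsum3, hAC, hBC, card_parity, card_parity]
    have hparC := congrArg (Int.cast : ℤ → ℂ) hpar
    push_cast at hparC ⊢
    have hετ : (-1 : ℂ) ^ τ = -(-1 : ℂ) ^ ((q - 1) / 2) := by
      obtain ⟨m, hm⟩ := hqo
      rw [show (q - 1) / 2 = m by omega, hτ]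
      split_ifs with h
      · have : Odd m := by rw [Nat.odd_iff]; omega
        rw [this.neg_one_pow]; norm_num
      · have : Even m := by rw [Nat.even_iff]; omega
        rw [this.neg_one_pow]; norm_num
    have hεε : (-1 : ℂ) ^ ((q - 1) / 2) * (-1 : ℂ) ^ ((q - 1) / 2) = 1 := by
      rw [← mul_pow]; norm_num
    rw [hετ, hGv]
    set ε := (-1 : ℂ) ^ ((q - 1) / 2) with hε
    set Ae : ℂ := (((A : Set ℕ) ∩ {i | Even i}).ncard : ℂ)
    set Ao : ℂ := (((A : Set ℕ) ∩ {i | Odd i}).ncard : ℂ)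
    set Be : ℂ := (((B : Set ℕ) ∩ {i | Even i}).ncard : ℂ)
    set Bo : ℂ := (((B : Set ℕ) ∩ {i | Odd i}).ncard : ℂ)
    have hAe : Ae = Ao + Be - 2 * ε - Bo := by linear_combination hparC
    constructor
    · rintro ⟨-, hb1⟩
      rw [((hcyc1 b).1 hb1).2, hAe]
      push_cast
      linear_combination (-(q : ℂ) / 2 - (q : ℂ) * (q - 1) / 2) * hεε
    · intro hb1
      have hb2 : quadraticChar L b = 1 := by
        rcases quadraticChar_dichotomy hb with h | h
        · exact h
        · exact absurd ⟨rfl, (hcyc1 b).2 ⟨hb, h⟩⟩ hb1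
      rw [hb2, hAe]
      push_cast
      linear_combination ((q : ℂ) / 2 + (q : ℂ) * (q - 1) / 2) * hεε
  · subst hb
    refine ⟨fun h => absurd h.1 ha, fun _ => ?_⟩
    have hinner : ∀ e : ℤ, (e = 1 ∨ e = -1) → ∀ S : Finset ℕ,
        (∑ x ∈ Finset.univ.filter (fun x : K => x ≠ 0), ∑ i ∈ S,
          ∑ y ∈ Finset.univ.filter (fun y : L => quadraticChar L y = e),
            ψ (a * (algebraMap K L x * y) + 0 * (algebraMap K L x * y⁻¹ * ω ^ i))) =
        (q - 1) * (S.card * ((-1 + e * quadraticChar L a * G) / 2)) := by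
      intro e he S
      rw [← hcardK, ← nsmul_eq_mul, ← nsmul_eq_mul, ← Finset.sum_const, ← Finset.sum_const]
      refine Finset.sum_congr rfl fun x hx => Finset.sum_congr rfl fun i _ => ?_
      have hx0 : x ≠ 0 := (Finset.mem_filter.1 hx).2
      have hx' : algebraMap K L x ≠ 0 := by simpa using hx0
      have h2 := heta e he (a * algebraMap K L x) (mul_ne_zero ha hx')
      rw [map_mul, hKχ x hx0, mul_one] at h2
      rw [← h2]
      refine Finset.sum_congr rfl fun y _ => ?_
      congr 1
      ring
    rw [hinner 1 (Or.inl rfl)] at hsum2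
    rw [hinner (-1) (Or.inr rfl)] at hsum3
    have hc := class_card L hchar ((-1) ^ τ) (neg_one_pow_eq_or ℤ τ)
    have h0 : ∑ y ∈ Finset.univ.filter (fun y : L => quadraticChar L y = (-1) ^ τ), ψ (0 * y) =
        ((q : ℂ) ^ 2 - 1) / 2 := by
      rw [hL] at hc
      push_cast at hc
      rw [← hc]
      simp
    rw [hsplit, hsum0, hsum2, hsum3, h0, hAC, hBC]
    push_cast
    ring

end
end

section
/- In the Wilson–Xiang setting, assume |A| = (q+3)/2, |B| = (q−1)/2 and |A_e| + |B_o| = |A_o| + |B_e|, and set E_1 = D_1 ∪ D_2 ∪ D_3. If (a,b) ∈ F_{q²} × F_{q²} and exactly one of a, b is zero, then ψ_{a,b}(E_1) = (−3q²−1)/4 if b = 0 and a ∈ C_{τ+1}^{(2,q²)}, and ψ_{a,b}(E_1) = (q²−1)/4 otherwise. -/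
noncomputable section

lemma wx_psi (p q : ℕ) (hp : p.Prime)
    (K L : Type) [Field K] [Fintype K] [Field L] [Fintype L] [Algebra K L] [CharP L p]
    (hK : Fintype.card K = q) :
    ∃ ψ : AddChar L ℂ, (∀ x, psiL p L x = ψ x) ∧ ψ ≠ 1 ∧
      (∀ y : L, Algebra.trace K L y = 0 → ∑ x : K, ψ (algebraMap K L x * y) = q) ∧
      (∀ y : L, Algebra.trace K L y ≠ 0 → ∑ x : K, ψ (algebraMap K L x * y) = 0) := by
  have : Fact p.Prime := ⟨hp⟩
  have : CharP K p := (RingHom.charP_iff (algebraMap K L) (algebraMap K L).injective p).mpr ‹_›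
  let : Algebra (ZMod p) L := ZMod.algebra L p
  let : Algebra (ZMod p) K := ZMod.algebra K p
  have : IsScalarTower (ZMod p) K L := IsScalarTower.of_algebraMap_eq' (Subsingleton.elim _ _)
  let ψ : AddChar L ℂ := (ZMod.stdAddChar (N := p)).compAddMonoidHom
    (Algebra.trace (ZMod p) L).toAddMonoidHom
  have hψ : ∀ x, ψ x = ZMod.stdAddChar (Algebra.trace (ZMod p) L x) := fun x => rfl
  have hψ1 : ∀ x, ψ x = 1 ↔ Algebra.trace (ZMod p) L x = 0 := by
    intro x
    rw [hψ, ← ZMod.injective_stdAddChar.eq_iff, AddChar.map_zero_eq_one]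
  have hfac : ∀ (x : K) (y : L), Algebra.trace (ZMod p) L (algebraMap K L x * y) =
      Algebra.trace (ZMod p) K (x * Algebra.trace K L y) := by
    intro x y
    rw [← Algebra.trace_trace (S := K), ← Algebra.smul_def, map_smul, smul_eq_mul]
  refine ⟨ψ, ?_, ?_, ?_, ?_⟩
  · intro x
    rw [hψ]
    unfold psiL zetaP
    have h := ZMod.stdAddChar_coe (N := p) ((Algebra.trace (ZMod p) L x).val : ℤ)
    rw [Int.cast_natCast, ZMod.natCast_zmod_val] at h
    rw [h, ← Complex.exp_nat_mul]
    congr 1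
    push_cast
    ring
  · intro h
    obtain ⟨x, hx⟩ := Algebra.trace_surjective (ZMod p) L 1
    have := (hψ1 x).1 (by rw [h]; rfl)
    rw [hx] at this
    exact one_ne_zero this
  · intro y hy
    rw [Finset.sum_congr rfl (fun x _ => (hψ1 _).2 (by rw [hfac, hy]; simp))]
    simp [hK]
  · intro y hy
    let φ : AddChar K ℂ := ψ.compAddMonoidHom
      ((AddMonoidHom.mulRight y).comp (algebraMap K L).toAddMonoidHom)
    have hφ : ∀ x, ψ (algebraMap K L x * y) = φ x := fun x => rfl
    simp_rw [hφ]
    apply AddChar.sum_eq_zero_of_ne_one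
    intro h
    obtain ⟨x, hx⟩ := Algebra.trace_surjective (ZMod p) K 1
    have h1 : φ (x * (Algebra.trace K L y)⁻¹) = 1 := by rw [h]; rfl
    rw [← hφ, hψ1, hfac, inv_mul_cancel_right₀ hy, hx] at h1
    exact one_ne_zero h1

open Classical in
lemma wx_char_K (q : ℕ) (hodd : Odd q)
    (K L : Type) [Field K] [Fintype K] [Field L] [Fintype L] [Algebra K L]
    (hF : ringChar L ≠ 2)
    (hK : Fintype.card K = q) (hL : Fintype.card L = q ^ 2) (x : K) (hx : x ≠ 0) :
    quadraticChar L (algebraMap K L x) = 1 := by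
  have hx' : algebraMap K L x ≠ 0 := by simpa using hx
  rw [quadraticChar_eq_pow_of_char_ne_two hF hx', if_pos]
  obtain ⟨m, rfl⟩ := hodd
  have : Fintype.card L / 2 = (Fintype.card K - 1) * (m + 1) := by
    rw [hL, hK]
    have : (2 * m + 1) ^ 2 = 2 * (2 * m * (m + 1)) + 1 := by ring
    rw [this]
    simp only [Nat.add_sub_cancel]; omega
  rw [this, pow_mul, ← map_pow, FiniteField.pow_card_sub_one_eq_one x hx]
  simp

open Classical in
lemma wx_char_tr (q : ℕ) (hodd : Odd q)
    (K L : Type) [Field K] [Fintype K] [Field L] [Fintype L] [Algebra K L]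
    (hF : ringChar L ≠ 2)
    (hK : Fintype.card K = q) (hL : Fintype.card L = q ^ 2) (y : L) (hy : y ≠ 0)
    (ht : Algebra.trace K L y = 0) :
    quadraticChar L y = (-1) ^ ((q + 1) / 2) := by
  have hr : Module.finrank K L = 2 := by
    have h := Module.card_eq_pow_finrank (K := K) (V := L)
    rw [hL, hK] at h
    exact (Nat.pow_right_injective (by
      have := Fintype.one_lt_card (α := K); omega) h).symm
  have h := FiniteField.algebraMap_trace_eq_sum_pow K L y
  rw [ht, hr, Nat.card_eq_fintype_card, hK] at h
  simp only [map_zero, Finset.sum_range_succ, Finset.sum_range_zero, pow_zero, pow_one,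
    zero_add] at h
  have h2 := quadraticChar_eq_pow_of_char_ne_two' hF y
  obtain ⟨m, rfl⟩ := hodd
  have hy1 : y ^ (2 * m) = -1 := by
    have : y * (y ^ (2 * m) + 1) = 0 := by rw [h]; ring
    rcases mul_eq_zero.1 this with h | h
    · exact absurd h hy
    · exact eq_neg_of_add_eq_zero_left h
  have : Fintype.card L / 2 = (2 * m) * (m + 1) := by
    rw [hL]
    have : (2 * m + 1) ^ 2 = 2 * (2 * m * (m + 1)) + 1 := by ring
    omega
  rw [this, pow_mul, hy1] at h2
  have e : (2 * m + 1 + 1) / 2 = m + 1 := by omega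
  rw [e]
  have hne : (-1 : L) ≠ 1 := Ring.neg_one_ne_one_of_char_ne_two hF
  rcases quadraticChar_dichotomy hy with h3 | h3 <;>
  rcases neg_one_pow_eq_or ℤ (m + 1) with h4 | h4 <;>
  rcases neg_one_pow_eq_or L (m + 1) with h5 | h5 <;> rw [h3, h4] <;> exfalso <;>
  · have h6 : (((-1) ^ (m + 1) : ℤ) : L) = (-1) ^ (m + 1) := by push_cast; rfl
    rw [h3] at h2
    rw [h4, ← h2] at h6
    simp [hne, hne.symm] at h6

open Classical in
lemma wx_gauss (q : ℕ) (hodd : Odd q)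
    (K L : Type) [Field K] [Fintype K] [Field L] [Fintype L] [Algebra K L]
    (hF : ringChar L ≠ 2)
    (hK : Fintype.card K = q) (hL : Fintype.card L = q ^ 2)
    (ψ : AddChar L ℂ) (hψ : ψ ≠ 1)
    (h0 : ∀ y : L, Algebra.trace K L y = 0 → ∑ x : K, ψ (algebraMap K L x * y) = q)
    (h1 : ∀ y : L, Algebra.trace K L y ≠ 0 → ∑ x : K, ψ (algebraMap K L x * y) = 0) :
    ∑ y : L, (quadraticChar L y : ℂ) * ψ y = q * (-1) ^ ((q + 1) / 2) := by
  have hq1 : 1 < q := by rw [← hK]; exact Fintype.one_lt_card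
  have hqC : (q : ℂ) ≠ 0 := by exact_mod_cast (by omega : q ≠ 0)
  have hqC1 : (q : ℂ) - 1 ≠ 0 := by
    rw [sub_ne_zero]; exact_mod_cast (by omega : q ≠ 1)
  have hs : ∀ y : L, ∑ x : K, ψ (algebraMap K L x * y) =
      if Algebra.trace K L y = 0 then (q : ℂ) else 0 := by
    intro y; split_ifs with h
    · exact h0 y h
    · exact h1 y h
  -- shifts
  have hsh : ∀ (f : L → ℂ) (x : K), x ≠ 0 →
      ∑ y : L, f (algebraMap K L x * y) = ∑ y, f y := by
    intro f x hx
    have hx' : algebraMap K L x ≠ 0 := by simpa using hx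
    exact Equiv.sum_comp (Equiv.mulLeft₀ _ hx') f
  have hψs : ∑ y, ψ y = 0 := AddChar.sum_eq_zero_of_ne_one hψ
  have hχs : ∑ y : L, (quadraticChar L y : ℂ) = 0 := by
    exact_mod_cast quadraticChar_sum_zero hF
  -- count
  have hcount : ∑ y : L, (if Algebra.trace K L y = 0 then (1 : ℂ) else 0) = q := by
    have e1 : ∑ y : L, ∑ x : K, ψ (algebraMap K L x * y) = (q : ℂ) ^ 2 := by
      rw [Finset.sum_comm, ← Finset.add_sum_erase _ _ (Finset.mem_univ (0 : K)),
        Finset.sum_eq_zero (s := Finset.univ.erase (0 : K))]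
      · simp [hL]
      · intro x hx
        rw [hsh ψ x (Finset.ne_of_mem_erase hx), hψs]
    simp_rw [hs] at e1
    have e2 : ∀ y : L, (if Algebra.trace K L y = 0 then (q : ℂ) else 0) =
      q * (if Algebra.trace K L y = 0 then (1 : ℂ) else 0) := by intro y; split_ifs <;> simp
    simp_rw [e2] at e1
    rw [← Finset.mul_sum, sq] at e1
    exact mul_left_cancel₀ hqC e1
  have e1 : ∑ y : L, (quadraticChar L y : ℂ) * ∑ x : K, ψ (algebraMap K L x * y) =
      ((q : ℂ) - 1) * ∑ y : L, (quadraticChar L y : ℂ) * ψ y := by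
    simp_rw [Finset.mul_sum]
    rw [Finset.sum_comm, ← Finset.add_sum_erase _ _ (Finset.mem_univ (0 : K)),
      Finset.sum_congr (s₁ := Finset.univ.erase (0 : K)) rfl
        (g := fun _ => ∑ y : L, (quadraticChar L y : ℂ) * ψ y)]
    · simp only [Finset.sum_const, Finset.card_erase_of_mem (Finset.mem_univ _),
        Finset.card_univ, hK, map_zero, zero_mul, AddChar.map_zero_eq_one, mul_one, hχs]
      rw [nsmul_eq_mul, Nat.cast_sub hq1.le]
      simp [Finset.mul_sum]
    · intro x hx
      have hx0 := Finset.ne_of_mem_erase hx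
      rw [← hsh (fun y => (quadraticChar L y : ℂ) * ψ y) x hx0]
      refine Finset.sum_congr rfl fun y _ => ?_
      rw [map_mul (quadraticChar L), wx_char_K q hodd K L hF hK hL x hx0, one_mul]
  have e2 : ∑ y : L, (quadraticChar L y : ℂ) * ∑ x : K, ψ (algebraMap K L x * y) =
      q * (-1) ^ ((q + 1) / 2) * (q - 1) := by
    have : ∀ y : L, (quadraticChar L y : ℂ) * ∑ x : K, ψ (algebraMap K L x * y) =
      q * (-1) ^ ((q + 1) / 2) * ((if Algebra.trace K L y = 0 then (1 : ℂ) else 0) -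
        if y = 0 then 1 else 0) := by
      intro y
      rw [hs]
      by_cases hy : y = 0
      · subst hy; simp
      · by_cases ht : Algebra.trace K L y = 0
        · rw [wx_char_tr q hodd K L hF hK hL y hy ht]
          simp [ht, hy]; ring
        · simp [ht, hy]
    simp_rw [this]
    rw [← Finset.mul_sum, Finset.sum_sub_distrib, hcount]
    simp
  rw [e1] at e2
  apply mul_left_cancel₀ hqC1
  rw [e2]; ring

open Classical in
lemma wx_period (L : Type) [Field L] [Fintype L]
    (ψ : AddChar L ℂ) (hψ : ψ ≠ 1) (G : ℂ)
    (hG : ∑ y : L, (quadraticChar L y : ℂ) * ψ y = G) (a : L) (ha : a ≠ 0)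
    (ε : ℤ) (hε : ε = 1 ∨ ε = -1) :
    ∑ y ∈ Finset.univ.filter (fun y : L => quadraticChar L y = ε), ψ (a * y) =
      (-1 + ε * quadraticChar L a * G) / 2 := by
  have hψs : ∑ y, ψ (a * y) = 0 := by
    rw [← AddChar.sum_eq_zero_of_ne_one hψ]
    exact Equiv.sum_comp (Equiv.mulLeft₀ _ ha) ψ
  have hGs : ∑ y : L, (quadraticChar L y : ℂ) * ψ (a * y) = quadraticChar L a * G := by
    rw [← hG, ← Equiv.sum_comp (Equiv.mulLeft₀ _ ha)
      (fun y : L => (quadraticChar L y : ℂ) * ψ y), Finset.mul_sum]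
    refine Finset.sum_congr rfl fun y _ => ?_
    have h := quadraticChar_sq_one ha
    have h' : (quadraticChar L a : ℂ) ^ 2 = 1 := by exact_mod_cast h
    change _ = (quadraticChar L a : ℂ) * ((quadraticChar L (a * y) : ℂ) * ψ (a * y))
    rw [map_mul (quadraticChar L), Int.cast_mul]
    linear_combination (-(quadraticChar L y : ℂ) * ψ (a * y)) * h'
  have key : ∀ y : L, (if quadraticChar L y = ε then ψ (a * y) else 0) =
      (1/2) * ψ (a * y) + (ε / 2) * ((quadraticChar L y : ℂ) * ψ (a * y))
        - if y = 0 then 1 / 2 else 0 := by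
    intro y
    by_cases hy : y = 0
    · subst hy
      rcases hε with rfl | rfl <;> simp
    · rcases hε with rfl | rfl <;> rcases quadraticChar_dichotomy hy with h | h <;>
        simp [h, hy] <;> ring
  rw [Finset.sum_filter]
  simp_rw [key]
  rw [Finset.sum_sub_distrib, Finset.sum_add_distrib, ← Finset.mul_sum, ← Finset.mul_sum, hψs, hGs]
  simp
  ring

lemma wx_omega_ne (L : Type) [Field L] [Fintype L] (hF : ringChar L ≠ 2)
    (ω : L) (hω : IsPrim L ω) : ω ≠ 0 := by
  rintro rfl
  obtain ⟨n, hn⟩ := hω (-1) (by simp)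
  rcases Nat.eq_zero_or_pos n with rfl | h
  · rw [pow_zero] at hn
    exact Ring.neg_one_ne_one_of_char_ne_two hF hn
  · rw [zero_pow h.ne'] at hn
    simp at hn

lemma wx_order (L : Type) [Field L] [Fintype L] (hF : ringChar L ≠ 2)
    (ω : L) (hω : IsPrim L ω) : orderOf ω = Fintype.card L - 1 := by
  classical
  have h0 := wx_omega_ne L hF ω hω
  have h := orderOf_eq_card_of_forall_mem_powers (g := Units.mk0 ω h0) (by
    intro x
    obtain ⟨n, hn⟩ := hω x x.ne_zero
    exact ⟨n, by ext; simp [hn]⟩)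
  rw [← orderOf_units, Units.val_mk0] at h
  rw [h, Nat.card_eq_fintype_card, Fintype.card_units]

open Classical in
lemma wx_char_omega (L : Type) [Field L] [Fintype L] (hF : ringChar L ≠ 2)
    (ω : L) (hω : IsPrim L ω) : quadraticChar L ω = -1 := by
  have h0 := wx_omega_ne L hF ω hω
  rcases quadraticChar_dichotomy h0 with h | h
  · exfalso
    obtain ⟨a, ha⟩ := quadraticChar_exists_neg_one' hF
    obtain ⟨n, hn⟩ := hω a a.ne_zero
    rw [hn, map_pow, h, one_pow] at ha
    norm_num at ha
  · exact h

open Classical in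
lemma wx_cyc (L : Type) [Field L] [Fintype L] (hF : ringChar L ≠ 2)
    (ω : L) (hω : IsPrim L ω) (i : ℕ) (x : L) :
    x ∈ cyc L ω 2 i ↔ quadraticChar L x = (-1) ^ i := by
  have hχ := wx_char_omega L hF ω hω
  constructor
  · rintro ⟨k, rfl⟩
    rw [map_mul, map_pow, map_pow, map_pow, hχ]
    norm_num
  · intro h
    have hx : x ≠ 0 := by
      rintro rfl
      rw [MulChar.map_zero] at h
      exact pow_ne_zero i (by norm_num : (-1 : ℤ) ≠ 0) h.symm
    obtain ⟨n, rfl⟩ := hω x hx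
    rw [map_pow, hχ] at h
    have hc : Fintype.card L % 2 = 1 := FiniteField.odd_card_of_char_ne_two hF
    have hc1 : 1 < Fintype.card L := Fintype.one_lt_card
    obtain ⟨m, hm⟩ : ∃ m, Fintype.card L - 1 = 2 * m := ⟨(Fintype.card L - 1) / 2, by omega⟩
    have hω1 : ω ^ (2 * m) = 1 := by
      rw [← hm]; exact FiniteField.pow_card_sub_one_eq_one ω (wx_omega_ne L hF ω hω)
    have hpar : n % 2 = i % 2 := by
      rcases Nat.even_or_odd n with h1 | h1 <;> rcases Nat.even_or_odd i with h2 | h2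
      · rw [Nat.even_iff] at h1 h2; omega
      · rw [h1.neg_one_pow, h2.neg_one_pow] at h; norm_num at h
      · rw [h1.neg_one_pow, h2.neg_one_pow] at h; norm_num at h
      · rw [Nat.odd_iff] at h1 h2; omega
    have hmi : i ≤ m * i := Nat.le_mul_of_pos_left i (by omega)
    refine ⟨(n + 2 * (m * i) - i) / 2, ?_⟩
    rw [← pow_mul, ← pow_add]
    have : i + 2 * ((n + 2 * (m * i) - i) / 2) = n + 2 * m * i := by
      rw [mul_assoc]; omega
    rw [this, pow_add, pow_mul ω (2 * m), hω1, one_pow, mul_one]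

open Classical in
lemma wx_double (q : ℕ) (hodd : Odd q)
    (K L : Type) [Field K] [Fintype K] [Field L] [Fintype L] [Algebra K L]
    (hF : ringChar L ≠ 2)
    (hK : Fintype.card K = q) (hL : Fintype.card L = q ^ 2)
    (ω : L) (hω : IsPrim L ω) (e : ℕ) (S : Finset ℕ) (hS : ∀ i ∈ S, i < 2 * q + 2)
    (D : Set (L × L))
    (hD : D = {w | ∃ x : K, x ≠ 0 ∧ ∃ y ∈ cyc L ω 2 e, ∃ i ∈ S,
      w = (algebraMap K L x * y, algebraMap K L x * y⁻¹ * ω ^ i)}) (g : L × L → ℂ) :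
    2 * ∑ᶠ z ∈ D, g z = ∑ i ∈ S, ∑ x ∈ Finset.univ.erase (0 : K),
      ∑ y ∈ Finset.univ.filter (fun y : L => quadraticChar L y = (-1) ^ e),
        g (algebraMap K L x * y, algebraMap K L x * y⁻¹ * ω ^ i) := by
  set Y := Finset.univ.filter (fun y : L => quadraticChar L y = (-1) ^ e) with hY
  let f : ℕ × K × L → L × L :=
    fun t => (algebraMap K L t.2.1 * t.2.2, algebraMap K L t.2.1 * t.2.2⁻¹ * ω ^ t.1)
  set T := S ×ˢ (Finset.univ.erase (0 : K)) ×ˢ Y with hT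
  have hω0 := wx_omega_ne L hF ω hω
  have hY0 : ∀ y ∈ Y, y ≠ 0 := by
    rintro y hy rfl
    rw [hY, Finset.mem_filter, MulChar.map_zero] at hy
    exact pow_ne_zero e (by norm_num : (-1 : ℤ) ≠ 0) hy.2.symm
  have hneg : quadraticChar L (-1) = 1 := by
    have := wx_char_K q hodd K L hF hK hL (-1) (by simp)
    simpa using this
  have hYn : ∀ y ∈ Y, -y ∈ Y := by
    intro y hy
    rw [hY, Finset.mem_filter] at hy ⊢
    refine ⟨Finset.mem_univ _, ?_⟩
    rw [← hy.2, ← one_mul (quadraticChar L y), ← hneg, ← map_mul, neg_one_mul]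
  have hDT : D = ↑(T.image f) := by
    ext w
    rw [hD]
    simp only [Set.mem_ofPred_eq, Finset.coe_image, Set.mem_image, Finset.mem_coe, hT,
      Finset.mem_product, Finset.mem_erase, Finset.mem_univ, and_true, hY, Finset.mem_filter,
      true_and, wx_cyc L hF ω hω, f]
    constructor
    · rintro ⟨x, hx, y, hy, i, hi, rfl⟩
      exact ⟨(i, x, y), ⟨hi, hx, hy⟩, rfl⟩
    · rintro ⟨⟨i, x, y⟩, ⟨hi, hx, hy⟩, rfl⟩
      exact ⟨x, hx, y, hy, i, hi, rfl⟩
  have hinj : ∀ t ∈ T, ∀ u ∈ T, f u = f t → u = t ∨ u = (t.1, -t.2.1, -t.2.2) := by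
    rintro ⟨i, x, y⟩ ht ⟨j, x', y'⟩ hu h
    simp only [hT, Finset.mem_product, Finset.mem_erase, Finset.mem_univ, and_true] at ht hu
    simp only [f, Prod.mk.injEq] at h
    obtain ⟨h1, h2⟩ := h
    have hy := hY0 _ ht.2.2
    have hy' := hY0 _ hu.2.2
    have h3 : algebraMap K L x' ^ 2 * ω ^ j = algebraMap K L x ^ 2 * ω ^ i := by
      have : (algebraMap K L x' * y') * (algebraMap K L x' * y'⁻¹ * ω ^ j) =
        (algebraMap K L x * y) * (algebraMap K L x * y⁻¹ * ω ^ i) := by rw [h1, h2]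
      field_simp at this
      linear_combination this
    have hij : j = i := by
      obtain ⟨m, rfl⟩ := hodd
      have hm : 0 < m := by
        have := Fintype.one_lt_card (α := K)
        omega
      have hp : ∀ z : K, z ≠ 0 → (algebraMap K L z ^ 2) ^ m = 1 := by
        intro z hz
        have := FiniteField.pow_card_sub_one_eq_one z hz
        rw [hK, Nat.add_sub_cancel] at this
        rw [← pow_mul, ← map_pow, this, map_one]
      have h4 := congrArg (· ^ m) h3
      simp only [mul_pow, hp x ht.2.1, hp x' hu.2.1, one_mul, ← pow_mul] at h4
      have hlt : ∀ k ∈ S, k * m ∈ Set.Iio (orderOf ω) := by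
        intro k hk
        rw [wx_order L hF ω hω, hL, Set.mem_Iio]
        have h5 := hS k hk
        have h6 : (2 * m + 1) ^ 2 - 1 = (2 * (2 * m + 1) + 2) * m := by
          have : (2 * m + 1) ^ 2 = (2 * (2 * m + 1) + 2) * m + 1 := by ring
          omega
        rw [h6]
        exact Nat.mul_lt_mul_of_pos_right h5 hm
      exact Nat.eq_of_mul_eq_mul_right hm
        (pow_injOn_Iio_orderOf (hlt j hu.1) (hlt i ht.1) h4)
    subst hij
    have h5 : algebraMap K L x' ^ 2 = algebraMap K L x ^ 2 :=
      mul_right_cancel₀ (pow_ne_zero j hω0) h3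
    rw [← map_pow, ← map_pow] at h5
    have h6 := (algebraMap K L).injective h5
    have hx0 : algebraMap K L x ≠ 0 := by simpa using ht.2.1
    rcases sq_eq_sq_iff_eq_or_eq_neg.1 h6 with rfl | rfl
    · left
      rw [mul_left_cancel₀ hx0 h1]
    · right
      have : y' = -y := by
        apply mul_left_cancel₀ hx0
        rw [map_neg] at h1
        linear_combination -h1
      rw [this]
  have hfib : ∀ b ∈ T.image f, (T.filter (fun t => f t = b)).card = 2 := by
    intro b hb
    obtain ⟨t, ht, rfl⟩ := Finset.mem_image.1 hb
    have : T.filter (fun u => f u = f t) = {t, (t.1, -t.2.1, -t.2.2)} := by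
      ext u
      rw [Finset.mem_filter, Finset.mem_insert, Finset.mem_singleton]
      constructor
      · rintro ⟨hu, h⟩
        exact hinj t ht u hu h
      · rintro (rfl | rfl)
        · exact ⟨ht, rfl⟩
        · constructor
          · simp only [hT, Finset.mem_product, Finset.mem_erase, Finset.mem_univ, and_true] at ht ⊢
            exact ⟨ht.1, by simpa using ht.2.1, hYn _ ht.2.2⟩
          · simp [f, inv_neg]
    rw [this, Finset.card_pair]
    intro h
    have h1 : t.2.2 = -t.2.2 := congrArg (fun u => u.2.2) h
    have ht2 : t.2.2 ≠ 0 := by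
      simp only [hT, Finset.mem_product] at ht
      exact hY0 _ ht.2.2
    exact ht2 ((Ring.eq_self_iff_eq_zero_of_char_ne_two hF).1 h1.symm)
  rw [hDT, finsum_mem_coe_finset]
  have hR : ∑ i ∈ S, ∑ x ∈ Finset.univ.erase (0 : K), ∑ y ∈ Y,
      g (algebraMap K L x * y, algebraMap K L x * y⁻¹ * ω ^ i) = ∑ t ∈ T, g (f t) := by
    rw [hT, Finset.sum_product]
    refine Finset.sum_congr rfl fun i _ => ?_
    rw [Finset.sum_product]
  rw [hR, Finset.sum_comp g f, Finset.mul_sum]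
  refine Finset.sum_congr rfl fun b hb => ?_
  rw [hfib b hb]
  simp

/-- Lemma 4.3: character values of `E₁ = D₁ ∪ D₂ ∪ D₃` when exactly one of
`a, b` is zero. -/
theorem wilson_xiang_E1_char_one_zero
    (p s q : ℕ) (hp : p.Prime) (hpodd : p ≠ 2) (hs : 0 < s) (hq : q = p ^ s)
    (K L : Type) [Field K] [Fintype K] [Field L] [Fintype L] [Algebra K L] [CharP L p]
    (hK : Fintype.card K = q) (hL : Fintype.card L = q ^ 2)
    (ω : L) (hω : IsPrim L ω)
    (c : ℕ) (hc : c < 2 * q + 2) (hcodd : Odd c)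
    (I₁ I₂ J₁ J₂ : Set ℕ)
    (hI₁ : I₁ = {i | i < 2 * q + 2 ∧ Algebra.trace K L (ω ^ i) = 0})
    (hI₂ : I₂ = {i | i < 2 * q + 2 ∧ Algebra.trace K L (ω ^ i) ∈ sqSet K})
    (hJ₁ : J₁ = {i | i < 2 * q + 2 ∧ Algebra.trace K L (ω ^ (i + c)) = 0})
    (hJ₂ : J₂ = {i | i < 2 * q + 2 ∧ Algebra.trace K L (ω ^ (i + c)) ∈ sqSet K})
    (X₁c X₃c : Set ℕ)
    (hX₁c : X₁c = (I₁ ∩ J₂) ∪ (I₂ ∩ J₁)) (hX₃c : X₃c = I₂ ∩ J₂)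
    (τ : ℕ) (hτ : τ = if q % 4 = 3 then 0 else 1)
    (A B : Set ℕ) (hA : ∀ i ∈ A, i < 2 * q + 2) (hB : ∀ i ∈ B, i < 2 * q + 2)
    (hAB : A ∩ B = X₃c) (hABsym : (A \ B) ∪ (B \ A) = X₁c)
    (D₀ D₁ D₂ D₃ : Set (L × L))
    (hD₀ : D₀ = {w | ∃ y ∈ cyc L ω 2 τ, w = ((0 : L), y)})
    (hD₁ : D₁ = {w | ∃ y ∈ cyc L ω 2 0, w = (y, (0 : L))})
    (hD₂ : D₂ = {w | ∃ x : K, x ≠ 0 ∧ ∃ y ∈ cyc L ω 2 0, ∃ i ∈ A,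
      w = (algebraMap K L x * y, algebraMap K L x * y⁻¹ * ω ^ i)})
    (hD₃ : D₃ = {w | ∃ x : K, x ≠ 0 ∧ ∃ y ∈ cyc L ω 2 1, ∃ i ∈ B,
      w = (algebraMap K L x * y, algebraMap K L x * y⁻¹ * ω ^ i)})
    (hcardA : A.ncard = (q + 3) / 2) (hcardB : B.ncard = (q - 1) / 2)
    (hpar : (A ∩ {i | Even i}).ncard + (B ∩ {i | Odd i}).ncard =
      (A ∩ {i | Odd i}).ncard + (B ∩ {i | Even i}).ncard)
    : ∀ a b : L, ((a = 0 ∧ b ≠ 0) ∨ (a ≠ 0 ∧ b = 0)) →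
      ((b = 0 ∧ a ∈ cyc L ω 2 (τ + 1)) →
        psiSum p L a b (D₁ ∪ D₂ ∪ D₃) = (-3 * (q : ℂ) ^ 2 - 1) / 4) ∧
      (¬(b = 0 ∧ a ∈ cyc L ω 2 (τ + 1)) →
        psiSum p L a b (D₁ ∪ D₂ ∪ D₃) = ((q : ℂ) ^ 2 - 1) / 4) := by
  classical
  have hpo : Odd p := hp.odd_of_ne_two hpodd
  have hodd : Odd q := hq ▸ hpo.pow
  have hF : ringChar L ≠ 2 := by rw [ringChar.eq L p]; exact hpodd
  obtain ⟨ψ, hψ, hψ1, h0, h1⟩ := wx_psi p q hp K L hK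
  have hG := wx_gauss q hodd K L hF hK hL ψ hψ1 h0 h1
  have hω0 := wx_omega_ne L hF ω hω
  have hχω := wx_char_omega L hF ω hω
  obtain ⟨A, rfl⟩ := Set.Finite.exists_finset_coe
    (Set.Finite.subset (Set.finite_Iio (2 * q + 2)) hA)
  obtain ⟨B, rfl⟩ := Set.Finite.exists_finset_coe
    (Set.Finite.subset (Set.finite_Iio (2 * q + 2)) hB)
  have hAd := wx_double q hodd K L hF hK hL ω hω 0 A hA D₂ hD₂
  have hBd := wx_double q hodd K L hF hK hL ω hω 1 B hB D₃ hD₃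
  have hc0 : ∀ y : L, y ∈ cyc L ω 2 0 → y ≠ 0 ∧ quadraticChar L y = 1 := by
    intro y hy
    rw [wx_cyc L hF ω hω, pow_zero] at hy
    refine ⟨?_, hy⟩
    rintro rfl
    rw [MulChar.map_zero] at hy
    norm_num at hy
  have hc1 : ∀ y : L, y ∈ cyc L ω 2 1 → y ≠ 0 ∧ quadraticChar L y = -1 := by
    intro y hy
    rw [wx_cyc L hF ω hω, pow_one] at hy
    refine ⟨?_, hy⟩
    rintro rfl
    rw [MulChar.map_zero] at hy
    norm_num at hy
  have d12 : Disjoint D₁ D₂ := by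
    rw [Set.disjoint_left, hD₁, hD₂]
    rintro w ⟨y, hy, rfl⟩ ⟨x, hx, y', hy', i, hi, h⟩
    rw [Prod.mk.injEq] at h
    have := (hc0 y' hy').1
    have h2 := h.2.symm
    simp [hx, this, hω0] at h2
  have d3 : Disjoint (D₁ ∪ D₂) D₃ := by
    rw [Set.disjoint_left, hD₁, hD₂, hD₃]
    rintro w (⟨y, hy, rfl⟩ | ⟨x, hx, y, hy, i, hi, rfl⟩) ⟨x', hx', y', hy', j, hj, h⟩
    · rw [Prod.mk.injEq] at h
      have := (hc1 y' hy').1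
      have h2 := h.2.symm
      simp [hx', this, hω0] at h2
    · rw [Prod.mk.injEq] at h
      have h2 := congrArg (quadraticChar L) h.1
      rw [map_mul, map_mul, wx_char_K q hodd K L hF hK hL x hx,
        wx_char_K q hodd K L hF hK hL x' hx', (hc0 y hy).2, (hc1 y' hy').2] at h2
      norm_num at h2
  have hunion : ∀ a b : L, psiSum p L a b (D₁ ∪ D₂ ∪ D₃) =
      psiSum p L a b D₁ + psiSum p L a b D₂ + psiSum p L a b D₃ := by
    intro a b
    unfold psiSum
    rw [finsum_mem_union d3 (Set.toFinite _) (Set.toFinite _),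
      finsum_mem_union d12 (Set.toFinite _) (Set.toFinite _)]
  have hD1s : ∀ a b : L, psiSum p L a b D₁ =
      ∑ y ∈ Finset.univ.filter (fun y : L => quadraticChar L y = 1), ψ (a * y) := by
    intro a b
    have : D₁ = ↑((Finset.univ.filter (fun y : L => quadraticChar L y = 1)).image
        (fun y => (y, (0 : L)))) := by
      ext w
      rw [hD₁]
      simp only [Set.mem_ofPred_eq, Finset.coe_image, Set.mem_image, Finset.mem_coe,
        Finset.mem_filter, Finset.mem_univ, true_and, wx_cyc L hF ω hω, pow_zero]
      constructor
      · rintro ⟨y, hy, rfl⟩; exact ⟨y, hy, rfl⟩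
      · rintro ⟨y, hy, rfl⟩; exact ⟨y, hy, rfl⟩
    unfold psiSum
    rw [this, finsum_mem_coe_finset, Finset.sum_image]
    · simp [hψ]
    · intro x _ y _ h
      exact congrArg Prod.fst h
  have hq1 : 1 < q := by rw [← hK]; exact Fintype.one_lt_card
  set G : ℂ := q * (-1) ^ ((q + 1) / 2) with hGdef
  have hKc : ((Finset.univ.erase (0 : K)).card : ℂ) = q - 1 := by
    rw [Finset.card_erase_of_mem (Finset.mem_univ _), Finset.card_univ, hK, Nat.cast_sub hq1.le]
    simp
  have hχx : ∀ x ∈ Finset.univ.erase (0 : K), algebraMap K L x ≠ 0 ∧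
      quadraticChar L (algebraMap K L x) = 1 := by
    intro x hx
    have hx0 := Finset.ne_of_mem_erase hx
    exact ⟨by simpa using hx0, wx_char_K q hodd K L hF hK hL x hx0⟩
  have he : ∀ e : ℕ, ((-1 : ℤ) ^ e = 1 ∨ (-1 : ℤ) ^ e = -1) := fun e => neg_one_pow_eq_or ℤ e
  -- the inner sums
  have inb : ∀ (a : L) (ha : a ≠ 0) (e : ℕ) (S : Finset ℕ),
      ∑ i ∈ S, ∑ x ∈ Finset.univ.erase (0 : K),
        ∑ y ∈ Finset.univ.filter (fun y : L => quadraticChar L y = (-1) ^ e),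
          psiL p L (a * (algebraMap K L x * y) + 0 * (algebraMap K L x * y⁻¹ * ω ^ i)) =
      S.card * ((q - 1) * ((-1 + (-1) ^ e * quadraticChar L a * G) / 2)) := by
    intro a ha e S
    rw [Finset.sum_congr rfl (g := fun _ => ((q : ℂ) - 1) *
      ((-1 + (-1) ^ e * quadraticChar L a * G) / 2)), Finset.sum_const, nsmul_eq_mul]
    intro i _
    rw [Finset.sum_congr rfl (g := fun _ =>
      ((-1 + (-1) ^ e * quadraticChar L a * G) / 2)), Finset.sum_const, nsmul_eq_mul, hKc]
    intro x hx
    have h := wx_period L ψ hψ1 G hG (a * algebraMap K L x) (mul_ne_zero ha (hχx x hx).1)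
      ((-1) ^ e) (he e)
    rw [map_mul, (hχx x hx).2, mul_one] at h
    push_cast at h
    rw [← h]
    refine Finset.sum_congr rfl fun y _ => ?_
    rw [hψ]; congr 1; ring
  have ina : ∀ (b : L) (hb : b ≠ 0) (e : ℕ) (S : Finset ℕ),
      ∑ i ∈ S, ∑ x ∈ Finset.univ.erase (0 : K),
        ∑ y ∈ Finset.univ.filter (fun y : L => quadraticChar L y = (-1) ^ e),
          psiL p L (0 * (algebraMap K L x * y) + b * (algebraMap K L x * y⁻¹ * ω ^ i)) =
      ∑ i ∈ S, ((q - 1) * ((-1 + (-1) ^ e * (quadraticChar L b * (-1) ^ i) * G) / 2)) := by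
    intro b hb e S
    refine Finset.sum_congr rfl fun i _ => ?_
    rw [Finset.sum_congr rfl (g := fun _ =>
      ((-1 + (-1) ^ e * (quadraticChar L b * (-1) ^ i) * G) / 2)), Finset.sum_const,
      nsmul_eq_mul, hKc]
    intro x hx
    have h := wx_period L ψ hψ1 G hG (b * algebraMap K L x * ω ^ i)
      (mul_ne_zero (mul_ne_zero hb (hχx x hx).1) (pow_ne_zero i hω0)) ((-1) ^ e) (he e)
    rw [map_mul, map_mul, map_pow, hχω, (hχx x hx).2, mul_one] at h
    push_cast at h
    rw [← h]
    have hinv : ∀ y : L, quadraticChar L y⁻¹ = quadraticChar L y := by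
      intro y
      by_cases hy : y = 0
      · simp [hy]
      · have e1 : quadraticChar L y⁻¹ * quadraticChar L y = 1 := by
          rw [← map_mul, inv_mul_cancel₀ hy, map_one]
        have e2 := quadraticChar_sq_one hy
        linear_combination (quadraticChar L y) * e1 - quadraticChar L y⁻¹ * e2
    refine Finset.sum_nbij' (fun y => y⁻¹) (fun y => y⁻¹) ?_ ?_ ?_ ?_ ?_
    · intro y hy
      rw [Finset.mem_filter] at hy ⊢
      exact ⟨Finset.mem_univ _, by rw [hinv]; exact hy.2⟩
    · intro y hy
      rw [Finset.mem_filter] at hy ⊢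
      exact ⟨Finset.mem_univ _, by rw [hinv]; exact hy.2⟩
    · intro y _; exact inv_inv y
    · intro y _; exact inv_inv y
    · intro y _
      rw [hψ]; congr 1; ring
  have hdich : ∀ a : L, a ≠ 0 → quadraticChar L a = 1 ∨ quadraticChar L a = -1 :=
    fun a ha => quadraticChar_dichotomy ha
  have hGτ : G = q * (-1) ^ τ := by
    rw [hGdef, hτ]
    obtain ⟨m, hm⟩ := hodd
    have e : (q + 1) / 2 = m + 1 := by omega
    rw [e]
    split_ifs with h
    · have : Even (m + 1) := by rw [Nat.even_iff]; omega
      rw [this.neg_one_pow, pow_zero]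
    · have : Odd (m + 1) := by rw [Nat.odd_iff]; omega
      rw [this.neg_one_pow, pow_one]
  rw [Set.ncard_coe_finset] at hcardA hcardB
  obtain ⟨m, hm⟩ := hodd
  have hA' : A.card = m + 2 := by omega
  have hB' : B.card = m := by omega
  have hqm : (q : ℂ) = 2 * m + 1 := by rw [hm]; push_cast; ring
  rintro a b hab
  have hA2 := hAd (fun z => psiL p L (a * z.1 + b * z.2))
  have hB2 := hBd (fun z => psiL p L (a * z.1 + b * z.2))
  change 2 * psiSum p L a b D₂ = _ at hA2
  change 2 * psiSum p L a b D₃ = _ at hB2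
  rw [hunion, hD1s a b]
  rcases hab with ⟨rfl, hb⟩ | ⟨ha, rfl⟩
  · refine ⟨fun h => absurd h.1 hb, fun _ => ?_⟩
    rw [ina b hb 0 A] at hA2
    rw [ina b hb 1 B] at hB2
    have hpm : ∀ S : Finset ℕ, ∑ i ∈ S, (-1 : ℂ) ^ i =
        (((S : Set ℕ) ∩ {i | Even i}).ncard : ℂ) - (((S : Set ℕ) ∩ {i | Odd i}).ncard : ℂ) := by
      intro S
      have s1 : ((S : Set ℕ) ∩ {i | Even i}) = ↑(S.filter (fun i => Even i)) := by
        ext i; simp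
      have s2 : ((S : Set ℕ) ∩ {i | Odd i}) = ↑(S.filter (fun i => ¬ Even i)) := by
        ext i; simp
      rw [s1, s2, Set.ncard_coe_finset, Set.ncard_coe_finset,
        ← Finset.sum_filter_add_sum_filter_not S (fun i => Even i),
        Finset.sum_congr (s₁ := S.filter (fun i => Even i)) rfl (g := fun _ => (1 : ℂ)),
        Finset.sum_congr (s₁ := S.filter (fun i => ¬ Even i)) rfl (g := fun _ => (-1 : ℂ))]
      · simp; ring
      · intro i hi
        exact (Nat.not_even_iff_odd.1 (Finset.mem_filter.1 hi).2).neg_one_pow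
      · intro i hi
        exact (Finset.mem_filter.1 hi).2.neg_one_pow
    have hlin : ∀ (S : Finset ℕ) (e : ℕ),
        ∑ i ∈ S, (((q : ℂ) - 1) * ((-1 + (-1) ^ e * (quadraticChar L b * (-1) ^ i) * G) / 2)) =
        (q - 1) / 2 * (-(S.card : ℂ) + (-1) ^ e * quadraticChar L b * G * ∑ i ∈ S, (-1 : ℂ) ^ i) := by
      intro S e
      rw [Finset.mul_sum, Finset.card_eq_sum_ones]
      push_cast
      rw [← Finset.sum_neg_distrib, ← Finset.sum_add_distrib, Finset.mul_sum]
      refine Finset.sum_congr rfl fun i _ => ?_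
      ring
    rw [hlin, hpm, hA'] at hA2
    rw [hlin, hpm, hB'] at hB2
    have hparC : (((A : Set ℕ) ∩ {i | Even i}).ncard : ℂ) + (((B : Set ℕ) ∩ {i | Odd i}).ncard : ℂ) =
      (((A : Set ℕ) ∩ {i | Odd i}).ncard : ℂ) + (((B : Set ℕ) ∩ {i | Even i}).ncard : ℂ) := by
      exact_mod_cast hpar
    have hcard0 : ∑ y ∈ Finset.univ.filter (fun y : L => quadraticChar L y = 1), ψ (0 * y) =
        ((q : ℂ) ^ 2 - 1) / 2 := by
      have key : ∀ y : L, (if quadraticChar L y = 1 then (1 : ℂ) else 0) =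
          1 / 2 + (1 / 2) * (quadraticChar L y : ℂ) - if y = 0 then 1 / 2 else 0 := by
        intro y
        by_cases hy : y = 0
        · simp [hy]
        · rcases hdich y hy with h | h <;> rw [h] <;> simp [hy] <;> norm_num
      have hχs : ∑ y : L, (quadraticChar L y : ℂ) = 0 := by
        exact_mod_cast quadraticChar_sum_zero hF
      simp only [zero_mul, AddChar.map_zero_eq_one]
      rw [Finset.sum_filter]
      simp_rw [key]
      rw [Finset.sum_sub_distrib, Finset.sum_add_distrib, ← Finset.mul_sum, hχs]
      simp [hL]
      ring
    rw [hcard0]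
    push_cast at hA2 hB2
    rw [hqm] at *
    linear_combination hA2 / 2 + hB2 / 2 + (2 * m) / 4 * (quadraticChar L b : ℂ) * G * hparC
  · have h1 := wx_period L ψ hψ1 G hG a ha 1 (Or.inl rfl)
    rw [h1]
    rw [inb a ha 0 A, hA'] at hA2
    rw [inb a ha 1 B, hB'] at hB2
    push_cast at hA2 hB2
    have hsq : ((-1 : ℂ) ^ τ) ^ 2 = 1 := by
      rw [← pow_mul, mul_comm, pow_mul]; simp
    rw [wx_cyc L hF ω hω]
    constructor
    · rintro ⟨-, h⟩
      have hρ : (quadraticChar L a : ℂ) * G = -q := by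
        rw [h, hGτ]; push_cast
        linear_combination (-(q : ℂ)) * hsq
      rw [hqm] at *
      linear_combination hA2 / 2 + hB2 / 2 + (1 / 2 + (m + 2) * (2 * m) / 4 - m * (2 * m) / 4) * hρ
    · intro h
      have h' : quadraticChar L a = (-1) ^ τ := by
        have h2 : ¬ quadraticChar L a = (-1) ^ (τ + 1) := fun h3 => h ⟨rfl, h3⟩
        rw [pow_succ] at h2
        rcases hdich a ha with h3 | h3 <;> rcases he τ with h4 | h4 <;>
          rw [h3, h4] at h2 <;> rw [h3, h4] <;> norm_num at h2
      have hρ : (quadraticChar L a : ℂ) * G = q := by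
        rw [h', hGτ]; push_cast
        linear_combination (q : ℂ) * hsq
      rw [hqm] at *
      linear_combination hA2 / 2 + hB2 / 2 + (1 / 2 + (m + 2) * (2 * m) / 4 - m * (2 * m) / 4) * hρ

end
end

section
/- Let q be a power of an odd prime p, ω a primitive element of F_{q²}, ψ the canonical additive character of F_{q²} (ψ(x) = ζ_p^{Tr_{q²/p}(x)}), and A, B arbitrary subsets of {0,1,...,2q+1}. For a, b ∈ F_{q²} with a ≠ 0 and b ≠ 0, define V_2 = (1/2) Σ_{i∈A} Σ_{y∈C_0^{(2,q²)}} Σ_{x∈F_q^*} ψ(axy)ψ(bxy^{−1}ω^i) and V_3 = (1/2) Σ_{i∈B} Σ_{y∈C_1^{(2,q²)}} Σ_{x∈F_q^*} ψ(axy)ψ(bxy^{−1}ω^i). Let χ_{2(q+1)} be a multiplicative character of F_{q²} of order 2(q+1) and ρ = χ_{2(q+1)}^{q+1} the quadratic character. Then V_2 + V_3 = (1/(4(q+1))) Σ_{u=0,1} Σ_{h=0}^{2q+1} G_{q²}(χ_{2(q+1)}^{−h}ρ^u) G_{q²}(χ_{2(q+1)}^{−h}) χ_{2(q+1)}^h(ab)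 ρ^u(a) ( Σ_{i∈A} χ_{2(q+1)}^h(ω^i) + Σ_{i∈B} χ_{2(q+1)}^h(ω^i) ρ^u(ω) ). -/
noncomputable section

lemma wx_geom (N : ℕ) (z : ℂ) (hz : z ^ N = 1) :
    ∑ h ∈ Finset.range N, z ^ h = if z = 1 then (N : ℂ) else 0 := by
  split_ifs with h
  · simp [h]
  · rw [geom_sum_eq h, hz]; simp

open scoped Classical in
lemma wx_gauss_s17 {L : Type} [Field L] [Fintype L] (χ : MulChar L ℂ) (ψ : AddChar L ℂ) :
    gaussSum χ ψ = ∑ z : Lˣ, χ z * ψ z := by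
  classical
  unfold gaussSum
  rw [← Fintype.sum_subset (s := Finset.univ.filter (fun x : L => x ≠ 0))]
  · symm
    refine Finset.sum_bij (fun (z : Lˣ) _ => (z : L)) ?_ ?_ ?_ ?_
    · intro z _; simp
    · intro z _ w _ h; exact Units.ext h
    · intro y hy; simp at hy; exact ⟨Units.mk0 y hy, by simp, by simp⟩
    · intro z _; rfl
  · intro x hx
    simp only [Finset.mem_filter, Finset.mem_univ, true_and]
    rintro rfl
    simp [MulChar.map_zero] at hx

open scoped Classical in
lemma wx_finsum {L : Type} [Field L] [Fintype L] (S : Set L) (hS : ∀ x ∈ S, x ≠ 0) (f : L → ℂ) :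
    ∑ᶠ y ∈ S, f y = ∑ y : Lˣ, if (y : L) ∈ S then f y else 0 := by
  classical
  rw [← Finset.sum_filter]
  rw [finsum_mem_eq_finite_toFinset_sum _ (Set.toFinite S)]
  symm
  refine Finset.sum_bij (fun (z : Lˣ) _ => (z : L)) ?_ ?_ ?_ ?_
  · intro z hz; simpa using hz
  · intro z _ w _ h; exact Units.ext h
  · intro y hy; simp at hy; exact ⟨Units.mk0 y (hS y hy), by simpa using hy, by simp⟩
  · intro z _; rfl

lemma wx_mem_range {K L : Type} [Field K] [Fintype K] [Field L] [Fintype L] [Algebra K L]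
    (t : L) (ht : t ^ Fintype.card K = t) : ∃ x : K, algebraMap K L x = t := by
  classical
  by_contra hne
  push Not at hne
  have h1 : 1 < Fintype.card K := Fintype.one_lt_card
  have hP : (Polynomial.X ^ Fintype.card K - Polynomial.X : Polynomial L) ≠ 0 :=
    FiniteField.X_pow_card_sub_X_ne_zero L h1
  have hdeg := FiniteField.X_pow_card_sub_X_natDegree_eq L h1
  let S : Finset L := insert t (Finset.univ.image (algebraMap K L))
  have hS : S.card = Fintype.card K + 1 := by
    rw [Finset.card_insert_of_notMem (by simpa using hne),
      Finset.card_image_of_injective _ (algebraMap K L).injective, Finset.card_univ]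
  have hle : S.card ≤ (Polynomial.X ^ Fintype.card K - Polynomial.X : Polynomial L).natDegree := by
    apply Polynomial.card_le_degree_of_subset_roots
    intro x hx
    have hx' : x ∈ S := by simpa using hx
    rw [Polynomial.mem_roots hP]
    simp only [Polynomial.IsRoot.def, Polynomial.eval_sub, Polynomial.eval_pow, Polynomial.eval_X]
    rw [sub_eq_zero]
    rcases Finset.mem_insert.1 hx' with rfl | hx'
    · exact ht
    · obtain ⟨k, _, rfl⟩ := Finset.mem_image.1 hx'
      rw [← map_pow, FiniteField.pow_card]
  omega

open scoped Classical in
lemma wx_sq {K L : Type} [Field K] [Fintype K] [Field L] [Fintype L] [Algebra K L]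
    (h2 : (2 : K) ≠ 0) (P : Lˣ → Prop)
    (hP : ∀ s : Lˣ, P s ↔ ∃ x : Kˣ, algebraMap K L x ^ 2 = s) (f : L → ℂ) :
    ∑ x : Kˣ, f (algebraMap K L x ^ 2) = 2 * ∑ s : Lˣ, if P s then f s else 0 := by
  classical
  have e1 : ∀ x : Kˣ, f (algebraMap K L x ^ 2) =
      ∑ s : Lˣ, if algebraMap K L x ^ 2 = s then f s else 0 := by
    intro x
    rw [Finset.sum_eq_single (Units.map (algebraMap K L : K →* L) x ^ 2)]
    · simp
    · intro s _ hs
      rw [if_neg]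
      intro h; apply hs; ext; simp [h]
    · simp
  simp_rw [e1]
  rw [Finset.sum_comm, Finset.mul_sum]
  refine Finset.sum_congr rfl fun s _ => ?_
  rw [← Finset.sum_filter, Finset.sum_const]
  split_ifs with h
  · obtain ⟨x, hx⟩ := (hP s).1 h
    have : (Finset.univ.filter fun y : Kˣ => algebraMap K L y ^ 2 = s) = {x, -x} := by
      ext y
      simp only [Finset.mem_filter, Finset.mem_univ, true_and, Finset.mem_insert,
        Finset.mem_singleton]
      rw [← hx, sq_eq_sq_iff_eq_or_eq_neg, ← map_neg, (algebraMap K L).injective.eq_iff,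
        (algebraMap K L).injective.eq_iff, Units.ext_iff, Units.ext_iff]
      simp
    rw [this, Finset.card_pair]
    · simp
    · intro h
      have h' : (x : K) = -x := by simpa using congrArg Units.val h
      have : (2 : K) * x = 0 := by linear_combination h'
      simp [h2] at this
  · have : (Finset.univ.filter fun y : Kˣ => algebraMap K L y ^ 2 = s) = ∅ := by
      ext y
      simp only [Finset.mem_filter, Finset.mem_univ, true_and, Finset.notMem_empty, iff_false]
      intro hy; exact h ((hP s).2 ⟨y, hy⟩)
    rw [this]; simp

lemma wx_core {K L : Type} [Field K] [Fintype K] [Field L] [Fintype L] [Algebra K L]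
    (q : ℕ) (h2 : (2 : K) ≠ 0) (χ ρ : MulChar L ℂ) (ψ : AddChar L ℂ)
    (hχ : χ ^ (2 * q + 2) = 1) (hρ : ∀ y : Lˣ, ρ y ^ 2 = 1) 
    (hρK : ∀ x : Kˣ, ρ (algebraMap K L x) = 1)
    (hker : ∀ s : Lˣ, χ s = 1 ↔ ∃ x : Kˣ, algebraMap K L x ^ 2 = s)
    (S : Set L) (hS0 : ∀ x ∈ S, x ≠ 0) (e : ℂ) (he : e ^ 2 = 1)
    (hS : ∀ y : Lˣ, (y : L) ∈ S ↔ ρ y * e = 1)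
    (a b c : Lˣ) :
    (1 / 2 : ℂ) * ∑ᶠ y ∈ S, ∑ᶠ x ∈ {x : K | x ≠ 0},
      ψ (a * (algebraMap K L x * y)) * ψ (b * (algebraMap K L x * y⁻¹ * c)) = 
    (1 / (4 * ((q : ℂ) + 1))) *
      ∑ u ∈ Finset.range 2, ∑ h ∈ Finset.range (2 * q + 2),
        gaussSum (χ ^ (-(h : ℤ)) * ρ ^ u) ψ * gaussSum (χ ^ (-(h : ℤ))) ψ *
          (χ ^ h) (a * b) * (ρ ^ u) a * ((χ ^ h) c * e ^ u) := by
  classical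
  -- common value
  trans ∑ y : Lˣ, if (y : L) ∈ S then ∑ s : Lˣ, (if χ s = 1 then
      ψ (a * y) * ψ (b * c * s * y⁻¹) else 0) else 0
  · rw [wx_finsum S hS0]
    simp_rw [wx_finsum {x : K | x ≠ 0} (fun x hx => hx)]
    simp only [Set.mem_ofPred_eq, ne_eq, Units.ne_zero, not_false_eq_true, if_true]
    have step : ∀ x : Kˣ, ∑ y : Lˣ, (if (y : L) ∈ S then
        ψ (a * (algebraMap K L x * y)) * ψ (b * (algebraMap K L x * (y : L)⁻¹ * c)) else 0) =
        ∑ y : Lˣ, (if (y : L) ∈ S then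
          ψ (a * y) * ψ (b * c * algebraMap K L x ^ 2 * (y : L)⁻¹) else 0) := by
      intro x
      refine Fintype.sum_equiv (Equiv.mulLeft (Units.map (algebraMap K L : K →* L) x)) _ _ ?_
      intro y
      have hx : algebraMap K L x ≠ 0 := by simp
      have hy : (y : L) ≠ 0 := y.ne_zero
      have hm : ((Units.map (algebraMap K L : K →* L) x * y : Lˣ) : L) ∈ S ↔ (y : L) ∈ S := by
        rw [hS, hS]; simp [hρK]
      simp only [Equiv.coe_mulLeft, hm]
      congr 3
      simp
      field_simp
    calc _ = (1 / 2 : ℂ) * ∑ x : Kˣ, ∑ y : Lˣ, (if (y : L) ∈ S then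
        ψ (a * (algebraMap K L x * y)) * ψ (b * (algebraMap K L x * (y : L)⁻¹ * c)) else 0) := by
          rw [Finset.sum_comm]
          congr 1
          refine Finset.sum_congr rfl fun y _ => ?_
          split_ifs <;> simp
      _ = (1 / 2 : ℂ) * ∑ y : Lˣ, ∑ x : Kˣ, (if (y : L) ∈ S then
          ψ (a * y) * ψ (b * c * algebraMap K L x ^ 2 * (y : L)⁻¹) else 0) := by
          rw [Finset.sum_congr rfl fun x _ => step x, Finset.sum_comm]
      _ = _ := by
          rw [Finset.mul_sum]
          refine Finset.sum_congr rfl fun y _ => ?_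
          split_ifs with h
          · rw [wx_sq h2 (fun s : Lˣ => χ s = 1) hker
              (fun t => ψ (a * y) * ψ (b * c * t * (y : L)⁻¹))]
            simp
          · simp
  · have term : ∀ u h : ℕ, gaussSum (χ ^ (-(h : ℤ)) * ρ ^ u) ψ * gaussSum (χ ^ (-(h : ℤ))) ψ *
          (χ ^ h) (a * b) * (ρ ^ u) a * ((χ ^ h) c * e ^ u) =
        ∑ y : Lˣ, ∑ s : Lˣ, ψ (a * y) * ψ (b * c * s * (y : L)⁻¹) * ((ρ y * e) ^ u * (χ s)⁻¹ ^ h) := by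
      intro u h
      rw [wx_gauss_s17, wx_gauss_s17, Finset.sum_mul_sum, Finset.sum_mul, Finset.sum_mul, Finset.sum_mul]
      symm
      refine Fintype.sum_equiv (Equiv.mulLeft a) _ _ ?_
      intro y
      rw [Finset.sum_mul, Finset.sum_mul, Finset.sum_mul]
      refine Fintype.sum_equiv (Equiv.mulLeft (b * c * y⁻¹)) _ _ ?_
      intro s
      have nz : ∀ v : Lˣ, χ v ≠ 0 := fun v => (v.isUnit.map χ).ne_zero
      have n1 := nz a
      have n2 := nz b
      have n3 := nz c
      have n4 := nz y
      have n5 := nz s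
      have n6 : χ ((y : L)⁻¹) = (χ y)⁻¹ := by
        apply eq_inv_of_mul_eq_one_left
        rw [← map_mul, inv_mul_cancel₀ y.ne_zero, map_one]
      have hr : (ρ a) ^ u * (ρ a) ^ u = 1 := by
        rw [← mul_pow, ← sq, hρ, one_pow]
      have harg : (b * c * s * (y : L)⁻¹ : L) = b * c * (y : L)⁻¹ * s := by ring
      have hpχ : ∀ v : Lˣ, (χ ^ h) v = χ v ^ h := fun v => MulChar.pow_apply_coe χ h v
      have hpρ : ∀ v : Lˣ, (ρ ^ u) v = ρ v ^ u := fun v => MulChar.pow_apply_coe ρ u v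
      have hpi : ∀ v : Lˣ, (χ ^ (-(h : ℤ))) v = (χ v ^ h)⁻¹ := by
        intro v
        rw [zpow_neg, zpow_natCast, MulChar.inv_apply_eq_inv', hpχ]
      simp only [Equiv.coe_mulLeft, MulChar.mul_apply, hpi, hpρ, hpχ, ← Units.val_mul]
      simp only [Units.val_mul, map_mul, Units.val_inv_eq_inv_val, n6, harg]
      field_simp
      ring_nf
      have hr' : (ρ a) ^ (u * 2) = 1 := by rw [mul_comm, pow_mul, hρ, one_pow]
      simp only [hr', mul_one, inv_pow]
      field_simp
    simp_rw [term]
    have hz : ∀ s : Lˣ, (χ s)⁻¹ ^ (2 * q + 2) = 1 := by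
      intro s
      rw [inv_pow, ← MulChar.pow_apply_coe, hχ, MulChar.one_apply_coe, inv_one]
    have hw : ∀ y : Lˣ, (ρ y * e) ^ 2 = 1 := by
      intro y; rw [mul_pow, hρ, he, one_mul]
    have swap : ∑ u ∈ Finset.range 2, ∑ h ∈ Finset.range (2 * q + 2), ∑ y : Lˣ, ∑ s : Lˣ,
        ψ (a * y) * ψ (b * c * s * (y : L)⁻¹) * ((ρ y * e) ^ u * (χ s)⁻¹ ^ h) =
        ∑ y : Lˣ, ∑ s : Lˣ, ψ (a * y) * ψ (b * c * s * (y : L)⁻¹) *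
          ((∑ u ∈ Finset.range 2, (ρ y * e) ^ u) *
            ∑ h ∈ Finset.range (2 * q + 2), (χ s)⁻¹ ^ h) := by
      simp_rw [Finset.sum_mul_sum, Finset.mul_sum]
      rw [Finset.sum_congr rfl fun u _ => Finset.sum_comm, Finset.sum_comm]
      refine Finset.sum_congr rfl fun y _ => ?_
      rw [Finset.sum_congr rfl fun u _ => Finset.sum_comm, Finset.sum_comm]
    rw [swap]
    simp_rw [wx_geom _ _ (hz _), wx_geom _ _ (hw _)]
    rw [Finset.mul_sum]
    refine Finset.sum_congr rfl fun y _ => ?_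
    have hq : (q : ℂ) + 1 ≠ 0 := by exact_mod_cast Nat.succ_ne_zero q
    by_cases hy : (y : L) ∈ S
    · rw [if_pos hy, Finset.mul_sum]
      refine Finset.sum_congr rfl fun s _ => ?_
      rw [if_pos ((hS y).1 hy)]
      by_cases hs : χ s = 1
      · simp [hs]; field_simp; ring
      · simp [hs]
    · have : ¬ ρ y * e = 1 := fun h => hy ((hS y).2 h)
      simp [hy, this]

/-- Lemma 4.4: the Gauss-sum expansion of `V₂ + V₃`. -/
theorem wilson_xiang_V2_V3
    (p s q : ℕ) (hp : p.Prime) (hpodd : p ≠ 2) (hs : 0 < s) (hq : q = p ^ s)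
    (K L : Type) [Field K] [Fintype K] [Field L] [Fintype L] [Algebra K L] [CharP L p]
    (hK : Fintype.card K = q) (hL : Fintype.card L = q ^ 2)
    (ω : L) (hω : IsPrim L ω)
    (ψ : AddChar L ℂ) (hψ : ∀ x : L, ψ x = psiL p L x)
    (A B : Finset ℕ) (hA : ∀ i ∈ A, i < 2 * q + 2) (hB : ∀ i ∈ B, i < 2 * q + 2)
    (a b : L) (ha : a ≠ 0) (hb : b ≠ 0)
    (χ : MulChar L ℂ) (hχ : orderOf χ = 2 * (q + 1))
    (ρ : MulChar L ℂ) (hρ : ρ = χ ^ (q + 1))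
    (V₂ V₃ : ℂ)
    (hV₂ : V₂ = (1 / 2 : ℂ) * ∑ i ∈ A, ∑ᶠ y ∈ cyc L ω 2 0, ∑ᶠ x ∈ {x : K | x ≠ 0},
      ψ (a * (algebraMap K L x * y)) * ψ (b * (algebraMap K L x * y⁻¹ * ω ^ i)))
    (hV₃ : V₃ = (1 / 2 : ℂ) * ∑ i ∈ B, ∑ᶠ y ∈ cyc L ω 2 1, ∑ᶠ x ∈ {x : K | x ≠ 0},
      ψ (a * (algebraMap K L x * y)) * ψ (b * (algebraMap K L x * y⁻¹ * ω ^ i))) :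
    V₂ + V₃ = (1 / (4 * ((q : ℂ) + 1))) *
      ∑ u ∈ Finset.range 2, ∑ h ∈ Finset.range (2 * q + 2),
        gaussSum (χ ^ (-(h : ℤ)) * ρ ^ u) ψ * gaussSum (χ ^ (-(h : ℤ))) ψ *
          (χ ^ h) (a * b) * (ρ ^ u) a *
          ((∑ i ∈ A, (χ ^ h) (ω ^ i)) + (∑ i ∈ B, (χ ^ h) (ω ^ i)) * (ρ ^ u) ω) := by
  classical
  have hfp : Fact p.Prime := ⟨hp⟩
  have hp3 : 3 ≤ p := by
    have := hp.two_le
    omega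
  have hq3 : 3 ≤ q := by
    rw [hq]; exact le_trans hp3 (Nat.le_self_pow hs.ne' p)
  have hqodd : Odd q := by
    rw [hq]; exact (hp.odd_of_ne_two hpodd).pow
  have h2L : (2 : L) ≠ 0 := by
    intro h
    have h' : ((2 : ℕ) : L) = 0 := by exact_mod_cast h
    have := (CharP.cast_eq_zero_iff L p 2).1 h'
    have := Nat.le_of_dvd (by norm_num) this
    omega
  have h2 : (2 : K) ≠ 0 := by
    intro h
    apply h2L
    have := congrArg (algebraMap K L) h
    rwa [map_ofNat, map_zero] at this
  have hω0 : ω ≠ 0 := by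
    rintro rfl
    obtain ⟨n, hn⟩ := hω (-1) (by simp)
    rcases Nat.eq_zero_or_pos n with rfl | hpos
    · apply h2L; simp at hn; linear_combination -hn
    · rw [zero_pow hpos.ne'] at hn; simp at hn
  obtain ⟨w, rfl⟩ : ∃ w : Lˣ, ω = w := ⟨Units.mk0 ω hω0, rfl⟩
  have hgen : ∀ v : Lˣ, ∃ n : ℕ, v = w ^ n := by
    intro v
    obtain ⟨n, hn⟩ := hω v v.ne_zero
    exact ⟨n, Units.ext (by simpa using hn)⟩
  have hord : orderOf w = q ^ 2 - 1 := by
    rw [orderOf_eq_card_of_forall_mem_powers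
      (fun v => by obtain ⟨n, hn⟩ := hgen v; exact ⟨n, hn.symm⟩),
      Nat.card_eq_fintype_card, Fintype.card_units, hL]
  have hfac : q ^ 2 - 1 = (q + 1) * (q - 1) := by
    rw [← Nat.sq_sub_sq, one_pow]
  have hχw : ∀ n : ℕ, χ w ^ n = 1 ↔ 2 * (q + 1) ∣ n := by
    intro n
    rw [← hχ, orderOf_dvd_iff_pow_eq_one, ← MulChar.pow_apply_coe]
    constructor
    · intro h
      ext v
      obtain ⟨m, rfl⟩ := hgen v
      rw [Units.val_pow_eq_pow_val, map_pow, h, map_pow]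
      simp
    · intro h; rw [h, MulChar.one_apply_coe]
  have hpow : ∀ n : ℕ, χ ((w ^ n : Lˣ) : L) = χ w ^ n := by
    intro n; rw [Units.val_pow_eq_pow_val, map_pow]
  have hKw : ∀ x : Kˣ, ∃ m : ℕ, algebraMap K L x = ((w ^ ((q + 1) * m) : Lˣ) : L) := by
    intro x
    obtain ⟨n, hn⟩ := hgen (Units.map (algebraMap K L : K →* L) x)
    have h1 : w ^ (n * (q - 1)) = 1 := by
      rw [pow_mul, ← hn, ← map_pow, ← hK, ← Fintype.card_units, pow_card_eq_one, map_one]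
    rw [← orderOf_dvd_iff_pow_eq_one, hord, hfac] at h1
    obtain ⟨m, rfl⟩ := Nat.dvd_of_mul_dvd_mul_right (by omega) h1
    exact ⟨m, by rw [← hn]; rfl⟩
  have hker : ∀ t : Lˣ, χ t = 1 ↔ ∃ x : Kˣ, algebraMap K L x ^ 2 = t := by
    intro t
    constructor
    · intro h
      obtain ⟨n, rfl⟩ := hgen t
      rw [hpow, hχw] at h
      obtain ⟨m, rfl⟩ := h
      have ht : ((w ^ ((q + 1) * m) : Lˣ) : L) ^ Fintype.card K = ((w ^ ((q + 1) * m) : Lˣ) : L) := by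
        rw [hK, ← Units.val_pow_eq_pow_val]
        congr 1
        have : (w ^ ((q + 1) * m)) ^ (q - 1) = 1 := by
          rw [← pow_mul, show (q + 1) * m * (q - 1) = (q + 1) * (q - 1) * m by ring, ← hfac,
            ← hord, pow_mul, pow_orderOf_eq_one, one_pow]
        conv_lhs => rw [show q = (q - 1) + 1 by omega]
        rw [pow_succ]
        rw [show q - 1 + 1 + 1 = q + 1 by omega, this, one_mul]
      obtain ⟨x, hx⟩ := wx_mem_range (K := K) _ ht
      have hx0 : x ≠ 0 := by
        rintro rfl
        rw [map_zero] at hx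
        exact (Units.ne_zero _) hx.symm
      refine ⟨Units.mk0 x hx0, ?_⟩
      rw [Units.val_mk0, hx, ← Units.val_pow_eq_pow_val, ← pow_mul]
      congr 2
      ring
    · rintro ⟨x, hx⟩
      obtain ⟨m, hm⟩ := hKw x
      rw [← hx, hm, map_pow, hpow, ← pow_mul, hχw]
      exact ⟨m, by ring⟩
  have hρw : ρ w = -1 := by
    have hsq : (ρ w) ^ 2 = 1 := by
      rw [hρ, MulChar.pow_apply_coe, ← pow_mul, hχw, mul_comm]
    rcases (mul_self_eq_one_iff.1 ((sq (ρ w)).symm.trans hsq)) with h | h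
    · exfalso
      rw [hρ, MulChar.pow_apply_coe, hχw] at h
      have := Nat.le_of_dvd (by omega) h
      omega
    · exact h
  have hρn : ∀ n : ℕ, ρ ((w ^ n : Lˣ) : L) = (-1) ^ n := by
    intro n; rw [Units.val_pow_eq_pow_val, map_pow, hρw]
  have hρsq : ∀ y : Lˣ, ρ y ^ 2 = 1 := by
    intro y
    obtain ⟨n, rfl⟩ := hgen y
    rw [hρn, ← pow_mul, mul_comm, pow_mul]; simp
  have hρK : ∀ x : Kˣ, ρ (algebraMap K L x) = 1 := by
    intro x
    obtain ⟨m, hm⟩ := hKw x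
    rw [hm, hρn, pow_mul, Even.neg_one_pow (by exact hqodd.add_one), one_pow]
  have hχ1 : χ ^ (2 * q + 2) = 1 := by
    rw [show 2 * q + 2 = orderOf χ by rw [hχ]; ring, pow_orderOf_eq_one]
  have hcyc0 : ∀ j, ∀ x ∈ cyc L (w : L) 2 j, x ≠ 0 := by
    rintro j x ⟨k, rfl⟩
    simp
  have hS : ∀ j, j < 2 → ∀ y : Lˣ, (y : L) ∈ cyc L (w : L) 2 j ↔ ρ y * (-1) ^ j = 1 := by
    intro j hj y
    constructor
    · rintro ⟨k, hk⟩
      rw [hk]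
      simp only [map_mul, map_pow, hρw]
      rw [mul_right_comm, ← mul_pow]
      simp
    · intro h
      obtain ⟨n, rfl⟩ := hgen y
      rw [hρn, ← pow_add] at h
      have hev : Even (n + j) := by
        by_contra hodd
        rw [Odd.neg_one_pow (Nat.not_even_iff_odd.1 hodd)] at h
        norm_num at h
      rw [Nat.even_iff] at hev
      refine ⟨n / 2, ?_⟩
      rw [Units.val_pow_eq_pow_val, ← pow_mul, ← pow_add]
      congr 1
      omega
  have hρu : ∀ u : ℕ, (ρ ^ u) (w : L) = (-1) ^ u := by
    intro u; rw [MulChar.pow_apply_coe, hρw]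
  have core : ∀ j, j < 2 → ∀ i : ℕ, _ := fun j hj i =>
    wx_core q h2 χ ρ ψ hχ1 hρsq hρK hker (cyc L (w : L) 2 j) (hcyc0 j) ((-1) ^ j)
      (by rw [← pow_mul, mul_comm, pow_mul]; simp) (hS j hj)
      (Units.mk0 a ha) (Units.mk0 b hb) (w ^ i)
  simp only [Units.val_mk0, Units.val_pow_eq_pow_val] at core
  rw [hV₂, hV₃, Finset.mul_sum, Finset.mul_sum,
    Finset.sum_congr rfl fun i _ => core 0 (by norm_num) i,
    Finset.sum_congr rfl fun i _ => core 1 (by norm_num) i]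
  rw [← Finset.mul_sum, ← Finset.mul_sum, ← mul_add]
  congr 1
  rw [Finset.sum_comm, Finset.sum_comm (s := B), ← Finset.sum_add_distrib]
  refine Finset.sum_congr rfl fun u _ => ?_
  rw [Finset.sum_comm, Finset.sum_comm (s := B), ← Finset.sum_add_distrib]
  refine Finset.sum_congr rfl fun h _ => ?_
  rw [← Finset.mul_sum, ← Finset.mul_sum, ← mul_add, hρu, ← Finset.sum_mul, ← Finset.sum_mul]
  simp

end
end
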